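/- Let G1 be a K5-minor-free bridgeless chordal graph, let G2 be a K5-minor-free bipartite graph with no induced cycle of length greater than or equal to 6, and let G = G1 #_1 G2 be a 1-sum along a common edge e. Write elements of ℤ^{E(G)} × ℤ as (γ, x, y, α) where γ is the e-coordinate, x ∈ ℤ^{E(G1)∖{e}} and y ∈ ℤ^{E(G2)∖{e}}. Then every element of int(M_G) lies in (2, (2, …, 2), y, 4) + M_G for some y ∈ ℤ^{E(G2)∖{e}} such that (2, y, 4) ∈ int(M_{G2}), where (2, …, 2) denotes the all-2 vector in ℤ^{E(G1)∖{e}} and (2, (2, …, 2), 4) ∈ int(M_{G1}). -/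

import Mathlib

/-!
An element of degree `k` of the cut monoid is the same thing as a map from the vertices to the
`k`-dimensional cube, its coordinates being the Hamming distances along the edges
(`mem_of_repr`, `repr_of_mem`).  The theorem therefore becomes a statement about realising edge
lengths by cube maps.

For the chordal graph, the triangle inequalities, the perimeter bounds and the parity conditions on
edges and triangles suffice (`emb_chordal`): a simplicial vertex of a `K₅`-minor-free graph has at
most three neighbours, and three points of a cube extend to a fourth with prescribed feasible
distances (`cube_four_point`).

For the bipartite graph, the range, parity and four-cycle conditions suffice.  Feasible edge lengths
extend to a metric on all vertices satisfying every triangle, perimeter and parity condition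
(`quad_extend`): on the double cover `V × Bool`, where antipodes should be at distance `K`, the
shortest-walk metric has this property since a violating walk projects to an induced cycle, which has
length four; shrinking that metric as far as possible makes every point lie on a geodesic between any
two antipodes, which gives the perimeter bounds.  Such a metric agrees along the edges with a cube metric
(`emb_bipartite`).  This goes by induction on the number of vertices.  Two realisations glue along a cut of
at most three vertices, because triples are determined by their distances up to an isometry of
the cube (`cube_isometry`); a bisimplicial edge supplies a cut, or a cover of all edges by three
vertices, or a `K₅` minor.

At an interior point all these inequalities are strict, and the parity conditions turn strictness into
a slack of two (`tri_strict`, `quad_strict`).  Hence `x - 2` is feasible in degree `k - 4` on the chordal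
part and `x - 1` in degree `k - 2` on the bipartite part.  In the latter realisation one deletes a
coordinate where `v` and `w` differ and one where they agree, which leaves distance `x - 2` between
`v` and `w` in degree `k - 4`.  The two maps glue along the edge `vw` to an element `m` of the cut monoid,
and `p - m` is `2` on the chordal part and `1` plus two cuts on the bipartite part.  Both are interior
because constant vectors are multiples of the average of all cuts (`const_mem_interior`).
-/

/-! Basic definitions for cut monoids of finite simple graphs. -/

open Classical in
/-- The cut vector of a vertex set `A`, as a function on `Sym2 V`:
value `1` on pairs with exactly one element in `A`, and `0` otherwise. -/
noncomputable def cutVec {V : Type} (A : Set V) : Sym2 V → ℤ :=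
  Sym2.lift ⟨fun v w => if ((v ∈ A) ↔ (w ∈ A)) then 0 else 1,
    fun v w => if_congr iff_comm rfl rfl⟩

variable {V : Type}

/-- The generators `(δ_A, 1)` of the cut monoid of `G`. -/
def cutGens (G : SimpleGraph V) : Set ((G.edgeSet → ℤ) × ℤ) :=
  {p | ∃ A : Set V, p = (fun e => cutVec A e.1, 1)}

/-- The cut monoid `M_G` of a graph `G`. -/
def cutMonoid (G : SimpleGraph V) : AddSubmonoid ((G.edgeSet → ℤ) × ℤ) :=
  AddSubmonoid.closure (cutGens G)

/-- The group `gp(M_G)` generated by the cut monoid. -/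
def cutGroup (G : SimpleGraph V) : AddSubgroup ((G.edgeSet → ℤ) × ℤ) :=
  AddSubgroup.closure (cutGens G)

/-- `M_G` is normal: every `x ∈ gp(M_G)` with `n • x ∈ M_G` for some `n ≥ 1` lies in `M_G`. -/
def CutNormal (G : SimpleGraph V) : Prop :=
  ∀ x ∈ cutGroup G, (∃ n : ℕ, 1 ≤ n ∧ n • x ∈ cutMonoid G) → x ∈ cutMonoid G

/-- `M_G` is seminormal: every `x ∈ gp(M_G)` with `2 • x ∈ M_G` and `3 • x ∈ M_G`
lies in `M_G`. -/
def CutSeminormal (G : SimpleGraph V) : Prop :=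
  ∀ x ∈ cutGroup G, 2 • x ∈ cutMonoid G → 3 • x ∈ cutMonoid G → x ∈ cutMonoid G

/-- Generators of the cone of `M_G`: nonnegative real multiples of the `(δ_A, 1)`. -/
noncomputable def cutConeGens (G : SimpleGraph V) : Set ((G.edgeSet → ℝ) × ℝ) :=
  {q | ∃ (c : ℝ) (A : Set V), 0 ≤ c ∧
    q = c • ((fun e => ((cutVec A e.1 : ℤ) : ℝ), (1 : ℝ)))}

/-- The cone `cone(M_G)`: all finite nonnegative real combinations of the `(δ_A, 1)`. -/
noncomputable def cutCone (G : SimpleGraph V) : Set ((G.edgeSet → ℝ) × ℝ) :=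
  (AddSubmonoid.closure (cutConeGens G) : Set ((G.edgeSet → ℝ) × ℝ))

/-- The canonical map from `ℤ^E × ℤ` to `ℝ^E × ℝ`. -/
noncomputable def toRealCut (G : SimpleGraph V) (p : (G.edgeSet → ℤ) × ℤ) :
    (G.edgeSet → ℝ) × ℝ :=
  (fun e => ((p.1 e : ℤ) : ℝ), ((p.2 : ℤ) : ℝ))

/-- `int(M_G)`: elements of `M_G` mapping into the topological interior of `cone(M_G)`. -/
noncomputable def cutInterior (G : SimpleGraph V) : Set ((G.edgeSet → ℤ) × ℤ) :=
  {p | p ∈ cutMonoid G ∧ toRealCut G p ∈ interior (cutCone G)}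

/-- The set of last coordinates `α ∈ ℕ` realized by elements of `int(M_G)`;
its least element is `m(G)`. -/
noncomputable def cutDegrees (G : SimpleGraph V) : Set ℕ :=
  {α | ∃ x : G.edgeSet → ℤ, ((x, (α : ℤ)) : (G.edgeSet → ℤ) × ℤ) ∈ cutInterior G}

/-- `H` is a minor of `G`: branch sets `B u` are nonempty, pairwise disjoint,
induce connected subgraphs, and edges of `H` are witnessed by edges of `G`. -/
def GraphMinor {W V : Type} (H : SimpleGraph W) (G : SimpleGraph V) : Prop :=
  ∃ B : W → Set V,
    (∀ u, (B u).Nonempty) ∧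
    (∀ u v, u ≠ v → Disjoint (B u) (B v)) ∧
    (∀ u, (G.induce (B u)).Connected) ∧
    (∀ u v, H.Adj u v → ∃ a ∈ B u, ∃ b ∈ B v, G.Adj a b)

/-- `G` is `K₅`-minor-free. -/
def K5Free (G : SimpleGraph V) : Prop :=
  ¬ GraphMinor (⊤ : SimpleGraph (Fin 5)) G

/-- `G` is bipartite: vertices split into two parts so every edge joins the parts. -/
def BipartiteG (G : SimpleGraph V) : Prop :=
  ∃ s : Set V, ∀ ⦃v w⦄, G.Adj v w → ((v ∈ s ∧ w ∉ s) ∨ (w ∈ s ∧ v ∉ s))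

/-- `G` has an induced cycle of length `n` (n ≥ 3): an induced-subgraph copy of the
cycle graph of length `n`. -/
def HasInducedCycleLen (G : SimpleGraph V) (n : ℕ) : Prop :=
  3 ≤ n ∧ Nonempty (SimpleGraph.cycleGraph n ↪g G)

/-- `G` contains a triangle. -/
def HasTriangle (G : SimpleGraph V) : Prop :=
  ∃ a b c, G.Adj a b ∧ G.Adj b c ∧ G.Adj a c

/-- `G` is chordal: every induced cycle is a triangle. -/
def ChordalG (G : SimpleGraph V) : Prop :=
  ∀ n, HasInducedCycleLen G n → n = 3

/-- `G` is bridgeless: every edge lies on some cycle. -/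
def BridgelessG (G : SimpleGraph V) : Prop :=
  ∀ e ∈ G.edgeSet, ∃ (v : V) (c : G.Walk v v), c.IsCycle ∧ e ∈ c.edges

/-- `G` is (isomorphic to) a cycle of length `n`. -/
def IsCycleOfLen (G : SimpleGraph V) (n : ℕ) : Prop :=
  3 ≤ n ∧ Nonempty (G ≃g SimpleGraph.cycleGraph n)

/-- `G` is a cycle. -/
def IsCycleGraph (G : SimpleGraph V) : Prop :=
  ∃ n, IsCycleOfLen G n

/-- `G` is a `0`-sum of `G1` and `G2`: copies of `G1`, `G2` cover `G`,
overlap in exactly one vertex, and every edge comes from `G1` or `G2`. -/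
def IsZeroSumDecomp {V1 V2 : Type} (G : SimpleGraph V) (G1 : SimpleGraph V1)
    (G2 : SimpleGraph V2) : Prop :=
  ∃ (f1 : V1 ↪ V) (f2 : V2 ↪ V),
    Set.range f1 ∪ Set.range f2 = Set.univ ∧
    (∃ v, Set.range f1 ∩ Set.range f2 = {v}) ∧
    (∀ a b, G.Adj a b ↔
      ((∃ x y, f1 x = a ∧ f1 y = b ∧ G1.Adj x y) ∨
       (∃ x y, f2 x = a ∧ f2 y = b ∧ G2.Adj x y)))

/-- `G` is a `1`-sum of `G1` and `G2` along a common edge. -/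
def IsOneSumDecomp {V1 V2 : Type} (G : SimpleGraph V) (G1 : SimpleGraph V1)
    (G2 : SimpleGraph V2) : Prop :=
  ∃ (f1 : V1 ↪ V) (f2 : V2 ↪ V) (v w : V),
    v ≠ w ∧
    Set.range f1 ∪ Set.range f2 = Set.univ ∧
    Set.range f1 ∩ Set.range f2 = {v, w} ∧
    (∃ x y, f1 x = v ∧ f1 y = w ∧ G1.Adj x y) ∧
    (∃ x y, f2 x = v ∧ f2 y = w ∧ G2.Adj x y) ∧
    (∀ a b, G.Adj a b ↔
      ((∃ x y, f1 x = a ∧ f1 y = b ∧ G1.Adj x y) ∨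
       (∃ x y, f2 x = a ∧ f2 y = b ∧ G2.Adj x y)))

/-- Ring graphs: obtained, up to adding isolated vertices, from finitely many
(finite) trees and cycles by iterated `0`-sums and `1`-sums. -/
inductive IsRingGraph : {V : Type} → SimpleGraph V → Prop
  | tree {V : Type} (G : SimpleGraph V) :
      Finite V → G.Connected → G.IsAcyclic → IsRingGraph G
  | cycle {V : Type} (G : SimpleGraph V) : IsCycleGraph G → IsRingGraph G
  | zeroSum {V1 V2 V : Type} {G1 : SimpleGraph V1} {G2 : SimpleGraph V2}
      {G : SimpleGraph V} :
      IsRingGraph G1 → IsRingGraph G2 → IsZeroSumDecomp G G1 G2 → IsRingGraph G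
  | oneSum {V1 V2 V : Type} {G1 : SimpleGraph V1} {G2 : SimpleGraph V2}
      {G : SimpleGraph V} :
      IsRingGraph G1 → IsRingGraph G2 → IsOneSumDecomp G G1 G2 → IsRingGraph G
  | addIsolated {V W : Type} {G : SimpleGraph V} {H : SimpleGraph W} (f : V ↪ W) :
      IsRingGraph G → (∀ a b, H.Adj a b ↔ ∃ x y, f x = a ∧ f y = b ∧ G.Adj x y) →
      IsRingGraph H

/-- An edge of an induced subgraph is an edge of the ambient graph. -/
lemma induce_edge_mem (G : SimpleGraph V) (s : Set V) (e : Sym2 s)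
    (he : e ∈ (G.induce s).edgeSet) : e.map Subtype.val ∈ G.edgeSet := by
  induction e using Sym2.ind with
  | _ a b =>
    rw [Sym2.map_pair_eq, SimpleGraph.mem_edgeSet]
    exact he

/-- Restriction of a vector indexed by the edges of `G` to the edges of the
subgraph of `G` induced on `s`. -/
noncomputable def restrictCut (G : SimpleGraph V) (s : Set V) (p : G.edgeSet → ℤ) :
    (G.induce s).edgeSet → ℤ :=
  fun e => p ⟨e.1.map Subtype.val, induce_edge_mem G s e.1 e.2⟩

/-! ### Four points of a cube -/

set_option maxHeartbeats 1000000 in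
/-- Four-point lemma: if `x, y, z` satisfy the metric and parity conditions that the Hamming
distances to `a, b, c` satisfy, some point of the cube realises them.  The point is the
coordinatewise majority of `a, b, c`, flipped on a set of coordinates. -/
lemma cube_four_point {ι : Type} [Fintype ι] (a b c : ι → Bool) (x y z : ℤ)
    (hab1 : (hammingDist a b : ℤ) ≤ x + y) (hab2 : x ≤ y + hammingDist a b)
    (hab3 : y ≤ x + hammingDist a b) (hab4 : x + y + hammingDist a b ≤ 2 * Fintype.card ι)
    (hab5 : Even (x + y + hammingDist a b))
    (hac1 : (hammingDist a c : ℤ) ≤ x + z) (hac2 : x ≤ z + hammingDist a c)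
    (hac3 : z ≤ x + hammingDist a c) (hac4 : x + z + hammingDist a c ≤ 2 * Fintype.card ι)
    (hac5 : Even (x + z + hammingDist a c))
    (hbc1 : (hammingDist b c : ℤ) ≤ y + z) (hbc2 : y ≤ z + hammingDist b c)
    (hbc3 : z ≤ y + hammingDist b c) (hbc4 : y + z + hammingDist b c ≤ 2 * Fintype.card ι)
    (hbc5 : Even (y + z + hammingDist b c)) :
    ∃ v : ι → Bool, (hammingDist v a : ℤ) = x ∧ (hammingDist v b : ℤ) = y ∧
      (hammingDist v c : ℤ) = z := by
  classical
  set N0 : Finset ι := Finset.univ.filter fun i => a i = b i ∧ a i = c i with hN0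
  set N1 : Finset ι := Finset.univ.filter fun i => a i ≠ b i ∧ a i ≠ c i with hN1
  set N2 : Finset ι := Finset.univ.filter fun i => a i ≠ b i ∧ a i = c i with hN2
  set N3 : Finset ι := Finset.univ.filter fun i => a i = b i ∧ a i ≠ c i with hN3
  have key : ∀ P : ι → Prop, ∀ [DecidablePred P], (Finset.univ.filter P).card =
      (N0.filter P).card + (N1.filter P).card + (N2.filter P).card + (N3.filter P).card := by
    intro P _
    simp only [Finset.card_filter, hN0, hN1, hN2, hN3, Finset.sum_filter]
    rw [← Finset.sum_add_distrib, ← Finset.sum_add_distrib, ← Finset.sum_add_distrib]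
    refine Finset.sum_congr rfl fun i _ => ?_
    by_cases hP : P i <;> cases a i <;> cases b i <;> cases c i <;> simp [hP]
  have full : ∀ (N : Finset ι) (P : ι → Prop) [DecidablePred P], (∀ i ∈ N, P i) →
      (N.filter P).card = N.card := fun N P _ h => by rw [Finset.filter_true_of_mem h]
  have none : ∀ (N : Finset ι) (P : ι → Prop) [DecidablePred P], (∀ i ∈ N, ¬ P i) →
      (N.filter P).card = 0 := fun N P _ h => by rw [Finset.filter_false_of_mem h]; rfl
  have hk : Fintype.card ι = N0.card + N1.card + N2.card + N3.card := by
    have := key (fun _ => True)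
    simpa using this
  have hab : hammingDist a b = N1.card + N2.card := by
    rw [hammingDist, key, none N0, full N1, full N2, none N3]
    · omega
    all_goals
      intro i hi
      simp only [hN0, hN1, hN2, hN3, Finset.mem_filter] at hi
      revert hi; cases a i <;> cases b i <;> cases c i <;> simp
  have hac : hammingDist a c = N1.card + N3.card := by
    rw [hammingDist, key, none N0, full N1, none N2, full N3]
    · omega
    all_goals
      intro i hi
      simp only [hN0, hN1, hN2, hN3, Finset.mem_filter] at hi
      revert hi; cases a i <;> cases b i <;> cases c i <;> simp
  have hbc : hammingDist b c = N2.card + N3.card := by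
    rw [hammingDist, key, none N0, none N1, full N2, full N3]
    · omega
    all_goals
      intro i hi
      simp only [hN0, hN1, hN2, hN3, Finset.mem_filter] at hi
      revert hi; cases a i <;> cases b i <;> cases c i <;> simp
  obtain ⟨m0, m1, m2, m3, h0, h1, h2, h3, ex, ey, ez⟩ : ∃ m0 m1 m2 m3 : ℕ, m0 ≤ N0.card ∧
      m1 ≤ N1.card ∧ m2 ≤ N2.card ∧ m3 ≤ N3.card ∧
      x = m0 + (N1.card - m1) + m2 + m3 ∧ y = m0 + m1 + (N2.card - m2) + m3 ∧
      z = m0 + m1 + m2 + (N3.card - m3) := by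
    rw [hab] at hab1 hab2 hab3 hab4 hab5
    rw [hac] at hac1 hac2 hac3 hac4 hac5
    rw [hbc] at hbc1 hbc2 hbc3 hbc4 hbc5
    rw [hk] at hab4 hac4 hbc4
    clear hab hac hbc hk key full none
    clear_value N0 N1 N2 N3
    obtain ⟨s3, hs3⟩ := hab5
    obtain ⟨s2, hs2⟩ := hac5
    obtain ⟨s1, hs1⟩ := hbc5
    push_cast at hab1 hab2 hab3 hab4 hs3 hac1 hac2 hac3 hac4 hs2 hbc1 hbc2 hbc3 hbc4 hs1
    generalize (N0.card) = n0 at *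
    generalize (N1.card) = n1 at *
    generalize (N2.card) = n2 at *
    generalize (N3.card) = n3 at *
    obtain ⟨M, hM, hM'⟩ : ∃ M : ℤ, (M = 0 ∨ M = s1 - n2 - n3 - n1 ∨ M = s2 - n1 - n3 - n2 ∨
        M = s3 - n1 - n2 - n3) ∧ 0 ≤ M ∧ s1 - n2 - n3 - n1 ≤ M ∧ s2 - n1 - n3 - n2 ≤ M ∧
        s3 - n1 - n2 - n3 ≤ M :=
      ⟨max (max 0 (s1 - n2 - n3 - n1)) (max (s2 - n1 - n3 - n2) (s3 - n1 - n2 - n3)),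
        by omega, by omega⟩
    refine ⟨M.toNat, (s1 - n2 - n3 - M).toNat, (s2 - n1 - n3 - M).toNat,
      (s3 - n1 - n2 - M).toNat, ?_, ?_, ?_, ?_, ?_, ?_, ?_⟩ <;> omega
  obtain ⟨M0, hM0, c0⟩ := Finset.exists_subset_card_eq h0
  obtain ⟨M1, hM1, c1⟩ := Finset.exists_subset_card_eq h1
  obtain ⟨M2, hM2, c2⟩ := Finset.exists_subset_card_eq h2
  obtain ⟨M3, hM3, c3⟩ := Finset.exists_subset_card_eq h3
  set M := M0 ∪ M1 ∪ M2 ∪ M3 with hM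
  have disj : ∀ i, (i ∈ N0 → i ∉ N1 ∧ i ∉ N2 ∧ i ∉ N3) ∧ (i ∈ N1 → i ∉ N2 ∧ i ∉ N3) ∧
      (i ∈ N2 → i ∉ N3) := by
    intro i
    simp only [hN0, hN1, hN2, hN3, Finset.mem_filter]
    cases a i <;> cases b i <;> cases c i <;> simp
  have e0 : ∀ i ∈ N0, i ∈ M ↔ i ∈ M0 := by
    intro i hi
    have a1 : i ∉ M1 := fun h => ((disj i).1 hi).1 (hM1 h)
    have a2 : i ∉ M2 := fun h => ((disj i).1 hi).2.1 (hM2 h)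
    have a3 : i ∉ M3 := fun h => ((disj i).1 hi).2.2 (hM3 h)
    simp [hM, a1, a2, a3]
  have e1 : ∀ i ∈ N1, i ∈ M ↔ i ∈ M1 := by
    intro i hi
    have a1 : i ∉ M0 := fun h => ((disj i).1 (hM0 h)).1 hi
    have a2 : i ∉ M2 := fun h => ((disj i).2.1 hi).1 (hM2 h)
    have a3 : i ∉ M3 := fun h => ((disj i).2.1 hi).2 (hM3 h)
    simp [hM, a1, a2, a3]
  have e2 : ∀ i ∈ N2, i ∈ M ↔ i ∈ M2 := by
    intro i hi
    have a1 : i ∉ M0 := fun h => ((disj i).1 (hM0 h)).2.1 hi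
    have a2 : i ∉ M1 := fun h => ((disj i).2.1 (hM1 h)).1 hi
    have a3 : i ∉ M3 := fun h => (disj i).2.2 hi (hM3 h)
    simp [hM, a1, a2, a3]
  have e3 : ∀ i ∈ N3, i ∈ M ↔ i ∈ M3 := by
    intro i hi
    have a1 : i ∉ M0 := fun h => ((disj i).1 (hM0 h)).2.2 hi
    have a2 : i ∉ M1 := fun h => ((disj i).2.1 (hM1 h)).2 hi
    have a3 : i ∉ M2 := fun h => (disj i).2.2 (hM2 h) hi
    simp [hM, a1, a2, a3]
  -- `v` is the majority vote of `a, b, c`, flipped on `M`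
  set v : ι → Bool := fun i =>
    if i ∈ M then !(if b i = c i then b i else a i) else (if b i = c i then b i else a i) with hv
  have inM : ∀ (N M' : Finset ι) (P : ι → Prop) [DecidablePred P], M' ⊆ N →
      (∀ i ∈ N, P i ↔ i ∈ M') → (N.filter P).card = M'.card := by
    intro N M' P _ hs h
    congr 1
    ext i
    simp only [Finset.mem_filter]
    exact ⟨fun hh => (h i hh.1).1 hh.2, fun hh => ⟨hs hh, (h i (hs hh)).2 hh⟩⟩
  have outM : ∀ (N M' : Finset ι) (P : ι → Prop) [DecidablePred P], M' ⊆ N →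
      (∀ i ∈ N, P i ↔ i ∉ M') → ((N.filter P).card : ℤ) = N.card - M'.card := by
    intro N M' P _ hs h
    have : N.filter P = N \ M' := by
      ext i
      simp only [Finset.mem_filter, Finset.mem_sdiff]
      exact ⟨fun hh => ⟨hh.1, (h i hh.1).1 hh.2⟩, fun hh => ⟨hh.1, (h i hh.1).2 hh.2⟩⟩
    rw [this, Finset.card_sdiff_of_subset hs, Nat.cast_sub (Finset.card_le_card hs)]
  refine ⟨v, ?_, ?_, ?_⟩
  · rw [hammingDist, key]
    push_cast
    rw [inM N0 M0 _ hM0, outM N1 M1 _ hM1, inM N2 M2 _ hM2, inM N3 M3 _ hM3]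
    · omega
    all_goals
      intro i hi
      simp only [← e0 i, ← e1 i, ← e2 i, ← e3 i, hi, hv]
      simp only [hN0, hN1, hN2, hN3, Finset.mem_filter] at hi
      revert hi
      by_cases hiM : i ∈ M <;> cases a i <;> cases b i <;> cases c i <;> simp [hiM]
  · rw [hammingDist, key]
    push_cast
    rw [inM N0 M0 _ hM0, inM N1 M1 _ hM1, outM N2 M2 _ hM2, inM N3 M3 _ hM3]
    · omega
    all_goals
      intro i hi
      simp only [← e0 i, ← e1 i, ← e2 i, ← e3 i, hi, hv]
      simp only [hN0, hN1, hN2, hN3, Finset.mem_filter] at hi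
      revert hi
      by_cases hiM : i ∈ M <;> cases a i <;> cases b i <;> cases c i <;> simp [hiM]
  · rw [hammingDist, key]
    push_cast
    rw [inM N0 M0 _ hM0, inM N1 M1 _ hM1, inM N2 M2 _ hM2, outM N3 M3 _ hM3]
    · omega
    all_goals
      intro i hi
      simp only [← e0 i, ← e1 i, ← e2 i, ← e3 i, hi, hv]
      simp only [hN0, hN1, hN2, hN3, Finset.mem_filter] at hi
      revert hi
      by_cases hiM : i ∈ M <;> cases a i <;> cases b i <;> cases c i <;> simp [hiM]

/-! ### Antipodal metrics and their realisations in cubes -/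

/-- Two triples of points of a cube with the same pairwise Hamming distances are related by an
isometry of the cube (a coordinate permutation followed by a translation). -/
lemma cube_isometry {ι : Type} [Fintype ι] (g1 g2 g3 h1 h2 h3 : ι → Bool)
    (e12 : hammingDist g1 g2 = hammingDist h1 h2) (e13 : hammingDist g1 g3 = hammingDist h1 h3)
    (e23 : hammingDist g2 g3 = hammingDist h2 h3) :
    ∃ σ : (ι → Bool) → (ι → Bool), (∀ f f', hammingDist (σ f) (σ f') = hammingDist f f') ∧
      σ h1 = g1 ∧ σ h2 = g2 ∧ σ h3 = g3 := by
  classical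
  let P : (ι → Bool) → (ι → Bool) → (ι → Bool) → ι → Bool × Bool :=
    fun a b c i => (a i ^^ b i, a i ^^ c i)
  let N : (ι → Bool) → (ι → Bool) → (ι → Bool) → Bool × Bool → ℕ :=
    fun a b c q => ∑ i, if P a b c i = q then 1 else 0
  have d12 : ∀ a b c : ι → Bool, hammingDist a b = N a b c (true, true) + N a b c (true, false) := by
    intro a b c
    simp only [hammingDist, Finset.card_filter, N, ← Finset.sum_add_distrib, P]
    refine Finset.sum_congr rfl fun i _ => ?_
    rcases Bool.eq_false_or_eq_true (a i) with h1 | h1 <;>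
      rcases Bool.eq_false_or_eq_true (b i) with h2 | h2 <;>
      rcases Bool.eq_false_or_eq_true (c i) with h3 | h3 <;> simp [h1, h2, h3]
  have d13 : ∀ a b c : ι → Bool, hammingDist a c = N a b c (true, true) + N a b c (false, true) := by
    intro a b c
    simp only [hammingDist, Finset.card_filter, N, ← Finset.sum_add_distrib, P]
    refine Finset.sum_congr rfl fun i _ => ?_
    rcases Bool.eq_false_or_eq_true (a i) with h1 | h1 <;>
      rcases Bool.eq_false_or_eq_true (b i) with h2 | h2 <;>
      rcases Bool.eq_false_or_eq_true (c i) with h3 | h3 <;> simp [h1, h2, h3]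
  have d23 : ∀ a b c : ι → Bool, hammingDist b c = N a b c (true, false) + N a b c (false, true) := by
    intro a b c
    simp only [hammingDist, Finset.card_filter, N, ← Finset.sum_add_distrib, P]
    refine Finset.sum_congr rfl fun i _ => ?_
    rcases Bool.eq_false_or_eq_true (a i) with h1 | h1 <;>
      rcases Bool.eq_false_or_eq_true (b i) with h2 | h2 <;>
      rcases Bool.eq_false_or_eq_true (c i) with h3 | h3 <;> simp [h1, h2, h3]
  have dall : ∀ a b c : ι → Bool, Fintype.card ι = N a b c (true, true) + N a b c (true, false)
      + N a b c (false, true) + N a b c (false, false) := by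
    intro a b c
    rw [Fintype.card_eq_sum_ones]
    simp only [N, ← Finset.sum_add_distrib, P]
    refine Finset.sum_congr rfl fun i _ => ?_
    rcases Bool.eq_false_or_eq_true (a i) with h1 | h1 <;>
      rcases Bool.eq_false_or_eq_true (b i) with h2 | h2 <;>
      rcases Bool.eq_false_or_eq_true (c i) with h3 | h3 <;> simp [h1, h2, h3]
  have hN : ∀ q, N g1 g2 g3 q = N h1 h2 h3 q := by
    have a1 := d12 g1 g2 g3
    have a2 := d13 g1 g2 g3
    have a3 := d23 g1 g2 g3
    have a4 := dall g1 g2 g3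
    have b1 := d12 h1 h2 h3
    have b2 := d13 h1 h2 h3
    have b3 := d23 h1 h2 h3
    have b4 := dall h1 h2 h3
    rintro ⟨_ | _, _ | _⟩ <;> omega
  have hcard : ∀ q, Nonempty ({i // P g1 g2 g3 i = q} ≃ {i // P h1 h2 h3 i = q}) := by
    intro q
    refine ⟨Fintype.equivOfCardEq ?_⟩
    rw [Fintype.card_subtype, Fintype.card_subtype, Finset.card_filter, Finset.card_filter]
    exact hN q
  let π : ι ≃ ι := Equiv.ofFiberEquiv fun q => (hcard q).some
  have hπ : ∀ i, P h1 h2 h3 (π i) = P g1 g2 g3 i := fun i => Equiv.ofFiberEquiv_map _ i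
  refine ⟨fun f i => f (π i) ^^ (h1 (π i) ^^ g1 i), ?_, ?_, ?_, ?_⟩
  · intro f f'
    simp only [hammingDist, Finset.card_filter]
    rw [← Equiv.sum_comp π fun i => if f i ≠ f' i then 1 else 0]
    refine Finset.sum_congr rfl fun i _ => ?_
    cases f (π i) <;> cases f' (π i) <;> cases h1 (π i) <;> cases g1 i <;> simp
  all_goals
    funext i
    have := hπ i
    simp only [P, Prod.mk.injEq] at this
    beta_reduce
    revert this
    cases h1 (π i) <;> cases h2 (π i) <;> cases h3 (π i) <;> cases g1 i <;> cases g2 i <;>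
      cases g3 i <;> simp

/-- `d` satisfies every linear inequality and parity condition on triples of points that the
Hamming metric of a `k`-dimensional cube satisfies. -/
structure AM (k : ℕ) (d : V → V → ℤ) : Prop where
  zero : ∀ u, d u u = 0
  symm : ∀ u w, d u w = d w u
  tri : ∀ u w t, d u t ≤ d u w + d w t
  per : ∀ u w t, d u w + d w t + d u t ≤ 2 * k
  even : ∀ u w t, Even (d u w + d w t + d u t)

/-- Every `AM` metric can be realised in a cube exactly on the pairs related by `E`. -/
def Emb (E : V → V → Prop) : Prop :=
  ∀ (k : ℕ) (d : V → V → ℤ), AM k d →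
    ∃ f : V → Fin k → Bool, ∀ u w, E u w → (hammingDist (f u) (f w) : ℤ) = d u w

lemma Emb.mono {E E' : V → V → Prop} (h : Emb E) (hE : ∀ u w, E' u w → E u w) : Emb E' := by
  intro k d hd
  obtain ⟨f, hf⟩ := h k d hd
  exact ⟨f, fun u w huw => hf u w (hE u w huw)⟩

lemma AM.comp {W : Type} {k : ℕ} {d : V → V → ℤ} (h : AM k d) (φ : W → V) :
    AM k (fun u w => d (φ u) (φ w)) :=
  ⟨fun _ => h.zero _, fun _ _ => h.symm _ _, fun _ _ _ => h.tri _ _ _, fun _ _ _ => h.per _ _ _,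
    fun _ _ _ => h.even _ _ _⟩

/-- One further point can be added to a realisation of three points. -/
lemma AM.four {k : ℕ} {d : V → V → ℤ} (h : AM k d) (s1 s2 s3 t : V) (a b c : Fin k → Bool)
    (hab : (hammingDist a b : ℤ) = d s1 s2) (hac : (hammingDist a c : ℤ) = d s1 s3)
    (hbc : (hammingDist b c : ℤ) = d s2 s3) :
    ∃ v : Fin k → Bool, (hammingDist v a : ℤ) = d t s1 ∧ (hammingDist v b : ℤ) = d t s2 ∧
      (hammingDist v c : ℤ) = d t s3 := by
  have key : ∀ p q, d p q ≤ d t p + d t q ∧ d t p ≤ d t q + d p q ∧ d t q ≤ d t p + d p q ∧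
      d t p + d t q + d p q ≤ 2 * k ∧ Even (d t p + d t q + d p q) := by
    intro p q
    have e1 := h.symm t p
    have e2 := h.symm t q
    have e3 := h.symm p q
    have h1 := h.tri p t q
    have h2 := h.tri t q p
    have h3 := h.tri t p q
    have h4 := h.per t p q
    have h5 := h.even t p q
    refine ⟨by omega, by omega, by omega, by omega, ?_⟩
    rwa [show d t p + d t q + d p q = d t p + d p q + d t q by ring]
  apply cube_four_point a b c <;> simp only [hab, hac, hbc, Fintype.card_fin]
  · exact (key s1 s2).1
  · exact (key s1 s2).2.1
  · exact (key s1 s2).2.2.1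
  · exact (key s1 s2).2.2.2.1
  · exact (key s1 s2).2.2.2.2
  · exact (key s1 s3).1
  · exact (key s1 s3).2.1
  · exact (key s1 s3).2.2.1
  · exact (key s1 s3).2.2.2.1
  · exact (key s1 s3).2.2.2.2
  · exact (key s2 s3).1
  · exact (key s2 s3).2.1
  · exact (key s2 s3).2.2.1
  · exact (key s2 s3).2.2.2.1
  · exact (key s2 s3).2.2.2.2

lemma AM.three {k : ℕ} {d : V → V → ℤ} (h : AM k d) (s1 s2 s3 : V) :
    ∃ g : V → Fin k → Bool, ∀ u ∈ ({s1, s2, s3} : Set V), ∀ w ∈ ({s1, s2, s3} : Set V),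
      (hammingDist (g u) (g w) : ℤ) = d u w := by
  classical
  let a : Fin k → Bool := fun _ => true
  obtain ⟨b, hb, -, -⟩ := h.four s1 s1 s1 s2 a a a (by simp [h.zero]) (by simp [h.zero])
    (by simp [h.zero])
  obtain ⟨c, hca, hcb, -⟩ := h.four s1 s2 s2 s3 a b b (by rw [hammingDist_comm, hb, h.symm])
    (by rw [hammingDist_comm, hb, h.symm]) (by simp [h.zero])
  have hb' : (hammingDist a b : ℤ) = d s1 s2 := by rw [hammingDist_comm, hb, h.symm]
  have hca' : (hammingDist a c : ℤ) = d s1 s3 := by rw [hammingDist_comm, hca, h.symm]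
  have hcb' : (hammingDist b c : ℤ) = d s2 s3 := by rw [hammingDist_comm, hcb, h.symm]
  have eq0 : ∀ p q : Fin k → Bool, (hammingDist p q : ℤ) = 0 → p = q := by
    intro p q hpq
    exact hammingDist_eq_zero.1 (by exact_mod_cast hpq)
  obtain ⟨F, e1, e2, e3⟩ : ∃ F : V → Fin k → Bool, F s1 = a ∧ F s2 = b ∧ F s3 = c := by
    refine ⟨fun u => if u = s1 then a else if u = s2 then b else c, by simp, ?_, ?_⟩
    · dsimp only
      rw [if_pos rfl]
      split_ifs with h1
      · exact eq0 _ _ (by rw [hb', h1, h.zero])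
      · rfl
    · dsimp only
      split_ifs with h1 h2
      · exact eq0 _ _ (by rw [hca', h1, h.zero])
      · exact eq0 _ _ (by rw [hcb', h2, h.zero])
      · rfl
  refine ⟨F, ?_⟩
  rintro u (rfl | rfl | rfl) w (rfl | rfl | rfl) <;> simp only [e1, e2, e3, hammingDist_self, h.zero,
    hb', hca', hcb', Nat.cast_zero]
  · rw [hb, h.symm]
  · rw [hca, h.symm]
  · rw [hcb, h.symm]

/-- The graph on `V` that keeps only the edges of `G` inside `X`. -/
def inn (G : SimpleGraph V) (X : Set V) : SimpleGraph V where
  Adj a b := G.Adj a b ∧ a ∈ X ∧ b ∈ X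
  symm := ⟨fun _ _ h => ⟨h.1.symm, h.2.2, h.2.1⟩⟩
  loopless := ⟨fun _ h => G.loopless.irrefl _ h.1⟩

/-- The vertices that can be reached from `v` in `G - S`; the set is `{v}` when `v ∈ S`. -/
def comp (G : SimpleGraph V) (S : Set V) (v : V) : Set V :=
  {w | (inn G Sᶜ).Reachable v w}

lemma mem_comp_self (G : SimpleGraph V) (S : Set V) (v : V) : v ∈ comp G S v :=
  SimpleGraph.Reachable.refl _

lemma comp_eq {G : SimpleGraph V} {S : Set V} {v w : V} (h : w ∈ comp G S v) :
    comp G S w = comp G S v := by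
  ext t
  exact ⟨fun ht => SimpleGraph.Reachable.trans h ht,
    fun ht => SimpleGraph.Reachable.trans (SimpleGraph.Reachable.symm h) ht⟩

lemma mem_comp_of_adj {G : SimpleGraph V} {S : Set V} {v a b : V} (ha : a ∈ comp G S v)
    (haS : a ∉ S) (hb : b ∉ S) (hab : G.Adj a b) : b ∈ comp G S v :=
  SimpleGraph.Reachable.trans ha (SimpleGraph.Adj.reachable ⟨hab, haS, hb⟩)

lemma reach_mem {G : SimpleGraph V} {X : Set V} {v w : V} (hv : v ∈ X)
    (h : (inn G X).Reachable v w) : w ∈ X := by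
  obtain ⟨p⟩ := h
  induction p with
  | nil => exact hv
  | cons h _ ih => exact ih h.2.2

lemma comp_not_mem {G : SimpleGraph V} {S : Set V} {v w : V} (hv : v ∉ S)
    (h : w ∈ comp G S v) : w ∉ S :=
  reach_mem (X := Sᶜ) hv h

/-- Realisations glue along a vertex cut `S` with at most three vertices, provided each piece
also realises all the distances inside `S`. -/
lemma glue (G : SimpleGraph V) (s1 s2 s3 : V) (S : Set V) (hS : S = {s1, s2, s3})
    (h : ∀ v, v ∉ S → Emb (fun u w => (G.Adj u w ∧ u ∈ comp G S v ∪ S ∧ w ∈ comp G S v ∪ S) ∨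
      (u ∈ S ∧ w ∈ S))) : Emb G.Adj := by
  classical
  intro k d hd
  obtain ⟨g, hg⟩ := hd.three s1 s2 s3
  rw [← hS] at hg
  have hs1 : s1 ∈ S := by simp [hS]
  have hs2 : s2 ∈ S := by simp [hS]
  have hs3 : s3 ∈ S := by simp [hS]
  have H : ∀ C : Set V, ∃ f : V → Fin k → Bool, (∃ v, v ∉ S ∧ C = comp G S v) →
      (∀ u w, G.Adj u w → u ∈ C ∪ S → w ∈ C ∪ S → (hammingDist (f u) (f w) : ℤ) = d u w) ∧
      (∀ s ∈ S, f s = g s) := by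
    intro C
    by_cases hC : ∃ v, v ∉ S ∧ C = comp G S v
    swap
    · exact ⟨g, fun h => absurd h hC⟩
    obtain ⟨v, hv, rfl⟩ := hC
    obtain ⟨f, hf⟩ := h v hv k d hd
    have hfS : ∀ u ∈ S, ∀ w ∈ S, hammingDist (g u) (g w) = hammingDist (f u) (f w) := by
      intro u hu w hw
      have h1 := hg u hu w hw
      have h2 := hf u w (Or.inr ⟨hu, hw⟩)
      omega
    obtain ⟨σ, hσ, e1, e2, e3⟩ := cube_isometry (g s1) (g s2) (g s3) (f s1) (f s2) (f s3)
      (hfS _ hs1 _ hs2) (hfS _ hs1 _ hs3) (hfS _ hs2 _ hs3)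
    refine ⟨fun u => σ (f u), fun _ => ⟨fun u w huw hu hw => ?_, ?_⟩⟩
    · simp only [hσ]
      exact hf u w (Or.inl ⟨huw, hu, hw⟩)
    · intro s hs
      rw [hS] at hs
      rcases hs with rfl | rfl | rfl <;> assumption
  choose F hF using H
  refine ⟨fun u => if u ∈ S then g u else F (comp G S u) u, fun u w huw => ?_⟩
  have key : ∀ u w, G.Adj u w → w ∉ S → (hammingDist (if u ∈ S then g u else F (comp G S u) u)
      (F (comp G S w) w) : ℤ) = d u w := by
    intro u w huw hw
    obtain ⟨h1, h2⟩ := hF (comp G S w) ⟨w, hw, rfl⟩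
    split_ifs with hu
    · rw [← h2 u hu]
      exact h1 u w huw (Or.inr hu) (Or.inl (mem_comp_self G S w))
    · have : u ∈ comp G S w := mem_comp_of_adj (mem_comp_self G S w) hw hu huw.symm
      rw [comp_eq this]
      exact h1 u w huw (Or.inl this) (Or.inl (mem_comp_self G S w))
  by_cases hw : w ∈ S
  · by_cases hu : u ∈ S
    · simp only [hu, hw, if_true]
      exact hg u hu w hw
    · have := key w u huw.symm hu
      simp only [hu, if_false]
      rw [hammingDist_comm, hd.symm]
      exact this
  · have := key u w huw hw
    simp only [hw, if_false]
    exact this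

/-- `G` minus any nonempty set of vertices embeds. -/
def SubEmb (G : SimpleGraph V) : Prop :=
  ∀ t : V, Emb (fun u w => G.Adj u w ∧ u ≠ t ∧ w ≠ t)

/-- Reduction along a cut `S` of at most three vertices: a piece together with `S` is realised
by deleting a vertex `t` outside of it, after collapsing the rest of the graph by `φ` so that all
pairs of `S` are represented by edges. -/
lemma red {G : SimpleGraph V} (hG : SubEmb G) (s1 s2 s3 : V) (S : Set V) (hS : S = {s1, s2, s3})
    (h : ∀ v, v ∉ S → ∃ (t : V) (φ : V → V), t ∉ S ∧ t ∉ comp G S v ∧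
      (∀ u, u ∈ comp G S v ∪ S → φ u = u) ∧
      ∀ u ∈ S, ∀ w ∈ S, u ≠ w → G.Adj u w ∨ (∃ z, z ≠ t ∧ φ z = u ∧ G.Adj z u ∧ G.Adj z w) ∨
        (∃ z, z ≠ t ∧ φ z = w ∧ G.Adj z u ∧ G.Adj z w)) : Emb G.Adj := by
  refine glue G s1 s2 s3 S hS fun v hv => ?_
  obtain ⟨t, φ, htS, htC, hφ, hz⟩ := h v hv
  intro k d hd
  obtain ⟨f, hf⟩ := hG t k _ (hd.comp φ)
  have hne : ∀ u ∈ comp G S v ∪ S, u ≠ t := by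
    rintro u (hu | hu) rfl
    exacts [htC hu, htS hu]
  have base : ∀ u w, G.Adj u w → u ∈ comp G S v ∪ S → w ∈ comp G S v ∪ S →
      (hammingDist (f u) (f w) : ℤ) = d u w := by
    intro u w huw hu hw
    have := hf u w ⟨huw, hne u hu, hne w hw⟩
    simpa only [hφ u hu, hφ w hw] using this
  have zz : ∀ u ∈ S, ∀ w ∈ S, (∃ z, z ≠ t ∧ φ z = u ∧ G.Adj z u ∧ G.Adj z w) →
      (hammingDist (f u) (f w) : ℤ) = d u w := by
    rintro u hu w hw ⟨z, hzt, rfl, hzu, hzw⟩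
    have h1 := hf _ _ ⟨hzu, hzt, hne _ (Or.inr hu)⟩
    have h2 := hf _ _ ⟨hzw, hzt, hne _ (Or.inr hw)⟩
    simp only [hφ _ (Or.inr hu), hφ _ (Or.inr hw), hd.zero] at h1 h2
    rw [← h2]
    have : f z = f (φ z) := by
      rw [← hammingDist_eq_zero]
      exact_mod_cast h1
    rw [this]
  refine ⟨f, ?_⟩
  rintro u w (⟨huw, hu, hw⟩ | ⟨hu, hw⟩)
  · exact base u w huw hu hw
  · by_cases huw : u = w
    · subst huw
      simp [hd.zero]
    rcases hz u hu w hw huw with h' | h' | ⟨z, h1, h2, h3, h4⟩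
    · exact base u w h' (Or.inr hu) (Or.inr hw)
    · exact zz u hu w hw h'
    · rw [hammingDist_comm, hd.symm]
      exact zz w hw u hu ⟨z, h1, h2, h4, h3⟩

/-- If three vertices cover all edges, the metric embeds. -/
lemma emb_of_cover {G : SimpleGraph V} (a b c : V)
    (h : ∀ u w, G.Adj u w → u ∈ ({a, b, c} : Set V) ∨ w ∈ ({a, b, c} : Set V)) : Emb G.Adj := by
  classical
  intro k d hd
  obtain ⟨g, hg⟩ := hd.three a b c
  have ha : a ∈ ({a, b, c} : Set V) := by simp
  have hb : b ∈ ({a, b, c} : Set V) := by simp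
  have hc : c ∈ ({a, b, c} : Set V) := by simp
  have := fun t => hd.four a b c t (g a) (g b) (g c) (hg a ha b hb) (hg a ha c hc) (hg b hb c hc)
  choose F hF1 hF2 hF3 using this
  have key : ∀ u w, w ∈ ({a, b, c} : Set V) →
      (hammingDist (if u ∈ ({a, b, c} : Set V) then g u else F u) (g w) : ℤ) = d u w := by
    intro u w hw
    split_ifs with hu
    · exact hg u hu w hw
    · rcases hw with rfl | rfl | rfl
      exacts [hF1 u, hF2 u, hF3 u]
  refine ⟨fun u => if u ∈ ({a, b, c} : Set V) then g u else F u, fun u w huw => ?_⟩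
  rcases h u w huw with hu | hw
  · rw [hammingDist_comm, hd.symm]
    have := key w u hu
    simp only [hu, if_true]
    exact this
  · have := key u w hw
    simp only [hw, if_true]
    exact this

/-! ### Induced paths and cycles -/

/-- `p 0, …, p m` is an induced path of `G`. -/
def IP (G : SimpleGraph V) (p : ℕ → V) (m : ℕ) : Prop :=
  ∀ i j, i < j → j ≤ m → p i ≠ p j ∧ (G.Adj (p i) (p j) ↔ j = i + 1)

/-- Injectivity and the adjacency pattern need only be checked on pairs `i < j`. -/
lemma induced_of_fun {G : SimpleGraph V} {n : ℕ} (hn : 3 ≤ n) (c : ℕ → V)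
    (h : ∀ i j, i < j → j < n → c i ≠ c j ∧ (G.Adj (c i) (c j) ↔ (j = i + 1 ∨ (i = 0 ∧ j = n - 1)))) :
    HasInducedCycleLen G n := by
  refine ⟨hn, ?_⟩
  obtain ⟨n, rfl⟩ : ∃ l, n = l + 2 := ⟨n - 2, by omega⟩
  have lt : ∀ i j : Fin (n + 2), i.1 < j.1 →
      (G.Adj (c i) (c j) ↔ (SimpleGraph.cycleGraph (n + 2)).Adj i j) := by
    intro i j hij
    rw [(h i j hij j.2).2, SimpleGraph.cycleGraph_adj']
    have e1 : (j - i).val = j.1 - i.1 := Fin.sub_val_of_le (le_of_lt hij)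
    have e2 : (i - j).val = n + 2 + i.1 - j.1 := by
      rw [Fin.val_sub, Nat.mod_eq_of_lt] <;> omega
    rw [e1, e2]
    have := j.2
    omega
  refine ⟨⟨⟨fun i => c i, ?_⟩, ?_⟩⟩
  · intro i j hij
    by_contra hne
    rcases lt_or_gt_of_ne (Fin.val_ne_of_ne hne) with h' | h'
    · exact (h i j h' j.2).1 hij
    · exact (h j i h' i.2).1 hij.symm
  · intro i j
    change G.Adj (c i) (c j) ↔ _
    rcases lt_trichotomy i.1 j.1 with hij | hij | hij
    · exact lt i j hij
    · have := Fin.ext hij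
      subst this
      simp
    · rw [G.adj_comm, SimpleGraph.adj_comm (SimpleGraph.cycleGraph (n + 2))]
      exact lt j i hij

/-- Two induced paths with common ends whose interiors are disjoint and anticomplete form an
induced cycle. -/
lemma cycle_of_paths {G : SimpleGraph V} {p q : ℕ → V} {m l : ℕ} (hm : 2 ≤ m) (hl : 2 ≤ l)
    (hp : IP G p m) (hq : IP G q l) (h0 : p 0 = q 0) (h1 : p m = q l)
    (hd : ∀ i j, 0 < i → i < m → 0 < j → j < l → p i ≠ q j ∧ ¬ G.Adj (p i) (q j)) :
    HasInducedCycleLen G (m + l) := by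
  refine induced_of_fun (by omega) (fun i => if i ≤ m then p i else q (m + l - i)) ?_
  intro i j hij hj
  split_ifs with a b b
  · rw [(hp i j hij b).2]
    refine ⟨(hp i j hij b).1, by omega⟩
  · by_cases hi0 : i = 0
    · subst hi0
      rw [h0]
      have := hq 0 (m + l - j) (by omega) (by omega)
      refine ⟨this.1, ?_⟩
      rw [this.2]
      omega
    · by_cases him : i = m
      · subst him
        rw [h1]
        have := hq (i + l - j) l (by omega) (by omega)
        refine ⟨this.1.symm, ?_⟩
        rw [G.adj_comm, this.2]
        omega
      · have := hd i (m + l - j) (by omega) (by omega) (by omega) (by omega)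
        refine ⟨this.1, ?_⟩
        constructor
        · exact fun h => absurd h this.2
        · omega
  · omega
  · have := hq (m + l - j) (m + l - i) (by omega) (by omega)
    refine ⟨this.1.symm, ?_⟩
    rw [G.adj_comm, this.2]
    omega

/-- A shortest path is induced. -/
lemma exists_IP {H : SimpleGraph V} {b : V} : ∀ (m : ℕ) (a : V), H.Reachable a b → H.dist a b = m →
    ∃ p : ℕ → V, p 0 = a ∧ p m = b ∧ IP H p m := by
  have main : ∀ (m : ℕ) (a : V), H.Reachable a b → H.dist a b = m →
      ∃ p : ℕ → V, p 0 = a ∧ p m = b ∧ (∀ i, i < m → H.Adj (p i) (p (i + 1))) ∧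
        ∀ i, i ≤ m → H.Reachable (p i) b ∧ H.dist (p i) b = m - i := by
    intro m
    induction m with
    | zero =>
      intro a ha h0
      have : a = b := (SimpleGraph.Reachable.dist_eq_zero_iff ha).1 h0
      refine ⟨fun _ => a, rfl, this, by omega, fun i hi => ⟨ha, ?_⟩⟩
      simpa using h0
    | succ m ih =>
      intro a ha h
      obtain ⟨w, hw⟩ := ha.exists_walk_length_eq_dist
      cases w with
      | nil => rw [h] at hw; simp at hw
      | @cons _ a' _ haa' w' =>
        have h1 : H.dist a' b ≤ m := by
          have := SimpleGraph.dist_le w'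
          simp at hw
          omega
        have h2 : m ≤ H.dist a' b := by
          obtain ⟨w2, hw2⟩ := (w'.reachable).exists_walk_length_eq_dist
          have := SimpleGraph.dist_le (SimpleGraph.Walk.cons haa' w2)
          simp at this
          omega
        obtain ⟨p, e0, e1, e2, e3⟩ := ih a' w'.reachable (by omega)
        refine ⟨fun i => if i = 0 then a else p (i - 1), by simp, by simpa using e1, ?_, ?_⟩
        · intro i hi
          rcases i with _ | i
          · simpa [e0] using haa'
          · simpa using e2 i (by omega)
        · intro i hi
          rcases i with _ | i
          · simpa using ⟨ha, h⟩
          · have := e3 i (by omega)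
            simpa using this
  intro m a ha h
  obtain ⟨p, e0, e1, e2, e3⟩ := main m a ha h
  refine ⟨p, e0, e1, fun i j hij hj => ⟨fun hh => ?_, fun hh => ?_, ?_⟩⟩
  · have h1 := (e3 i (by omega)).2
    have h2 := (e3 j (by omega)).2
    rw [hh] at h1
    omega
  · have h1 := (e3 i (by omega)).2
    have h2 := (e3 j (by omega)).2
    obtain ⟨w2, hw2⟩ := ((e3 j (by omega)).1).exists_walk_length_eq_dist
    have := SimpleGraph.dist_le (SimpleGraph.Walk.cons hh w2)
    simp at this
    omega
  · rintro rfl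
    exact e2 i (by omega)

/-- The vertex set `D` induces a connected (or empty) subgraph. -/
def Conn (G : SimpleGraph V) (D : Set V) : Prop :=
  ∀ u ∈ D, ∀ w ∈ D, (inn G D).Reachable u w

lemma inn_mono {G : SimpleGraph V} {X Y : Set V} (h : X ⊆ Y) : inn G X ≤ inn G Y := by
  intro a b hab
  exact ⟨hab.1, h hab.2.1, h hab.2.2⟩

lemma inn_reach {G : SimpleGraph V} {X : Set V} {a b : V} (h : G.Adj a b) (ha : a ∈ X)
    (hb : b ∈ X) : (inn G X).Reachable a b :=
  SimpleGraph.Adj.reachable ⟨h, ha, hb⟩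

lemma Conn.singleton (G : SimpleGraph V) (a : V) : Conn G {a} := by
  rintro u rfl w rfl
  exact SimpleGraph.Reachable.refl _

lemma Conn.union {G : SimpleGraph V} {A B : Set V} (hA : Conn G A) (hB : Conn G B)
    (h : ∃ a ∈ A, ∃ b ∈ B, G.Adj a b) : Conn G (A ∪ B) := by
  obtain ⟨a, ha, b, hb, hab⟩ := h
  have key : ∀ u ∈ A ∪ B, (inn G (A ∪ B)).Reachable u a := by
    rintro u (hu | hu)
    · exact (hA u hu a ha).mono (inn_mono Set.subset_union_left)
    · refine ((hB u hu b hb).mono (inn_mono Set.subset_union_right)).trans ?_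
      exact inn_reach hab.symm (Or.inr hb) (Or.inl ha)
  intro u hu w hw
  exact (key u hu).trans (key w hw).symm

lemma Conn.insert {G : SimpleGraph V} {A : Set V} (hA : Conn G A) {b a : V} (ha : a ∈ A)
    (hab : G.Adj b a) : Conn G (insert b A) := by
  rw [Set.insert_eq]
  exact (Conn.singleton G b).union hA ⟨b, rfl, a, ha, hab⟩

lemma Conn.pair {G : SimpleGraph V} {a b : V} (h : G.Adj a b) : Conn G {a, b} :=
  (Conn.singleton G b).insert rfl h

lemma Conn.comp {G : SimpleGraph V} (S : Set V) (v : V) : Conn G (comp G S v) := by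
  have : ∀ u ∈ _root_.comp G S v, (inn G (_root_.comp G S v)).Reachable v u := by
    rintro u ⟨p⟩
    have : ∀ (a b : V) (_ : (inn G Sᶜ).Walk a b), a ∈ _root_.comp G S v →
        (inn G (_root_.comp G S v)).Reachable a b := by
      intro a b p
      induction p with
      | nil => exact fun _ => SimpleGraph.Reachable.refl _
      | @cons a a' b h _ ih =>
        intro ha
        have ha' : a' ∈ _root_.comp G S v := SimpleGraph.Reachable.trans ha h.reachable
        exact (inn_reach h.1 ha ha').trans (ih ha')
    exact this v u p (mem_comp_self G S v)
  intro u hu w hw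
  exact (this u hu).symm.trans (this w hw)

/-- Two nonadjacent vertices attached to a connected set `D` are joined by an induced path of length at
least two with interior in `D`. -/
lemma path_through {G : SimpleGraph V} {D : Set V} (hD : Conn G D) {a b : V}
    (hab : a ≠ b) (hadj : ¬ G.Adj a b) (haD : ∃ u ∈ D, G.Adj a u)
    (hbD : ∃ u ∈ D, G.Adj b u) :
    ∃ (p : ℕ → V) (m : ℕ), 2 ≤ m ∧ p 0 = a ∧ p m = b ∧ IP G p m ∧ ∀ i, 0 < i → i < m → p i ∈ D := by
  obtain ⟨u, hu, hau⟩ := haD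
  obtain ⟨w, hw, hbw⟩ := hbD
  have hX : (inn G (insert a (insert b D))).Reachable a b := by
    have h1 : (inn G (insert a (insert b D))).Reachable u w :=
      (hD u hu w hw).mono (inn_mono fun x hx => Or.inr (Or.inr hx))
    refine (inn_reach hau (Or.inl rfl) (Or.inr (Or.inr hu))).trans (h1.trans ?_)
    exact inn_reach hbw.symm (Or.inr (Or.inr hw)) (Or.inr (Or.inl rfl))
  obtain ⟨p, e0, e1, hp⟩ := exists_IP _ a hX rfl
  set m := (inn G (insert a (insert b D))).dist a b
  have hm0 : m ≠ 0 := by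
    intro h
    rw [h] at e1
    exact hab (e0.symm.trans e1)
  have hmem : ∀ i, i ≤ m → p i ∈ insert a (insert b D) := by
    intro i hi
    rcases i with _ | i
    · rw [e0]; exact Or.inl rfl
    · exact ((hp i (i + 1) (by omega) hi).2.2 rfl).2.2
  have hm1 : m ≠ 1 := by
    intro h
    have := ((hp 0 1 (by omega) (by omega)).2.2 rfl).1
    rw [h] at e1
    rw [e0, e1] at this
    exact hadj this
  refine ⟨p, m, by omega, e0, e1, ?_, ?_⟩
  · intro i j hij hj
    refine ⟨(hp i j hij hj).1, ?_⟩
    rw [← (hp i j hij hj).2]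
    exact ⟨fun h => ⟨h, hmem i (by omega), hmem j hj⟩, fun h => h.1⟩
  · intro i hi him
    rcases hmem i him.le with h | h | h
    · exact absurd (e0.trans h.symm) (hp 0 i hi him.le).1
    · exact absurd (h.trans e1.symm) (hp i m him le_rfl).1
    · exact h

/-- An induced cycle of length `m + l` through `D` and `D'`. -/
lemma cycle_through {G : SimpleGraph V} {D D' : Set V} (hD : Conn G D) (hD' : Conn G D')
    {a b : V} (hab : a ≠ b)
    (hadj : ¬ G.Adj a b) (haD : ∃ u ∈ D, G.Adj a u) (hbD : ∃ u ∈ D, G.Adj b u)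
    (haD' : ∃ u ∈ D', G.Adj a u) (hbD' : ∃ u ∈ D', G.Adj b u)
    (hdis : ∀ u ∈ D, ∀ w ∈ D', u ≠ w ∧ ¬ G.Adj u w) :
    ∃ (p q : ℕ → V) (m l : ℕ), 2 ≤ m ∧ 2 ≤ l ∧ p 0 = a ∧ p m = b ∧ IP G p m ∧ q 0 = a ∧ q l = b ∧
      IP G q l ∧ (∀ i, 0 < i → i < m → p i ∈ D) ∧ HasInducedCycleLen G (m + l) := by
  obtain ⟨p, m, hm, p0, p1, hp, hpD⟩ := path_through hD hab hadj haD hbD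
  obtain ⟨q, l, hl, q0, q1, hq, hqD⟩ := path_through hD' hab hadj haD' hbD'
  refine ⟨p, q, m, l, hm, hl, p0, p1, hp, q0, q1, hq, hpD, ?_⟩
  refine cycle_of_paths hm hl hp hq (p0.trans q0.symm) (p1.trans q1.symm) ?_
  intro i j h1 h2 h3 h4
  exact hdis _ (hpD i h1 h2) _ (hqD j h3 h4)

/-! ### Bisimplicial edges and simplicial vertices -/

/-- `G` is properly 2-coloured by `c` and has no induced cycle of length at least `6`. -/
structure CB (G : SimpleGraph V) (c : V → Bool) : Prop where
  col : ∀ u v, G.Adj u v → c u ≠ c v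
  no6 : ∀ n, 6 ≤ n → ¬ HasInducedCycleLen G n

lemma color_path {G : SimpleGraph V} {c : V → Bool} (hc : ∀ u v, G.Adj u v → c u ≠ c v)
    {p : ℕ → V} {m : ℕ} (hp : IP G p m) : ∀ i, i ≤ m → (c (p i) = c (p 0) ↔ Even i) := by
  intro i
  induction i with
  | zero => simp
  | succ i ih =>
    intro hi
    have h1 := hc _ _ ((hp i (i + 1) (by omega) hi).2.2 rfl)
    rw [Nat.even_add_one, ← ih (by omega)]
    revert h1
    cases c (p i) <;> cases c (p (i + 1)) <;> cases c (p 0) <;> simp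

/-- Two nonadjacent vertices attached to two anticomplete connected sets have a common neighbour
in each of them: a shortest path through each set gives an induced cycle, which has length `4`. -/
lemma CB.common {G : SimpleGraph V} {c : V → Bool} (h : CB G c) {D D' : Set V} (hD : Conn G D)
    (hD' : Conn G D') {a b : V}
    (hab : a ≠ b) (hadj : ¬ G.Adj a b) (haD : ∃ u ∈ D, G.Adj a u) (hbD : ∃ u ∈ D, G.Adj b u)
    (haD' : ∃ u ∈ D', G.Adj a u) (hbD' : ∃ u ∈ D', G.Adj b u)
    (hdis : ∀ u ∈ D, ∀ w ∈ D', u ≠ w ∧ ¬ G.Adj u w) : ∃ z ∈ D, G.Adj z a ∧ G.Adj z b := by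
  obtain ⟨p, q, m, l, hm, hl, p0, p1, hp, q0, q1, hq, hpD, hcyc⟩ :=
    cycle_through hD hD' hab hadj haD hbD haD' hbD' hdis
  have h6 : m + l < 6 := by
    by_contra hh
    exact h.no6 _ (by omega) hcyc
  have e1 := color_path h.col hp m le_rfl
  have e2 := color_path h.col hq l le_rfl
  rw [p0, p1] at e1
  rw [q0, q1, e1] at e2
  have : m = 2 := by
    rw [Nat.even_iff, Nat.even_iff] at e2
    omega
  subst this
  refine ⟨p 1, hpD 1 (by omega) (by omega), ?_, ?_⟩
  · rw [← p0]
    exact ((hp 0 1 (by omega) (by omega)).2.2 rfl).symm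
  · rw [← p1]
    exact (hp 1 2 (by omega) (by omega)).2.2 rfl

/-- Vertices of different colours attached to the same two anticomplete connected sets are adjacent:
otherwise they would have a common neighbour, which has neither colour. -/
lemma CB.adj_of_opp {G : SimpleGraph V} {c : V → Bool} (h : CB G c) {D D' : Set V} (hD : Conn G D)
    (hD' : Conn G D') {a b : V}
    (hab : c a ≠ c b) (haD : ∃ u ∈ D, G.Adj a u) (hbD : ∃ u ∈ D, G.Adj b u)
    (haD' : ∃ u ∈ D', G.Adj a u) (hbD' : ∃ u ∈ D', G.Adj b u)
    (hdis : ∀ u ∈ D, ∀ w ∈ D', u ≠ w ∧ ¬ G.Adj u w) : G.Adj a b := by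
  by_contra hadj
  obtain ⟨z, -, h1, h2⟩ := h.common hD hD' (fun e => hab (congrArg c e)) hadj haD hbD
    haD' hbD' hdis
  have e1 := h.col _ _ h1
  have e2 := h.col _ _ h2
  revert e1 e2 hab
  cases c z <;> cases c a <;> cases c b <;> simp

/-- Every bipartite graph without induced cycles of length at least `6` that has an edge has a
bisimplicial edge `xy`: the neighbourhoods of `x` and `y` are complete to each other. -/
lemma CB.bisimplicial [Finite V] {G : SimpleGraph V} {c : V → Bool} (h : CB G c) :
    ∀ (n : ℕ) (R : Set V), R.ncard ≤ n → (∃ x ∈ R, ∃ y ∈ R, G.Adj x y) →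
      ∃ x ∈ R, ∃ y ∈ R, G.Adj x y ∧ ∀ p ∈ R, ∀ q ∈ R, G.Adj y p → G.Adj x q → G.Adj p q := by
  have opp : ∀ {x y z}, G.Adj x y → G.Adj x z → ¬ G.Adj y z := by
    intro x y z h1 h2 h3
    have e1 := h.col _ _ h1
    have e2 := h.col _ _ h2
    have e3 := h.col _ _ h3
    revert e1 e2 e3
    cases c x <;> cases c y <;> cases c z <;> simp
  have opp3 : ∀ {p x y q}, G.Adj y p → G.Adj x y → G.Adj x q → c p ≠ c q := by
    intro p x y q h1 h2 h3
    have e1 := h.col _ _ h1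
    have e2 := h.col _ _ h2
    have e3 := h.col _ _ h3
    revert e1 e2 e3
    cases c x <;> cases c y <;> cases c p <;> cases c q <;> simp
  intro n
  induction n with
  | zero =>
    rintro R hR ⟨x, hx, -⟩
    have : R = ∅ := by
      rw [← Set.ncard_eq_zero (Set.toFinite R)]
      omega
    simp [this] at hx
  | succ n ih =>
    intro R hR hE
    by_cases hA : ∀ x ∈ R, ∀ y ∈ R, G.Adj x y → ∀ r ∈ R, G.Adj x r ∨ G.Adj y r
    · obtain ⟨x, hx, y, hy, hxy⟩ := hE
      refine ⟨x, hx, y, hy, hxy, fun p hp q hq hyp hxq => ?_⟩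
      rcases hA y hy p hp hyp q hq with h1 | h1
      · exact absurd h1 (opp hxy hxq)
      · exact h1
    -- a connected set `K` avoiding the closed neighbourhood of an edge, of maximal size
    let T : Set (V × V × Set V) := {t | t.1 ∈ R ∧ t.2.1 ∈ R ∧ G.Adj t.1 t.2.1 ∧ Conn G t.2.2 ∧
      t.2.2.Nonempty ∧ ∀ k ∈ t.2.2, k ∈ R ∧ ¬ G.Adj t.1 k ∧ ¬ G.Adj t.2.1 k}
    have hT : T.Nonempty := by
      push Not at hA
      obtain ⟨x, hx, y, hy, hxy, r, hr, h1, h2⟩ := hA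
      refine ⟨(x, y, {r}), hx, hy, hxy, Conn.singleton G r, Set.singleton_nonempty r, ?_⟩
      rintro k rfl
      exact ⟨hr, h1, h2⟩
    obtain ⟨⟨x, y, K⟩, ⟨hx, hy, hxy, hK, hKne, hKR⟩, hmax⟩ :=
      Set.exists_max_image T (fun t => t.2.2.ncard) (Set.toFinite T) hT
    dsimp only at hx hy hxy hK hKne hKR
    let S : Set V := {s | s ∈ R ∧ s ∉ K ∧ ∃ k ∈ K, G.Adj s k}
    have dom : ∀ x' ∈ R, ∀ y' ∈ R, G.Adj x' y' → (∀ k ∈ K, ¬ G.Adj x' k ∧ ¬ G.Adj y' k) →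
        ∀ s ∈ S, G.Adj x' s ∨ G.Adj y' s := by
      rintro x' hx' y' hy' hxy' hk s ⟨hsR, hsK, k, hkK, hsk⟩
      by_contra hcon
      push Not at hcon
      have := hmax (x', y', insert s K) ⟨hx', hy', hxy', hK.insert hkK hsk, ⟨s, Or.inl rfl⟩, by
        rintro t (rfl | ht)
        · exact ⟨hsR, hcon⟩
        · exact ⟨(hKR t ht).1, hk t ht⟩⟩
      dsimp only at this
      rw [Set.ncard_insert_of_notMem hsK (Set.toFinite K)] at this
      omega
    have hxK : ∀ z ∈ R, z ∉ K → z ∉ S → ∀ k ∈ K, ¬ G.Adj z k :=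
      fun z hz hzK hzS k hk hadj => hzS ⟨hz, hzK, k, hk, hadj⟩
    have xK : x ∉ K := fun hh => (hKR x hh).2.2 hxy.symm
    have yK : y ∉ K := fun hh => (hKR y hh).2.1 hxy
    have xS : x ∉ S := by
      rintro ⟨-, -, k, hk, hadj⟩
      exact (hKR k hk).2.1 hadj
    have yS : y ∉ S := by
      rintro ⟨-, -, k, hk, hadj⟩
      exact (hKR k hk).2.2 hadj
    have biS : ∀ a ∈ S, ∀ b ∈ S, c a ≠ c b → G.Adj a b := by
      intro a ha b hb hab
      have nb : ∀ s ∈ S, ∃ u ∈ ({x, y} : Set V), G.Adj s u := by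
        intro s hs
        rcases dom x hx y hy hxy (fun k hk => (hKR k hk).2) s hs with h1 | h1
        · exact ⟨x, Or.inl rfl, h1.symm⟩
        · exact ⟨y, Or.inr rfl, h1.symm⟩
      refine h.adj_of_opp hK (Conn.pair hxy) hab ha.2.2 hb.2.2
        (nb a ha) (nb b hb) ?_
      rintro u hu w (rfl | rfl)
      · exact ⟨fun e => xK (e ▸ hu), fun e => (hKR u hu).2.1 e.symm⟩
      · exact ⟨fun e => yK (e ▸ hu), fun e => (hKR u hu).2.2 e.symm⟩
    obtain ⟨x', ⟨hx', hx'K⟩, y', ⟨hy', hy'K⟩, hxy', hbi⟩ := ih (R \ (K ∪ S)) (by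
      obtain ⟨k, hk⟩ := hKne
      have : (R \ (K ∪ S)).ncard < R.ncard :=
        Set.ncard_lt_ncard ⟨Set.sdiff_subset, fun hh => (hh (hKR k hk).1).2 (Or.inl hk)⟩
          (Set.toFinite R)
      omega) ⟨x, ⟨hx, fun hh => hh.elim xK xS⟩, y, ⟨hy, fun hh => hh.elim yK yS⟩, hxy⟩
    have nK : ∀ z ∈ R, z ∉ K ∪ S → ∀ k ∈ K, ¬ G.Adj z k := fun z hz hzn =>
      hxK z hz (fun hh => hzn (Or.inl hh)) (fun hh => hzn (Or.inr hh))
    refine ⟨x', hx', y', hy', hxy', fun p hp q hq hyp hxq => ?_⟩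
    have hpK : p ∉ K := fun hh => nK y' hy' hy'K p hh hyp
    have hqK : q ∉ K := fun hh => nK x' hx' hx'K q hh hxq
    by_cases hpS : p ∈ S <;> by_cases hqS : q ∈ S
    · exact biS p hpS q hqS (opp3 hyp hxy' hxq)
    · have hq' : q ∉ K ∪ S := fun hh => hh.elim hqK hqS
      rcases dom x' hx' q hq hxq (fun k hk => ⟨nK x' hx' hx'K k hk, nK q hq hq' k hk⟩) p hpS with
        h1 | h1
      · exact absurd h1 (opp hxy'.symm hyp)
      · exact h1.symm
    · have hp' : p ∉ K ∪ S := fun hh => hh.elim hpK hpS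
      rcases dom y' hy' p hp hyp (fun k hk => ⟨nK y' hy' hy'K k hk, nK p hp hp' k hk⟩) q hqS with
        h1 | h1
      · exact absurd h1 (opp hxy' hxq)
      · exact h1
    · exact hbi p ⟨hp, fun hh => hh.elim hpK hpS⟩ q ⟨hq, fun hh => hh.elim hqK hqS⟩ hyp hxq

/-- Every nonempty chordal graph has a simplicial vertex. -/
lemma chordal_simplicial [Finite V] {G : SimpleGraph V} (h : ChordalG G) :
    ∀ (n : ℕ) (R : Set V), R.ncard ≤ n → R.Nonempty →
      ∃ x ∈ R, ∀ p ∈ R, ∀ q ∈ R, G.Adj x p → G.Adj x q → p ≠ q → G.Adj p q := by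
  intro n
  induction n with
  | zero =>
    rintro R hR ⟨x, hx⟩
    have : R = ∅ := by
      rw [← Set.ncard_eq_zero (Set.toFinite R)]
      omega
    simp [this] at hx
  | succ n ih =>
    intro R hR hE
    by_cases hA : ∀ x ∈ R, ∀ y ∈ R, x ≠ y → G.Adj x y
    · obtain ⟨x, hx⟩ := hE
      exact ⟨x, hx, fun p hp q hq _ _ hpq => hA p hp q hq hpq⟩
    -- a connected set `K` avoiding the closed neighbourhood of a vertex, of maximal size
    let T : Set (V × Set V) := {t | t.1 ∈ R ∧ Conn G t.2 ∧
      t.2.Nonempty ∧ ∀ k ∈ t.2, k ∈ R ∧ t.1 ≠ k ∧ ¬ G.Adj t.1 k}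
    have hT : T.Nonempty := by
      push Not at hA
      obtain ⟨x, hx, y, hy, hne, hxy⟩ := hA
      refine ⟨(x, {y}), hx, Conn.singleton G y, Set.singleton_nonempty y, ?_⟩
      rintro k rfl
      exact ⟨hy, hne, hxy⟩
    obtain ⟨⟨x, K⟩, ⟨hx, hK, hKne, hKR⟩, hmax⟩ :=
      Set.exists_max_image T (fun t => t.2.ncard) (Set.toFinite T) hT
    dsimp only at hx hK hKne hKR
    let S : Set V := {s | s ∈ R ∧ s ∉ K ∧ ∃ k ∈ K, G.Adj s k}
    have dom : ∀ x' ∈ R, x' ∉ K → (∀ k ∈ K, ¬ G.Adj x' k) → ∀ s ∈ S, G.Adj x' s := by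
      rintro x' hx' hx'K hk s ⟨hsR, hsK, k, hkK, hsk⟩
      by_contra hcon
      have := hmax (x', insert s K) ⟨hx', hK.insert hkK hsk, ⟨s, Or.inl rfl⟩, by
        rintro t (rfl | ht)
        · exact ⟨hsR, fun e => hk k hkK (by rw [show x' = t from e]; exact hsk), hcon⟩
        · exact ⟨(hKR t ht).1, fun e => hx'K (by rw [show x' = t from e]; exact ht), hk t ht⟩⟩
      dsimp only at this
      rw [Set.ncard_insert_of_notMem hsK (Set.toFinite K)] at this
      omega
    have xK : x ∉ K := fun hh => (hKR x hh).2.1 rfl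
    have xS : x ∉ S := by
      rintro ⟨-, -, k, hk, hadj⟩
      exact (hKR k hk).2.2 hadj
    have nK : ∀ z ∈ R, z ∉ K ∪ S → ∀ k ∈ K, ¬ G.Adj z k :=
      fun z hz hzn k hk hadj => hzn (Or.inr ⟨hz, fun hh => hzn (Or.inl hh), k, hk, hadj⟩)
    have dom' : ∀ z ∈ R, z ∉ K ∪ S → ∀ s ∈ S, G.Adj z s := fun z hz hzn =>
      dom z hz (fun hh => hzn (Or.inl hh)) (nK z hz hzn)
    have hxn : x ∉ K ∪ S := fun hh => hh.elim xK xS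
    have clS : ∀ a ∈ S, ∀ b ∈ S, a ≠ b → G.Adj a b := by
      intro a ha b hb hab
      by_contra hadj
      have hxs := dom' x hx hxn
      obtain ⟨p, q, m, l, hm, hl, -, -, -, -, -, -, -, hcyc⟩ :=
        cycle_through hK (Conn.singleton G x) hab hadj ha.2.2 hb.2.2
          ⟨x, rfl, (hxs a ha).symm⟩ ⟨x, rfl, (hxs b hb).symm⟩ (by
            rintro u hu w rfl
            exact ⟨fun e => (hKR u hu).2.1 e.symm, fun e => (hKR u hu).2.2 e.symm⟩)
      have := h _ hcyc
      omega
    obtain ⟨x', ⟨hx', hx'K⟩, hsi⟩ := ih (R \ (K ∪ S)) (by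
      obtain ⟨k, hk⟩ := hKne
      have : (R \ (K ∪ S)).ncard < R.ncard :=
        Set.ncard_lt_ncard ⟨Set.sdiff_subset, fun hh => (hh (hKR k hk).1).2 (Or.inl hk)⟩
          (Set.toFinite R)
      omega) ⟨x, hx, hxn⟩
    refine ⟨x', hx', fun p hp q hq hxp hxq hpq => ?_⟩
    have hpK : p ∉ K := fun hh => nK x' hx' hx'K p hh hxp
    have hqK : q ∉ K := fun hh => nK x' hx' hx'K q hh hxq
    by_cases hpS : p ∈ S <;> by_cases hqS : q ∈ S
    · exact clS p hpS q hqS hpq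
    · exact (dom' q hq (fun hh => hh.elim hqK hqS) p hpS).symm
    · exact dom' p hp (fun hh => hh.elim hpK hpS) q hqS
    · exact hsi p ⟨hp, fun hh => hh.elim hpK hpS⟩ q ⟨hq, fun hh => hh.elim hqK hqS⟩ hxp hxq hpq

/-! ### Reductions along small cuts and `K₅` minors -/

lemma comp_sub {G : SimpleGraph V} {S X : Set V} {a : V} (ha : a ∈ X)
    (h : ∀ u ∈ X, ∀ v, G.Adj u v → u ∉ S → v ∉ S → v ∈ X) : comp G S a ⊆ X := by
  rintro w ⟨p⟩
  induction p with
  | nil => exact ha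
  | cons hab _ ih => exact ih (h _ ha _ hab.1 hab.2.1 hab.2.2)

/-- A set `D` whose outer neighbours all lie in `S` is a union of components of `G - S`. -/
lemma comp_closed {G : SimpleGraph V} {S D : Set V} (hD : ∀ d ∈ D, ∀ s, G.Adj d s → s ∈ D ∨ s ∈ S)
    {v : V} : (v ∈ D → comp G S v ⊆ D) ∧ (v ∉ D → ∀ w ∈ D, w ∉ comp G S v) := by
  refine ⟨fun hv => comp_sub hv fun u hu w huw _ hw => (hD u hu w huw).resolve_right hw,
    fun hv w hw hwv => ?_⟩
  have : comp G S v ⊆ Dᶜ := comp_sub hv fun u hu w huw huS _ hw' =>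
    (hD w hw' u huw.symm).elim hu huS
  exact this hwv hw

lemma isolated_comp {G : SimpleGraph V} {S : Set V} {x : V} (hx : ∀ w, G.Adj x w → w ∈ S) {v : V}
    (h : x ∈ comp G S v) : v = x := by
  have h1 : v ∈ comp G S x := SimpleGraph.Reachable.symm h
  have : comp G S x ⊆ {x} := comp_sub rfl (by
    rintro u rfl w huw _ hw
    exact absurd (hx w huw) hw)
  exact this h1

section reductions
variable {G : SimpleGraph V} (hG : SubEmb G)
include hG

/-- A clique cut with at most two vertices is enough to embed. -/
lemma red_clique {a b x y : V} (hab : a = b ∨ G.Adj a b) (hx : x ≠ a ∧ x ≠ b) (hy : y ≠ a ∧ y ≠ b)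
    (hxy : y ∉ comp G {a, b} x) : Emb G.Adj := by
  refine red hG a b b {a, b} (by simp) fun v hv => ?_
  obtain ⟨t, ht, htv⟩ : ∃ t, (t ≠ a ∧ t ≠ b) ∧ t ∉ comp G {a, b} v := by
    by_cases h : x ∈ comp G {a, b} v
    · refine ⟨y, hy, fun h' => hxy ?_⟩
      rw [comp_eq h]
      exact h'
    · exact ⟨x, hx, h⟩
  refine ⟨t, id, by simp [ht], htv, fun _ _ => rfl, ?_⟩
  rintro u (rfl | rfl) w (rfl | rfl) huw
  · exact absurd rfl huw
  · exact Or.inl (hab.resolve_left huw)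
  · exact Or.inl (hab.resolve_left huw.symm).symm
  · exact absurd rfl huw

/-- The form of `red_clique` in which one side of the cut is a given set `D`. -/
lemma red_clique' {D : Set V} {a b x w : V} (hab : a = b ∨ G.Adj a b) (hx : x ≠ a ∧ x ≠ b)
    (hxD : x ∉ D) (hw : w ∈ D) (hwab : w ≠ a ∧ w ≠ b)
    (hD : ∀ d ∈ D, ∀ s, G.Adj d s → s ∈ D ∨ s = a ∨ s = b) : Emb G.Adj :=
  red_clique hG hab hwab hx fun h =>
    hxD ((comp_closed (S := {a, b}) fun d hd s hds => hD d hd s hds).1 hw h)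

/-- Reduction along a cut `{a, b, c}` with `c` adjacent to `a` and `b` (or `c = a`): a common neighbour `z`
of `a` and `b` on the other side is collapsed to `a`, which makes up for the missing edge `ab`. -/
lemma red_three {a b c : V} (hca : c = a ∨ G.Adj c a) (hcb : c = a ∨ G.Adj c b)
    (h : ∀ v, v ∉ ({a, b, c} : Set V) → ∃ z t, z ∉ comp G {a, b, c} v ∧ t ∉ comp G {a, b, c} v ∧
      z ∉ ({a, b, c} : Set V) ∧ t ∉ ({a, b, c} : Set V) ∧ z ≠ t ∧ G.Adj z a ∧ G.Adj z b) :
    Emb G.Adj := by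
  classical
  refine red hG a b c _ rfl fun v hv => ?_
  obtain ⟨z, t, hzC, htC, hzS, htS, hzt, hza, hzb⟩ := h v hv
  refine ⟨t, fun u => if u = z then a else u, htS, htC, ?_, ?_⟩
  · intro u hu
    beta_reduce
    rw [if_neg]
    rintro rfl
    exact hu.elim hzC hzS
  · have hz : (if z = z then a else z) = a := if_pos rfl
    rintro u (rfl | rfl | rfl) w (rfl | rfl | rfl) huw
    · exact absurd rfl huw
    · exact Or.inr (Or.inl ⟨z, hzt, hz, hza, hzb⟩)
    · exact Or.inl (hca.resolve_left huw.symm).symm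
    · exact Or.inr (Or.inr ⟨z, hzt, hz, hzb, hza⟩)
    · exact absurd rfl huw
    · rcases hcb with rfl | h'
      · exact Or.inr (Or.inr ⟨z, hzt, hz, hzb, hza⟩)
      · exact Or.inl h'.symm
    · exact Or.inl (hca.resolve_left huw)
    · rcases hcb with rfl | h'
      · exact Or.inr (Or.inl ⟨z, hzt, hz, hza, hzb⟩)
      · exact Or.inl h'
    · exact absurd rfl huw

/-- Reduction along an independent cut `{a, b, c}`: two common neighbours `z`, `z'` on the other side are
collapsed to `a` and `b`, and together they produce all three missing edges. -/
lemma red_four {a b c : V}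
    (h : ∀ v, v ∉ ({a, b, c} : Set V) → ∃ z z' t, z ∉ comp G {a, b, c} v ∧
      z' ∉ comp G {a, b, c} v ∧ t ∉ comp G {a, b, c} v ∧
      z ∉ ({a, b, c} : Set V) ∧ z' ∉ ({a, b, c} : Set V) ∧ t ∉ ({a, b, c} : Set V) ∧
      z ≠ z' ∧ z ≠ t ∧ z' ≠ t ∧ (∀ s ∈ ({a, b, c} : Set V), G.Adj z s ∧ G.Adj z' s)) :
    Emb G.Adj := by
  classical
  refine red hG a b c _ rfl fun v hv => ?_
  obtain ⟨z, z', t, hzC, hzC', htC, hzS, hzS', htS, hzz, hzt, hzt', hc⟩ := h v hv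
  have ha : a ∈ ({a, b, c} : Set V) := by simp
  have hb : b ∈ ({a, b, c} : Set V) := by simp
  have hcc : c ∈ ({a, b, c} : Set V) := by simp
  refine ⟨t, fun u => if u = z then a else if u = z' then b else u, htS, htC, ?_, ?_⟩
  · intro u hu
    beta_reduce
    rw [if_neg, if_neg]
    · rintro rfl
      exact hu.elim hzC' hzS'
    · rintro rfl
      exact hu.elim hzC hzS
  · have e1 : (if z = z then a else if z = z' then b else z) = a := if_pos rfl
    have e2 : (if z' = z then a else if z' = z' then b else z') = b := by
      rw [if_neg (Ne.symm hzz), if_pos rfl]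
    rintro u (rfl | rfl | rfl) w (rfl | rfl | rfl) huw
    · exact absurd rfl huw
    · exact Or.inr (Or.inl ⟨z, hzt, e1, (hc _ ha).1, (hc _ hb).1⟩)
    · exact Or.inr (Or.inl ⟨z, hzt, e1, (hc _ ha).1, (hc _ hcc).1⟩)
    · exact Or.inr (Or.inl ⟨z', hzt', e2, (hc _ hb).2, (hc _ ha).2⟩)
    · exact absurd rfl huw
    · exact Or.inr (Or.inl ⟨z', hzt', e2, (hc _ hb).2, (hc _ hcc).2⟩)
    · exact Or.inr (Or.inr ⟨z, hzt, e1, (hc _ hcc).1, (hc _ ha).1⟩)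
    · exact Or.inr (Or.inr ⟨z', hzt', e2, (hc _ hcc).2, (hc _ hb).2⟩)
    · exact absurd rfl huw

variable {c : V → Bool} (h : CB G c)
include h

/-- A connected set `D` attached to the path `a - s - b` can be cut off. -/
lemma red_attach3 {D : Set V} {a b s z0 t0 : V} (hD : Conn G D)
    (hN : ∀ d ∈ D, ∀ r, G.Adj d r → r ∈ D ∨ r ∈ ({a, b, s} : Set V))
    (hab : a ≠ b) (hsa : G.Adj s a) (hsb : G.Adj s b)
    (hdis : ∀ d ∈ D, d ∉ ({a, b, s} : Set V))
    (hA : ∃ d ∈ D, G.Adj a d) (hB : ∃ d ∈ D, G.Adj b d) (hS : ∃ d ∈ D, G.Adj s d)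
    (hz : z0 ∉ D) (hz' : z0 ∉ ({a, b, s} : Set V)) (ht : t0 ∉ D)
    (ht' : t0 ∉ ({a, b, s} : Set V)) (hzt : z0 ≠ t0) (hza : G.Adj z0 a) (hzb : G.Adj z0 b) :
    Emb G.Adj := by
  have hnab : ¬ G.Adj a b := by
    intro h3
    have e1 := h.col _ _ hza
    have e2 := h.col _ _ hzb
    have e3 := h.col _ _ h3
    revert e1 e2 e3
    cases c a <;> cases c b <;> cases c z0 <;> simp
  obtain ⟨z, hzD, h1, h2⟩ := h.common hD (Conn.singleton G z0) hab hnab hA hB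
    ⟨z0, rfl, hza.symm⟩ ⟨z0, rfl, hzb.symm⟩ (by
      rintro u hu w rfl
      exact ⟨fun e => hz (e ▸ hu), fun e => (hN u hu _ e).elim hz hz'⟩)
  obtain ⟨t, htD, hst⟩ := hS
  refine red_three hG (Or.inr hsa) (Or.inr hsb) fun v hv => ?_
  by_cases hvD : v ∈ D
  · have := (comp_closed hN).1 hvD
    exact ⟨z0, t0, fun e => hz (this e), fun e => ht (this e), hz', ht', hzt, hza, hzb⟩
  · have := (comp_closed hN).2 hvD
    refine ⟨z, t, this z hzD, this t htD, hdis z hzD, hdis t htD, ?_, h1, h2⟩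
    rintro rfl
    have e1 := h.col _ _ h1
    have e2 := h.col _ _ hst
    have e3 := h.col _ _ hsa
    revert e1 e2 e3
    cases c a <;> cases c s <;> cases c z <;> simp

/-- A connected set `D` with two elements attached to two nonadjacent vertices can be cut off. -/
lemma red_attach2 {D : Set V} {a b z0 t0 : V} (hD : Conn G D)
    (hN : ∀ d ∈ D, ∀ r, G.Adj d r → r ∈ D ∨ r ∈ ({a, b} : Set V))
    (hab : a ≠ b) (hdis : ∀ d ∈ D, d ∉ ({a, b} : Set V))
    (hA : ∃ d ∈ D, G.Adj a d) (hB : ∃ d ∈ D, G.Adj b d) (h2 : ∃ d ∈ D, ∃ d' ∈ D, d ≠ d')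
    (hz : z0 ∉ D) (hz' : z0 ∉ ({a, b} : Set V)) (ht : t0 ∉ D)
    (ht' : t0 ∉ ({a, b} : Set V)) (hzt : z0 ≠ t0) (hza : G.Adj z0 a) (hzb : G.Adj z0 b) :
    Emb G.Adj := by
  have hnab : ¬ G.Adj a b := by
    intro h3
    have e1 := h.col _ _ hza
    have e2 := h.col _ _ hzb
    have e3 := h.col _ _ h3
    revert e1 e2 e3
    cases c a <;> cases c b <;> cases c z0 <;> simp
  obtain ⟨z, hzD, h1, h1'⟩ := h.common hD (Conn.singleton G z0) hab hnab hA hB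
    ⟨z0, rfl, hza.symm⟩ ⟨z0, rfl, hzb.symm⟩ (by
      rintro u hu w rfl
      exact ⟨fun e => hz (e ▸ hu), fun e => (hN u hu _ e).elim hz hz'⟩)
  obtain ⟨t, htD, hst⟩ : ∃ t ∈ D, z ≠ t := by
    obtain ⟨d, hd, d', hd', hne⟩ := h2
    by_cases e : z = d
    · exact ⟨d', hd', e ▸ hne⟩
    · exact ⟨d, hd, e⟩
  have hset : ({a, b, a} : Set V) = {a, b} := by
    ext r
    simp only [Set.mem_insert_iff, Set.mem_singleton_iff]
    tauto
  refine red_three hG (c := a) (b := b) (Or.inl rfl) (Or.inl rfl) fun v hv => ?_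
  rw [hset] at hv ⊢
  by_cases hvD : v ∈ D
  · have := (comp_closed hN).1 hvD
    exact ⟨z0, t0, fun e => hz (this e), fun e => ht (this e), hz', ht', hzt, hza, hzb⟩
  · have := (comp_closed hN).2 hvD
    exact ⟨z, t, this z hzD, this t htD, hdis z hzD, hdis t htD, hst, h1, h1'⟩

end reductions

lemma Conn.induce {G : SimpleGraph V} {D : Set V} (hD : Conn G D) (hne : D.Nonempty) :
    (G.induce D).Connected := by
  have key : ∀ (a b : V) (p : (inn G D).Walk a b) (ha : a ∈ D) (hb : b ∈ D),
      (G.induce D).Reachable ⟨a, ha⟩ ⟨b, hb⟩ := by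
    intro a b p
    induction p with
    | nil => exact fun _ _ => SimpleGraph.Reachable.refl _
    | @cons a a' b h _ ih =>
      intro ha hb
      refine SimpleGraph.Reachable.trans ?_ (ih h.2.2 hb)
      exact SimpleGraph.Adj.reachable (show (G.induce D).Adj ⟨a, ha⟩ ⟨a', h.2.2⟩ from h.1)
  have : Nonempty D := hne.to_subtype
  refine ⟨fun u w => ?_⟩
  obtain ⟨p⟩ := hD u u.2 w w.2
  exact key _ _ p u.2 w.2

/-- `A` and `B` are disjoint and joined by an edge. -/
def Touch (G : SimpleGraph V) (A B : Set V) : Prop :=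
  (∀ a ∈ A, a ∉ B) ∧ ∃ a ∈ A, ∃ b ∈ B, G.Adj a b

/-- Five connected sets that touch pairwise form a `K₅` minor. -/
lemma k5_of {G : SimpleGraph V} (hK : K5Free G) {A B C D E : Set V} (cA : Conn G A) (cB : Conn G B)
    (cC : Conn G C) (cD : Conn G D) (cE : Conn G E) (hAB : Touch G A B) (hAC : Touch G A C)
    (hAD : Touch G A D) (hAE : Touch G A E) (hBC : Touch G B C) (hBD : Touch G B D)
    (hBE : Touch G B E) (hCD : Touch G C D) (hCE : Touch G C E) (hDE : Touch G D E) : False := by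
  apply hK
  have sym : ∀ {X Y : Set V}, Touch G X Y → Touch G Y X := by
    rintro X Y ⟨h1, a, ha, b, hb, hab⟩
    exact ⟨fun y hy hx => h1 y hx hy, b, hb, a, ha, hab.symm⟩
  have T : ∀ i j : Fin 5, i ≠ j → Touch G (![A, B, C, D, E] i) (![A, B, C, D, E] j) := by
    intro i j hij
    fin_cases i <;> fin_cases j <;> first | exact absurd rfl hij | assumption | (apply sym; assumption)
  have N : ∀ i : Fin 5, (![A, B, C, D, E] i).Nonempty := by
    intro i
    obtain ⟨j, hj⟩ := exists_ne i
    obtain ⟨-, a, ha, -⟩ := T i j hj.symm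
    exact ⟨a, ha⟩
  refine ⟨![A, B, C, D, E], N, ?_, ?_, ?_⟩
  · intro u v huv
    exact Set.disjoint_left.2 (T u v huv).1
  · intro i
    refine Conn.induce ?_ (N i)
    fin_cases i <;> assumption
  · intro u v huv
    exact (T u v huv).2

/-! ### Four vertices completely joined to three -/

/-- If two elements of `Z` are connected outside `U`, there is a connected set `P` outside `U`
adjacent to the first one and meeting `Z` in a single other element. -/
lemma tail_set {G : SimpleGraph V} {U Z : Set V} {a b : V} (hb : b ∈ Z) (hab : a ≠ b) (haU : a ∉ U)
    (hr : b ∈ comp G U a) :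
    ∃ z' ∈ Z, z' ≠ a ∧ ∃ P : Set V, Conn G P ∧ z' ∈ P ∧ (∀ x ∈ P, x ∉ U) ∧ P ⊆ comp G U a ∧
      (∀ x ∈ P, x ∈ Z → x = z') ∧ a ∉ P ∧ ∃ x ∈ P, G.Adj a x := by
  classical
  have Q : ∀ (a b : V) (p : (inn G Uᶜ).Walk a b), b ∈ Z → ∃ z' ∈ Z, ∃ P : Set V, Conn G P ∧ a ∈ P ∧
      z' ∈ P ∧ (∀ x ∈ P, x ∈ p.support) ∧ (∀ x ∈ P, x ∈ Z → x = z') := by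
    intro a b p
    induction p with
    | nil =>
      intro hb
      exact ⟨_, hb, {_}, Conn.singleton G _, rfl, rfl, by simp, by simp⟩
    | @cons a a' b h p ih =>
      intro hb
      by_cases ha : a ∈ Z
      · exact ⟨a, ha, {a}, Conn.singleton G _, rfl, rfl, by simp, by simp⟩
      · obtain ⟨z', hz', P, h1, h2, h3, h4, h5⟩ := ih hb
        refine ⟨z', hz', insert a P, h1.insert h2 h.1, Or.inl rfl, Or.inr h3, ?_, ?_⟩
        · rintro x (rfl | hx)
          · simp
          · simp [h4 x hx]
        · rintro x (rfl | hx) hxZ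
          · exact absurd hxZ ha
          · exact h5 x hx hxZ
  obtain ⟨p0⟩ := hr
  obtain ⟨p, hp⟩ := p0.toPath
  cases p with
  | nil => exact absurd rfl hab
  | @cons _ a' _ h p =>
    rw [SimpleGraph.Walk.cons_isPath_iff] at hp
    obtain ⟨z', hz', P, h1, h2, h3, h4, h5⟩ := Q _ _ p hb
    have haP : a ∉ P := fun e => hp.2 (h4 _ e)
    have hsub : P ⊆ comp G U a := fun x hx =>
      SimpleGraph.Reachable.trans (SimpleGraph.Adj.reachable h) ⟨p.takeUntil x (h4 x hx)⟩
    exact ⟨z', hz', fun e => haP (e ▸ h3), P, h1, h3, fun x hx => comp_not_mem haU (hsub hx), hsub,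
      h5, haP, a', h2, h.1⟩

/-- Let `Z` be a set of common neighbours of `u1, u2, u3`.  If two elements of `Z` lie in the same component
after deleting `u1, u2, u3`, then `{u3, p}`, `{u1, q}`, `{u2}`, `{a}` and a path from `a` towards
another element of `Z` are the branch sets of a `K₅` minor. -/
lemma k34_reach {G : SimpleGraph V} (hK : K5Free G) {u1 u2 u3 : V} (h12 : u1 ≠ u2) (h13 : u1 ≠ u3)
    (h23 : u2 ≠ u3) {Z : Set V} (hZ : ∀ z ∈ Z, G.Adj z u1 ∧ G.Adj z u2 ∧ G.Adj z u3) {a b : V}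
    (ha : a ∈ Z) (hb : b ∈ Z) (hab : a ≠ b) (hr : b ∈ comp G {u1, u2, u3} a)
    (hp : ∀ z' ∈ Z, z' ≠ a → ∃ p q, p ≠ q ∧ p ≠ a ∧ q ≠ a ∧ G.Adj p u1 ∧ G.Adj p u2 ∧ G.Adj p u3 ∧
      G.Adj q u1 ∧ G.Adj q u2 ∧ q ≠ u3 ∧ (p ∈ Z ∧ p ≠ z' ∨ p ∉ comp G {u1, u2, u3} a) ∧
      (q ∈ Z ∧ q ≠ z' ∨ q ∉ comp G {u1, u2, u3} a)) : False := by
  obtain ⟨a1, a2, a3⟩ := hZ a ha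
  have haU : a ∉ ({u1, u2, u3} : Set V) := by
    simp [a1.ne, a2.ne, a3.ne]
  obtain ⟨z', hz', hza, P, h1, h2, h3, h4, h5, h6, x, hx, hax⟩ := tail_set hb hab haU hr
  obtain ⟨p, q, hpq, hpa, hqa, p1, p2, p3, q1, q2, q3, hpP, hqP⟩ := hp z' hz' hza
  obtain ⟨z1, z2, z3⟩ := hZ z' hz'
  have hpP' : p ∉ P := fun e => hpP.elim (fun e' => e'.2 (h5 p e e'.1)) fun e' => e' (h4 e)
  have hqP' : q ∉ P := fun e => hqP.elim (fun e' => e'.2 (h5 q e e'.1)) fun e' => e' (h4 e)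
  have u1P : u1 ∉ P := fun e => h3 _ e (by simp)
  have u2P : u2 ∉ P := fun e => h3 _ e (by simp)
  have u3P : u3 ∉ P := fun e => h3 _ e (by simp)
  refine k5_of hK (A := {u3, p}) (B := {u1, q}) (C := {u2}) (D := {a}) (E := P)
    (Conn.pair p3.symm) (Conn.pair q1.symm) (Conn.singleton G _) (Conn.singleton G _) h1
    ⟨?_, p, by simp, u1, by simp, p1⟩ ⟨?_, p, by simp, u2, by simp, p2⟩
    ⟨?_, u3, by simp, a, by simp, a3.symm⟩ ⟨?_, u3, by simp, z', h2, z3.symm⟩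
    ⟨?_, q, by simp, u2, by simp, q2⟩ ⟨?_, u1, by simp, a, by simp, a1.symm⟩
    ⟨?_, u1, by simp, z', h2, z1.symm⟩ ⟨?_, u2, by simp, a, by simp, a2.symm⟩
    ⟨?_, u2, by simp, z', h2, z2.symm⟩ ⟨?_, a, by simp, x, hx, hax⟩
  · rintro y (rfl | rfl)
    · simp [h13.symm, q3.symm]
    · simp [p1.ne, hpq]
  · rintro y (rfl | rfl)
    · simp [h23.symm]
    · simp [p2.ne]
  · rintro y (rfl | rfl)
    · simp [a3.ne.symm]
    · simp [hpa]
  · rintro y (rfl | rfl) <;> assumption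
  · rintro y (rfl | rfl)
    · simp [h12]
    · simp [q2.ne]
  · rintro y (rfl | rfl)
    · simp [a1.ne.symm]
    · simp [hqa]
  · rintro y (rfl | rfl) <;> assumption
  · rintro y rfl
    simp [a2.ne.symm]
  · rintro y rfl
    assumption
  · rintro y rfl
    assumption

/-- A `K_{3,4}` subgraph makes the graph reducible: its four vertices on the larger side lie in different
components after deleting the smaller side, so outside each component there are
three of them: two to be collapsed and one to be deleted. -/
lemma k34 {G : SimpleGraph V} (hG : SubEmb G) (hK : K5Free G) {u1 u2 u3 z1 z2 z3 z4 : V}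
    (h12 : u1 ≠ u2) (h13 : u1 ≠ u3) (h23 : u2 ≠ u3)
    (e12 : z1 ≠ z2) (e13 : z1 ≠ z3) (e14 : z1 ≠ z4) (e23 : z2 ≠ z3) (e24 : z2 ≠ z4) (e34 : z3 ≠ z4)
    (hZ : ∀ z ∈ ({z1, z2, z3, z4} : Set V), G.Adj z u1 ∧ G.Adj z u2 ∧ G.Adj z u3) : Emb G.Adj := by
  by_contra hE
  set Z : Set V := {z1, z2, z3, z4} with hZd
  have m1 : z1 ∈ Z := by simp [hZd]
  have m2 : z2 ∈ Z := by simp [hZd]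
  have m3 : z3 ∈ Z := by simp [hZd]
  have m4 : z4 ∈ Z := by simp [hZd]
  have two : ∀ a ∈ Z, ∀ z' ∈ Z, z' ≠ a → ∃ p ∈ Z, ∃ q ∈ Z, p ≠ q ∧ p ≠ a ∧ q ≠ a ∧ p ≠ z' ∧
      q ≠ z' := by
    rintro a (rfl | rfl | rfl | rfl) z' (rfl | rfl | rfl | rfl) hne
    · exact absurd rfl hne
    · exact ⟨z3, m3, z4, m4, e34, e13.symm, e14.symm, e23.symm, e24.symm⟩
    · exact ⟨z2, m2, z4, m4, e24, e12.symm, e14.symm, e23, e34.symm⟩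
    · exact ⟨z2, m2, z3, m3, e23, e12.symm, e13.symm, e24, e34⟩
    · exact ⟨z3, m3, z4, m4, e34, e23.symm, e24.symm, e13.symm, e14.symm⟩
    · exact absurd rfl hne
    · exact ⟨z1, m1, z4, m4, e14, e12, e24.symm, e13, e34.symm⟩
    · exact ⟨z1, m1, z3, m3, e13, e12, e23.symm, e14, e34⟩
    · exact ⟨z2, m2, z4, m4, e24, e23, e34.symm, e12.symm, e14.symm⟩
    · exact ⟨z1, m1, z4, m4, e14, e13, e34.symm, e12, e24.symm⟩
    · exact absurd rfl hne
    · exact ⟨z1, m1, z2, m2, e12, e13, e23, e14, e24⟩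
    · exact ⟨z2, m2, z3, m3, e23, e24, e34, e12.symm, e13.symm⟩
    · exact ⟨z1, m1, z3, m3, e13, e14, e34, e12, e23.symm⟩
    · exact ⟨z1, m1, z2, m2, e12, e14, e24, e13, e23⟩
    · exact absurd rfl hne
  have key : ∀ v, ∀ a ∈ Z, ∀ b ∈ Z, a ≠ b → a ∈ comp G {u1, u2, u3} v →
      b ∉ comp G {u1, u2, u3} v := by
    intro v a ha b hb hab hav hbv
    rw [← comp_eq hav] at hbv
    refine k34_reach hK h12 h13 h23 hZ ha hb hab hbv fun z' hz' hne => ?_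
    obtain ⟨p, hp, q, hq, hpq, hpa, hqa, hpz, hqz⟩ := two a ha z' hz' hne
    obtain ⟨p1, p2, p3⟩ := hZ p hp
    obtain ⟨q1, q2, q3⟩ := hZ q hq
    exact ⟨p, q, hpq, hpa, hqa, p1, p2, p3, q1, q2, q3.ne, Or.inl ⟨hp, hpz⟩, Or.inl ⟨hq, hqz⟩⟩
  have hU : ∀ z ∈ Z, z ∉ ({u1, u2, u3} : Set V) := by
    intro z hz
    obtain ⟨p1, p2, p3⟩ := hZ z hz
    simp [p1.ne, p2.ne, p3.ne]
  have hall : ∀ z ∈ Z, ∀ s ∈ ({u1, u2, u3} : Set V), G.Adj z s := by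
    rintro z hz s (rfl | rfl | rfl)
    exacts [(hZ z hz).1, (hZ z hz).2.1, (hZ z hz).2.2]
  refine hE (red_four hG (a := u1) (b := u2) (c := u3) fun v hv => ?_)
  have fin : ∀ a ∈ Z, ∀ b ∈ Z, ∀ t ∈ Z, a ≠ b → a ≠ t → b ≠ t → a ∉ comp G {u1, u2, u3} v →
      b ∉ comp G {u1, u2, u3} v → t ∉ comp G {u1, u2, u3} v →
      ∃ z z' t, z ∉ comp G {u1, u2, u3} v ∧
      z' ∉ comp G {u1, u2, u3} v ∧ t ∉ comp G {u1, u2, u3} v ∧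
      z ∉ ({u1, u2, u3} : Set V) ∧ z' ∉ ({u1, u2, u3} : Set V) ∧ t ∉ ({u1, u2, u3} : Set V) ∧
      z ≠ z' ∧ z ≠ t ∧ z' ≠ t ∧ (∀ s ∈ ({u1, u2, u3} : Set V), G.Adj z s ∧ G.Adj z' s) :=
    fun a ha b hb t ht h1 h2 h3 h4 h5 h6 => ⟨a, b, t, h4, h5, h6, hU a ha, hU b hb, hU t ht, h1,
      h2, h3, fun s hs => ⟨hall a ha s hs, hall b hb s hs⟩⟩
  by_cases c1 : z1 ∈ comp G {u1, u2, u3} v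
  · exact fin z2 m2 z3 m3 z4 m4 e23 e24 e34 (key v _ m1 _ m2 e12 c1) (key v _ m1 _ m3 e13 c1)
      (key v _ m1 _ m4 e14 c1)
  by_cases c2 : z2 ∈ comp G {u1, u2, u3} v
  · exact fin z1 m1 z3 m3 z4 m4 e13 e14 e34 c1 (key v _ m2 _ m3 e23 c2) (key v _ m2 _ m4 e24 c2)
  by_cases c3 : z3 ∈ comp G {u1, u2, u3} v
  · exact fin z1 m1 z2 m2 z4 m4 e12 e14 e24 c1 c2 (key v _ m3 _ m4 e34 c3)
  exact fin z1 m1 z2 m2 z3 m3 e12 e13 e23 c1 c2 c3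

/-! ### Graphs without induced cycles of length at least six: the reduction step -/

lemma comp_nb {G : SimpleGraph V} {S : Set V} {w d r : V} (hw : w ∉ S) (hd : d ∈ comp G S w)
    (hr : G.Adj d r) : r ∈ comp G S w ∨ r ∈ S := by
  by_cases h : r ∈ S
  · exact Or.inr h
  · exact Or.inl (mem_comp_of_adj hd (comp_not_mem hw hd) h hr)

lemma CB.no_tri {G : SimpleGraph V} {c : V → Bool} (h : CB G c) {a b d : V} (h1 : G.Adj a b)
    (h2 : G.Adj b d) (h3 : G.Adj a d) : False := by
  have e1 := h.col _ _ h1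
  have e2 := h.col _ _ h2
  have e3 := h.col _ _ h3
  revert e1 e2 e3
  cases c a <;> cases c b <;> cases c d <;> simp

section core
variable {G : SimpleGraph V} {c : V → Bool} (hG : SubEmb G)
include hG

/-- The case where one end `x` of the bisimplicial edge has no further neighbour. -/
lemma core_empty {x y : V} (hxy : G.Adj x y) (hx : ∀ p, G.Adj x p → p = y) : Emb G.Adj := by
  by_cases hw : ∃ w, w ≠ x ∧ w ≠ y
  · obtain ⟨w, hwx, hwy⟩ := hw
    refine red_clique hG (a := y) (b := y) (x := x) (y := w) (Or.inl rfl) ⟨hxy.ne, hxy.ne⟩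
      ⟨hwy, hwy⟩ fun hmem => ?_
    have : comp G {y, y} x ⊆ {x} := comp_sub rfl (by
      rintro u rfl v huv _ hv
      simp [hx v huv] at hv)
    exact hwx (this hmem)
  · push Not at hw
    refine emb_of_cover y y y fun u v huv => ?_
    by_cases hu : u = x
    · subst hu
      right
      simp [hx v huv]
    · left
      simp [hw u hu]

variable (hK : K5Free G) (h : CB G c)
include hK h

omit h in
/-- The case where the ends of the bisimplicial edge have at least three and two further neighbours. -/
lemma core_34 {x y p1 p2 p3 q1 q2 : V} (hxy : G.Adj x y)
    (hb : ∀ p q, G.Adj x p → G.Adj y q → G.Adj p q)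
    (x1 : G.Adj x p1) (x2 : G.Adj x p2) (x3 : G.Adj x p3) (y1 : G.Adj y q1) (y2 : G.Adj y q2)
    (h1 : p1 ≠ y) (h2 : p2 ≠ y) (h3 : p3 ≠ y) (h12 : p1 ≠ p2) (h13 : p1 ≠ p3) (h23 : p2 ≠ p3)
    (g1 : q1 ≠ x) (g2 : q2 ≠ x) (g12 : q1 ≠ q2) : Emb G.Adj := by
  refine k34 hG hK (u1 := x) (u2 := q1) (u3 := q2) (z1 := y) (z2 := p1) (z3 := p2) (z4 := p3)
    g1.symm g2.symm g12 h1.symm h2.symm h3.symm h12 h13 h23 ?_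
  rintro z (rfl | rfl | rfl | rfl)
  · exact ⟨hxy.symm, y1, y2⟩
  · exact ⟨x1.symm, hb _ _ x1 y1, hb _ _ x1 y2⟩
  · exact ⟨x2.symm, hb _ _ x2 y1, hb _ _ x2 y2⟩
  · exact ⟨x3.symm, hb _ _ x3 y1, hb _ _ x3 y2⟩

/-- A connected piece outside a `K_{3,3}` that is attached to both `p1` and `p2` is a single vertex
with no further neighbours. -/
lemma core_type (hE : ¬ Emb G.Adj) {x y p1 p2 q1 q2 w : V} {D : Set V} (hD : Conn G D) (hw : w ∈ D)
    (hxy : G.Adj x y) (x1 : G.Adj x p1) (x2 : G.Adj x p2) (y1 : G.Adj y q1) (y2 : G.Adj y q2)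
    (e11 : G.Adj p1 q1) (e12 : G.Adj p1 q2) (e21 : G.Adj p2 q1) (e22 : G.Adj p2 q2)
    (h1 : p1 ≠ y) (h2 : p2 ≠ y) (h12 : p1 ≠ p2) (g1 : q1 ≠ x) (g2 : q2 ≠ x) (g12 : q1 ≠ q2)
    (hdis : ∀ d ∈ D, d ≠ x ∧ d ≠ y ∧ d ≠ p1 ∧ d ≠ p2 ∧ d ≠ q1 ∧ d ≠ q2)
    (hN : ∀ d ∈ D, ∀ r, G.Adj d r → r ∈ D ∨ r = p1 ∨ r = p2 ∨ r = q1 ∨ r = q2)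
    (a1 : ∃ d ∈ D, G.Adj p1 d) (a2 : ∃ d ∈ D, G.Adj p2 d) :
    (∀ d ∈ D, ¬ G.Adj q1 d) ∧ (∀ d ∈ D, ¬ G.Adj q2 d) ∧ ∀ d ∈ D, d = w := by
  have nx := x1.ne
  have nx2 := x2.ne
  have ny := y1.ne
  have ny2 := y2.ne
  have n11 := e11.ne
  have n12 := e12.ne
  have n21 := e21.ne
  have n22 := e22.ne
  have nxy := hxy.ne
  have xD : x ∉ D := fun e => (hdis _ e).1 rfl
  have yD : y ∉ D := fun e => (hdis _ e).2.1 rfl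
  have p1D : p1 ∉ D := fun e => (hdis _ e).2.2.1 rfl
  have p2D : p2 ∉ D := fun e => (hdis _ e).2.2.2.1 rfl
  have q1D : q1 ∉ D := fun e => (hdis _ e).2.2.2.2.1 rfl
  have q2D : q2 ∉ D := fun e => (hdis _ e).2.2.2.2.2 rfl
  have step : ∀ q q', G.Adj y q → G.Adj p1 q → G.Adj p2 q → q ≠ x → q ∉ D →
      (∀ d ∈ D, ∀ r, G.Adj d r → r ∈ D ∨ r = p1 ∨ r = p2 ∨ r = q ∨ r = q') →
      (∃ d ∈ D, G.Adj q d) → (∀ d ∈ D, ¬ G.Adj q' d) → False := by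
    intro q q' hyq hp1 hp2 hqx hqD hN hA hB
    refine hE (red_attach3 hG h hD (a := p1) (b := p2) (s := q) (z0 := x) (t0 := y) ?_ h12 hp1.symm
      hp2.symm ?_ a1 a2 hA xD ?_ yD ?_ nxy x1 x2)
    · intro d hd r hr
      rcases hN d hd r hr with e | e | e | e | e
      · exact Or.inl e
      · simp [e]
      · simp [e]
      · simp [e]
      · exact absurd (e ▸ hr.symm) (hB d hd)
    · intro d hd
      have := hdis d hd
      simp only [Set.mem_insert_iff, Set.mem_singleton_iff, not_or]
      exact ⟨this.2.2.1, this.2.2.2.1, fun e => hqD (e ▸ hd)⟩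
    · simp [nx, nx2, hqx.symm]
    · simp [h1.symm, h2.symm, hyq.ne]
  have main : (∀ d ∈ D, ¬ G.Adj q1 d) ∧ (∀ d ∈ D, ¬ G.Adj q2 d) := by
    by_cases b1 : ∃ d ∈ D, G.Adj q1 d
    · exfalso
      by_cases b2 : ∃ d ∈ D, G.Adj q2 d
      · obtain ⟨d1, hd1, b1⟩ := b1
        obtain ⟨d2, hd2, b2⟩ := b2
        obtain ⟨d3, hd3, a1⟩ := a1
        obtain ⟨d4, hd4, a2⟩ := a2
        refine k5_of hK (A := {p1}) (B := {q1}) (C := {y, q2}) (D := {p2, x}) (E := D)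
          (Conn.singleton G _) (Conn.singleton G _) (Conn.pair y2) (Conn.pair x2.symm) hD
          ⟨?_, p1, by simp, q1, by simp, e11⟩ ⟨?_, p1, by simp, q2, by simp, e12⟩
          ⟨?_, p1, by simp, x, by simp, x1.symm⟩ ⟨?_, p1, by simp, d3, hd3, a1⟩
          ⟨?_, q1, by simp, y, by simp, y1.symm⟩ ⟨?_, q1, by simp, p2, by simp, e21.symm⟩
          ⟨?_, q1, by simp, d1, hd1, b1⟩ ⟨?_, y, by simp, x, by simp, hxy.symm⟩
          ⟨?_, q2, by simp, d2, hd2, b2⟩ ⟨?_, p2, by simp, d4, hd4, a2⟩ <;>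
        · simp only [Set.mem_insert_iff, Set.mem_singleton_iff]
          grind
      · push Not at b2
        exact step q1 q2 y1 e11 e21 g1 q1D hN b1 b2
    · by_cases b2 : ∃ d ∈ D, G.Adj q2 d
      · push Not at b1
        exact (step q2 q1 y2 e12 e22 g2 q2D (fun d hd r hr => by
          have := hN d hd r hr
          tauto) b2 b1).elim
      · push Not at b1 b2
        exact ⟨b1, b2⟩
  refine ⟨main.1, main.2, fun d hd => ?_⟩
  by_contra hdw
  refine hE (red_attach2 hG h hD (a := p1) (b := p2) (z0 := x) (t0 := y) ?_ h12 ?_ a1 a2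
    ⟨d, hd, w, hw, hdw⟩ xD ?_ yD ?_ nxy x1 x2)
  · intro d hd r hr
    rcases hN d hd r hr with e | e | e | e | e
    · exact Or.inl e
    · simp [e]
    · simp [e]
    · exact absurd (e ▸ hr.symm) (main.1 d hd)
    · exact absurd (e ▸ hr.symm) (main.2 d hd)
  · intro d hd
    have := hdis d hd
    simp [this]
  · simp [nx, nx2]
  · simp [h1.symm, h2.symm]

omit hG hK h in
/-- If every vertex outside the `K_{3,3}` sees only `p1` and `p2`, the vertices `y, p1, p2` cover all edges. -/
lemma core_22_cover (h : CB G c) {x y p1 p2 q1 q2 : V} (hxy : G.Adj x y)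
    (hx : ∀ r, G.Adj x r → r = y ∨ r = p1 ∨ r = p2) (y1 : G.Adj y q1) (y2 : G.Adj y q2)
    (hW : ∀ w, w ≠ x → w ≠ y → w ≠ p1 → w ≠ p2 → w ≠ q1 → w ≠ q2 →
      ∀ r, G.Adj w r → r = p1 ∨ r = p2) : Emb G.Adj := by
  refine emb_of_cover y p1 p2 fun u v huv => ?_
  simp only [Set.mem_insert_iff, Set.mem_singleton_iff]
  by_contra hcon
  push Not at hcon
  obtain ⟨⟨u1, u2, u3⟩, v1, v2, v3⟩ := hcon
  have hux : u ≠ x := by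
    rintro rfl
    have := hx v huv
    tauto
  have hvx : v ≠ x := by
    rintro rfl
    have := hx u huv.symm
    tauto
  have hu : u = q1 ∨ u = q2 := by
    by_contra hcon
    push Not at hcon
    have := hW u hux u1 u2 u3 hcon.1 hcon.2 v huv
    tauto
  have hv : v = q1 ∨ v = q2 := by
    by_contra hcon
    push Not at hcon
    have := hW v hvx v1 v2 v3 hcon.1 hcon.2 u huv.symm
    tauto
  have hyu : G.Adj y u := by rcases hu with rfl | rfl <;> assumption
  have hyv : G.Adj y v := by rcases hv with rfl | rfl <;> assumption
  exact h.no_tri hyu huv hyv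

/-- The case where both ends of the bisimplicial edge have exactly two further neighbours. -/
lemma core_22 {x y p1 p2 q1 q2 : V} (hxy : G.Adj x y)
    (hb : ∀ p q, G.Adj x p → G.Adj y q → G.Adj p q)
    (x1 : G.Adj x p1) (x2 : G.Adj x p2) (y1 : G.Adj y q1) (y2 : G.Adj y q2)
    (h1 : p1 ≠ y) (h2 : p2 ≠ y) (h12 : p1 ≠ p2) (g1 : q1 ≠ x) (g2 : q2 ≠ x) (g12 : q1 ≠ q2)
    (hx : ∀ r, G.Adj x r → r = y ∨ r = p1 ∨ r = p2)
    (hy : ∀ r, G.Adj y r → r = x ∨ r = q1 ∨ r = q2) : Emb G.Adj := by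
  by_contra hE
  have e11 := hb _ _ x1 y1
  have e12 := hb _ _ x1 y2
  have e21 := hb _ _ x2 y1
  have e22 := hb _ _ x2 y2
  let D : V → Set V := fun w => comp G {p1, p2, q1, q2} w
  have fact : ∀ w, (w ≠ x ∧ w ≠ y ∧ w ≠ p1 ∧ w ≠ p2 ∧ w ≠ q1 ∧ w ≠ q2) → w ∈ D w ∧
      Conn G (D w) ∧
      (∀ d ∈ D w, d ≠ x ∧ d ≠ y ∧ d ≠ p1 ∧ d ≠ p2 ∧ d ≠ q1 ∧ d ≠ q2) ∧
      (∀ d ∈ D w, ∀ r, G.Adj d r → r ∈ D w ∨ r = p1 ∨ r = p2 ∨ r = q1 ∨ r = q2) := by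
    intro w hw
    have hwS : w ∉ ({p1, p2, q1, q2} : Set V) := by simp [hw]
    refine ⟨mem_comp_self G _ w, Conn.comp _ w, ?_, fun d hd r hr => by
      simpa using comp_nb hwS hd hr⟩
    intro d hd
    have hdS := comp_not_mem hwS hd
    have hxy' : D w ⊆ {x, y}ᶜ := comp_sub (by simp [hw]) (by
      intro u hu v huv huS _
      rw [Set.mem_compl_iff]
      intro hv
      simp only [Set.mem_insert_iff, Set.mem_singleton_iff, not_or, Set.mem_compl_iff] at hu huS hv
      rcases hv with rfl | rfl
      · have := hx _ huv.symm
        tauto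
      · have := hy _ huv.symm
        tauto)
    have := hxy' hd
    simp only [Set.mem_insert_iff, Set.mem_singleton_iff, not_or, Set.mem_compl_iff] at this hdS
    tauto
  have typ : ∀ w, (w ≠ x ∧ w ≠ y ∧ w ≠ p1 ∧ w ≠ p2 ∧ w ≠ q1 ∧ w ≠ q2) →
      ((∀ r, G.Adj w r → r = p1 ∨ r = p2) ∧ G.Adj w p1 ∧ G.Adj w p2) ∨
      ((∀ r, G.Adj w r → r = q1 ∨ r = q2) ∧ G.Adj w q1 ∧ G.Adj w q2) := by
    intro w hw
    obtain ⟨hwD, hD, hdis, hN⟩ := fact w hw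
    have clq : ∀ p p' q q', G.Adj p' q' → x ≠ p' → x ≠ q' → w ≠ p' → w ≠ q' →
        (∀ d ∈ D w, ∀ r, G.Adj d r → r ∈ D w ∨ r = p ∨ r = p' ∨ r = q ∨ r = q') →
        (∃ d ∈ D w, G.Adj p d) ∨ (∃ d ∈ D w, G.Adj q d) := by
      intro p p' q q' hpq n1 n2 n3 n4 hN
      by_contra hcon
      push Not at hcon
      refine hE (red_clique' hG (D := D w) (a := p') (b := q') (x := x) (w := w) (Or.inr hpq)
        ⟨n1, n2⟩ (fun e => (hdis _ e).1 rfl) hwD ⟨n3, n4⟩ fun d hd r hr => ?_)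
      rcases hN d hd r hr with e | e | e | e | e
      · exact Or.inl e
      · exact absurd (e ▸ hr.symm) (hcon.1 d hd)
      · simp [e]
      · exact absurd (e ▸ hr.symm) (hcon.2 d hd)
      · simp [e]
    have c11 := clq p1 p2 q1 q2 e22 x2.ne g2.symm hw.2.2.2.1 hw.2.2.2.2.2 (fun d hd r hr => by
      rcases hN d hd r hr with e | e | e | e | e <;> simp [e])
    have c12 := clq p1 p2 q2 q1 e21 x2.ne g1.symm hw.2.2.2.1 hw.2.2.2.2.1 (fun d hd r hr => by
      rcases hN d hd r hr with e | e | e | e | e <;> simp [e])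
    have c21 := clq p2 p1 q1 q2 e12 x1.ne g2.symm hw.2.2.1 hw.2.2.2.2.2 (fun d hd r hr => by
      rcases hN d hd r hr with e | e | e | e | e <;> simp [e])
    have c22 := clq p2 p1 q2 q1 e11 x1.ne g1.symm hw.2.2.1 hw.2.2.2.2.1 (fun d hd r hr => by
      rcases hN d hd r hr with e | e | e | e | e <;> simp [e])
    have : ((∃ d ∈ D w, G.Adj p1 d) ∧ (∃ d ∈ D w, G.Adj p2 d)) ∨
      ((∃ d ∈ D w, G.Adj q1 d) ∧ (∃ d ∈ D w, G.Adj q2 d)) := by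
      by_cases A1 : ∃ d ∈ D w, G.Adj p1 d
      · by_cases A2 : ∃ d ∈ D w, G.Adj p2 d
        · exact Or.inl ⟨A1, A2⟩
        · exact Or.inr ⟨c21.resolve_left A2, c22.resolve_left A2⟩
      · exact Or.inr ⟨c11.resolve_left A1, c12.resolve_left A1⟩
    rcases this with ⟨a1, a2⟩ | ⟨a1, a2⟩
    · obtain ⟨t1, t2, t3⟩ := core_type hG hK h hE hD hwD hxy x1 x2 y1 y2 e11 e12 e21 e22 h1 h2 h12 g1 g2 g12 hdis hN a1 a2
      refine Or.inl ⟨fun r hr => ?_, ?_, ?_⟩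
      · rcases hN w hwD r hr with e | e | e | e | e
        · exact absurd (t3 r e).symm hr.ne
        · exact Or.inl e
        · exact Or.inr e
        · exact absurd (e ▸ hr.symm) (t1 w hwD)
        · exact absurd (e ▸ hr.symm) (t2 w hwD)
      · obtain ⟨d, hd, a⟩ := a1
        exact (t3 d hd ▸ a).symm
      · obtain ⟨d, hd, a⟩ := a2
        exact (t3 d hd ▸ a).symm
    · obtain ⟨t1, t2, t3⟩ := core_type hG hK h hE hD hwD hxy.symm y1 y2 x1 x2 e11.symm e21.symm
        e12.symm e22.symm g1 g2 g12 h1 h2 h12 (fun d hd => by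
          obtain ⟨m1, m2, m3, m4, m5, m6⟩ := hdis d hd
          exact ⟨m2, m1, m5, m6, m3, m4⟩) (fun d hd r hr => by
          rcases hN d hd r hr with e | e | e | e | e <;> simp [e]) a1 a2
      refine Or.inr ⟨fun r hr => ?_, ?_, ?_⟩
      · rcases hN w hwD r hr with e | e | e | e | e
        · exact absurd (t3 r e).symm hr.ne
        · exact absurd (e ▸ hr.symm) (t1 w hwD)
        · exact absurd (e ▸ hr.symm) (t2 w hwD)
        · exact Or.inl e
        · exact Or.inr e
      · obtain ⟨d, hd, a⟩ := a1
        exact (t3 d hd ▸ a).symm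
      · obtain ⟨d, hd, a⟩ := a2
        exact (t3 d hd ▸ a).symm
  by_cases hall : ∀ w, (w ≠ x ∧ w ≠ y ∧ w ≠ p1 ∧ w ≠ p2 ∧ w ≠ q1 ∧ w ≠ q2) →
      (∀ r, G.Adj w r → r = p1 ∨ r = p2)
  · exact hE (core_22_cover h hxy hx y1 y2 fun w a1 a2 a3 a4 a5 a6 =>
      hall w ⟨a1, a2, a3, a4, a5, a6⟩)
  by_cases hall' : ∀ w, (w ≠ x ∧ w ≠ y ∧ w ≠ p1 ∧ w ≠ p2 ∧ w ≠ q1 ∧ w ≠ q2) →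
      (∀ r, G.Adj w r → r = q1 ∨ r = q2)
  · exact hE (core_22_cover h hxy.symm hy x1 x2 fun w a1 a2 a3 a4 a5 a6 =>
      hall' w ⟨a2, a1, a5, a6, a3, a4⟩)
  push Not at hall hall'
  obtain ⟨w', hw', r, hr, hr1⟩ := hall
  obtain ⟨w, hw, r', hr', hr1'⟩ := hall'
  obtain ⟨-, s1, s2⟩ := (typ w hw).resolve_right fun e => by
    exact (e.1 r' hr').elim hr1'.1 hr1'.2
  obtain ⟨s0, s1', s2'⟩ := (typ w' hw').resolve_left fun e => by
    exact (e.1 r hr).elim hr1.1 hr1.2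
  have hww : w ≠ w' := by
    rintro rfl
    have := s0 _ s1
    rcases this with e | e
    · exact e11.ne e
    · exact e12.ne e
  have nx := x1.ne
  have nx2 := x2.ne
  have ny := y1.ne
  have ny2 := y2.ne
  have n11 := e11.ne
  have n12 := e12.ne
  have n21 := e21.ne
  have n22 := e22.ne
  have nxy := hxy.ne
  refine k5_of hK (A := {p1, w}) (B := {p2}) (C := {q1, w'}) (D := {q2}) (E := {x, y})
    (Conn.pair s1.symm) (Conn.singleton G _) (Conn.pair s1'.symm) (Conn.singleton G _) (Conn.pair hxy)
    ⟨?_, w, by simp, p2, by simp, s2⟩ ⟨?_, p1, by simp, q1, by simp, e11⟩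
    ⟨?_, p1, by simp, q2, by simp, e12⟩ ⟨?_, p1, by simp, x, by simp, x1.symm⟩
    ⟨?_, p2, by simp, q1, by simp, e21⟩ ⟨?_, p2, by simp, q2, by simp, e22⟩
    ⟨?_, p2, by simp, x, by simp, x2.symm⟩ ⟨?_, w', by simp, q2, by simp, s2'⟩
    ⟨?_, q1, by simp, y, by simp, y1.symm⟩ ⟨?_, q2, by simp, y, by simp, y2.symm⟩ <;>
  · simp only [Set.mem_insert_iff, Set.mem_singleton_iff]
    grind

end core

/-! ### An end of the bisimplicial edge with one further neighbour -/

section core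
variable {G : SimpleGraph V} {c : V → Bool} (hG : SubEmb G)
include hG

/-- The case where both ends of the edge `xy` have exactly one further neighbour. -/
lemma core_11 {x y u q : V} (hxu : G.Adj x u)
    (hyq : G.Adj y q) (hu : u ≠ y) (hq : q ≠ x) (huq : G.Adj u q)
    (hx : ∀ r, G.Adj x r → r = y ∨ r = u) (hy : ∀ r, G.Adj y r → r = x ∨ r = q) : Emb G.Adj := by
  by_cases hw : ∃ w, w ≠ x ∧ w ≠ y ∧ w ≠ u ∧ w ≠ q
  · obtain ⟨w, w1, w2, w3, w4⟩ := hw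
    refine red_clique hG (a := u) (b := q) (x := x) (y := w) (Or.inr huq) ⟨hxu.ne, hq.symm⟩
      ⟨w3, w4⟩ fun hmem => ?_
    have : comp G {u, q} x ⊆ {x, y} := comp_sub (by simp) (by
      rintro s (rfl | rfl) v hsv _ hv
      · have := hx v hsv
        simp only [Set.mem_insert_iff, Set.mem_singleton_iff] at hv ⊢
        tauto
      · have := hy v hsv
        simp only [Set.mem_insert_iff, Set.mem_singleton_iff] at hv ⊢
        tauto)
    have := this hmem
    simp [w1, w2] at this
  · push Not at hw
    have key : ∀ s t, G.Adj s t → s ≠ y → s ≠ u → t ≠ y → t ≠ u → s = q := by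
      intro s t hst h1 h2 h3 h4
      refine hw s ?_ h1 h2
      rintro rfl
      exact (hx t hst).elim h3 h4
    refine emb_of_cover y u u fun s t hst => ?_
    by_contra hcon
    simp only [Set.mem_insert_iff, Set.mem_singleton_iff, or_self] at hcon
    push Not at hcon
    obtain ⟨⟨h1, h2⟩, h3, h4⟩ := hcon
    exact hst.ne ((key s t hst h1 h2 h3 h4).trans (key t s hst.symm h3 h4 h1 h2).symm)

variable (h : CB G c)
include h

/-- The case where the ends of the edge `xy` have exactly one and two further neighbours. -/
lemma core_12 {x y u z2 z3 : V} (hxy : G.Adj x y) (hxu : G.Adj x u) (hu : u ≠ y)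
    (y2 : G.Adj y z2) (y3 : G.Adj y z3) (h2 : z2 ≠ x) (h3 : z3 ≠ x) (h23 : z2 ≠ z3)
    (u2 : G.Adj u z2) (u3 : G.Adj u z3)
    (hx : ∀ r, G.Adj x r → r = y ∨ r = u) (hy : ∀ r, G.Adj y r → r = x ∨ r = z2 ∨ r = z3) :
    Emb G.Adj := by
  by_contra hE
  have key : ∀ w, w ≠ x → w ≠ y → w ≠ u → w ≠ z2 → w ≠ z3 → ∀ r, G.Adj w r → r = z2 ∨ r = z3 := by
    intro w w1 w2 w3 w4 w5
    have hwS : w ∉ ({u, z2, z3} : Set V) := by simp [w3, w4, w5]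
    set D := comp G {u, z2, z3} w with hDd
    have hwD : w ∈ D := mem_comp_self G _ w
    have hD : Conn G D := Conn.comp _ w
    have hN : ∀ d ∈ D, ∀ r, G.Adj d r → r ∈ D ∨ r = u ∨ r = z2 ∨ r = z3 := fun d hd r hr => by
      simpa using comp_nb hwS hd hr
    have hxy' : D ⊆ {x, y}ᶜ := comp_sub (by simp [w1, w2]) (by
      intro s hs v hsv hsS _
      rw [Set.mem_compl_iff]
      intro hv
      simp only [Set.mem_insert_iff, Set.mem_singleton_iff, not_or, Set.mem_compl_iff] at hs hsS hv
      rcases hv with rfl | rfl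
      · have := hx _ hsv.symm
        tauto
      · have := hy _ hsv.symm
        tauto)
    have xD : x ∉ D := fun e => hxy' e (by simp)
    have yD : y ∉ D := fun e => hxy' e (by simp)
    have hdis : ∀ d ∈ D, d ≠ u ∧ d ≠ z2 ∧ d ≠ z3 := fun d hd => by
      simpa using comp_not_mem hwS hd
    have att : ∀ z z', G.Adj u z' → x ≠ z' → w ≠ z' →
        (∀ d ∈ D, ∀ r, G.Adj d r → r ∈ D ∨ r = u ∨ r = z ∨ r = z') →
        ∃ d ∈ D, G.Adj z d := by
      intro z z' huz' hxz hwz hN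
      by_contra hcon
      push Not at hcon
      refine hE (red_clique' hG (D := D) (a := u) (b := z') (x := x) (w := w) (Or.inr huz')
        ⟨hxu.ne, hxz⟩ xD hwD ⟨w3, hwz⟩ fun d hd r hr => ?_)
      rcases hN d hd r hr with e | e | e | e
      · exact Or.inl e
      · simp [e]
      · exact absurd (e ▸ hr.symm) (hcon d hd)
      · simp [e]
    have a2 := att z2 z3 u3 h3.symm w5 hN
    have a3 := att z3 z2 u2 h2.symm w4 fun d hd r hr => by
      rcases hN d hd r hr with e | e | e | e <;> simp [e]
    have hu' : ∀ d ∈ D, ¬ G.Adj u d := by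
      by_contra hcon
      push Not at hcon
      refine hE (red_attach3 hG h hD (a := z2) (b := z3) (s := u) (z0 := y) (t0 := x) ?_ h23 u2 u3
        ?_ a2 a3 hcon yD ?_ xD ?_ hxy.ne.symm y2 y3)
      · intro d hd r hr
        rcases hN d hd r hr with e | e | e | e <;> simp [e]
      · intro d hd
        obtain ⟨m1, m2, m3⟩ := hdis d hd
        simp [m1, m2, m3]
      · simp [y2.ne, y3.ne, hu.symm]
      · simp [h2.symm, h3.symm, hxu.ne]
    have hN2 : ∀ d ∈ D, ∀ r, G.Adj d r → r ∈ D ∨ r ∈ ({z2, z3} : Set V) := by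
      intro d hd r hr
      rcases hN d hd r hr with e | e | e | e
      · exact Or.inl e
      · exact absurd (e ▸ hr.symm) (hu' d hd)
      · simp [e]
      · simp [e]
    have hone : ∀ d ∈ D, d = w := by
      intro d hd
      by_contra hdw
      refine hE (red_attach2 hG h hD (a := z2) (b := z3) (z0 := y) (t0 := x) hN2 h23 ?_ a2 a3
        ⟨d, hd, w, hwD, hdw⟩ yD ?_ xD ?_ hxy.ne.symm y2 y3)
      · intro d hd
        obtain ⟨m1, m2, m3⟩ := hdis d hd
        simp [m2, m3]
      · simp [y2.ne, y3.ne]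
      · simp [h2.symm, h3.symm]
    intro r hr
    rcases hN2 w hwD r hr with e | e
    · exact absurd (hone r e).symm hr.ne
    · simpa using e
  refine hE (emb_of_cover z2 z3 x fun s t hst => ?_)
  by_contra hcon
  simp only [Set.mem_insert_iff, Set.mem_singleton_iff] at hcon
  push Not at hcon
  obtain ⟨⟨s1, s2, s3⟩, t1, t2, t3⟩ := hcon
  have fin : ∀ s t, G.Adj s t → s ≠ z2 → s ≠ z3 → s ≠ x → t ≠ z2 → t ≠ z3 → t ≠ x → s = u := by
    intro s t hst s1 s2 s3 t1 t2 t3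
    by_contra hsu
    by_cases hsy : s = y
    · subst hsy
      have := hy t hst
      tauto
    · have := key s s3 hsy hsu s1 s2 t hst
      tauto
  exact hst.ne ((fin s t hst s1 s2 s3 t1 t2 t3).trans (fin t s hst.symm t1 t2 t3 s1 s2 s3).symm)

omit h in
/-- If `q` has no neighbour in the component of `q''` outside `{y, u, q, q'}`, then `{y, u, q'}` is a
cut along which the graph can be reduced. -/
lemma core_1b_pair {x y u q q' q'' : V} (hxy : G.Adj x y) (hxu : G.Adj x u)
    (hx : ∀ r, G.Adj x r → r = y ∨ r = u) (yq' : G.Adj y q')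
    (yq'' : G.Adj y q'') (uq' : G.Adj u q') (uq'' : G.Adj u q'') (hq : q ≠ x)
    (hq' : q' ≠ x) (hq'' : q'' ≠ x) (n1 : q ≠ q') (n2 : q ≠ q'') (n3 : q' ≠ q'') (qy : q ≠ y)
    (qu : q ≠ u)
    (hC : ∀ d ∈ comp G {y, u, q, q'} q'', ¬ G.Adj d q) : Emb G.Adj := by
  set C := comp G {y, u, q, q'} q'' with hCd
  have hqS : q'' ∉ ({y, u, q, q'} : Set V) := by
    simp [yq''.ne.symm, uq''.ne.symm, n2.symm, n3.symm]
  have hNx : ∀ r, G.Adj x r → r ∈ ({y, u, q'} : Set V) := fun r hr => by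
    rcases hx r hr with rfl | rfl <;> simp
  have xC : x ∉ C := fun e => hq'' (isolated_comp (fun r hr => by
    rcases hx r hr with rfl | rfl <;> simp) e)
  have qC : q ∉ C := fun e => comp_not_mem hqS e (by simp)
  have hNC : ∀ d ∈ C, ∀ r, G.Adj d r → r ∈ C ∨ r ∈ ({y, u, q'} : Set V) := by
    intro d hd r hr
    rcases comp_nb hqS hd hr with e | e
    · exact Or.inl e
    · simp only [Set.mem_insert_iff, Set.mem_singleton_iff] at e ⊢
      rcases e with e | e | e | e
      · simp [e]
      · simp [e]
      · exact absurd (e ▸ hr) (hC d hd)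
      · simp [e]
  refine red_three hG (a := y) (b := u) (c := q') (Or.inr yq'.symm) (Or.inr uq'.symm) fun v hv => ?_
  by_cases hvC : v ∈ C
  · have := (comp_closed hNC).1 hvC
    exact ⟨x, q, fun e => xC (this e), fun e => qC (this e), by simp [hxy.ne, hxu.ne, hq'.symm],
      by simp [qy, qu, n1], hq.symm, hxy, hxu⟩
  · have := (comp_closed hNC).2 hvC
    by_cases hvx : v = x
    · refine ⟨q'', q, this _ (mem_comp_self G _ _), fun e => ?_, by
        simp [yq''.ne.symm, uq''.ne.symm, n3.symm],
        by simp [qy, qu, n1], n2.symm, yq''.symm, uq''.symm⟩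
      subst hvx
      exact hq (isolated_comp hNx (SimpleGraph.Reachable.symm e))
    · exact ⟨q'', x, this _ (mem_comp_self G _ _), fun e => hvx (isolated_comp hNx e), by
        simp [yq''.ne.symm, uq''.ne.symm, n3.symm], by simp [hxy.ne, hxu.ne, hq'.symm], hq'',
        yq''.symm, uq''.symm⟩

variable (hK : K5Free G)
include hK

/-- A connected set away from `y` cannot be attached to three common neighbours of `y` and `u` unless the
graph is reducible. -/
lemma core_1b_three {x y u z1 z2 z3 : V} {D : Set V} (hD : Conn G D) (hxy : G.Adj x y)
    (hxu : G.Adj x u) (huy : u ≠ y)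
    (hx : ∀ r, G.Adj x r → r = y ∨ r = u) (y1 : G.Adj y z1) (y2 : G.Adj y z2) (y3 : G.Adj y z3)
    (u1 : G.Adj u z1) (u2 : G.Adj u z2) (u3 : G.Adj u z3) (n1 : z1 ≠ x) (n2 : z2 ≠ x) (n3 : z3 ≠ x)
    (n12 : z1 ≠ z2) (n13 : z1 ≠ z3) (n23 : z2 ≠ z3)
    (hdis : ∀ d ∈ D, d ≠ x ∧ d ≠ y ∧ d ≠ u ∧ d ≠ z1 ∧ d ≠ z2 ∧ d ≠ z3)
    (hDy : ∀ d ∈ D, ¬ G.Adj d y)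
    (a1 : ∃ d ∈ D, G.Adj z1 d) (a2 : ∃ d ∈ D, G.Adj z2 d) (a3 : ∃ d ∈ D, G.Adj z3 d) :
    Emb G.Adj := by
  by_contra hE
  have cm : ∀ a b, G.Adj y a → G.Adj y b → a ≠ b → (∃ d ∈ D, G.Adj a d) → (∃ d ∈ D, G.Adj b d) →
      ∃ z ∈ D, G.Adj z a ∧ G.Adj z b := by
    intro a b ya yb hab ha hb
    exact h.common hD (Conn.singleton G y) hab (fun e => h.no_tri ya e yb) ha hb
      ⟨y, rfl, ya.symm⟩ ⟨y, rfl, yb.symm⟩ (by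
        rintro s hs t rfl
        exact ⟨(hdis s hs).2.1, hDy s hs⟩)
  obtain ⟨c12, m12, e12, e12'⟩ := cm z1 z2 y1 y2 n12 a1 a2
  obtain ⟨c13, m13, e13, e13'⟩ := cm z1 z3 y1 y3 n13 a1 a3
  obtain ⟨c23, m23, e23, e23'⟩ := cm z2 z3 y2 y3 n23 a2 a3
  obtain ⟨p, hp, p1, p2, p3⟩ : ∃ p ∈ D, G.Adj p z1 ∧ G.Adj p z2 ∧ G.Adj p z3 := by
    by_contra hcon
    have k1 : ¬ G.Adj c12 z3 := fun e => hcon ⟨c12, m12, e12, e12', e⟩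
    have k2 : ¬ G.Adj c13 z2 := fun e => hcon ⟨c13, m13, e13, e, e13'⟩
    have k3 : ¬ G.Adj c23 z1 := fun e => hcon ⟨c23, m23, e, e23, e23'⟩
    obtain ⟨z, hz, h1, h2⟩ := h.common (D := {c13, z3, c23}) (D' := {c12}) (a := z1) (b := z2)
      ((Conn.pair e23'.symm).insert (a := z3) (by simp) e13') (Conn.singleton G _) n12
      (fun e => h.no_tri y1 e y2) ⟨c13, by simp, e13.symm⟩ ⟨c23, by simp, e23.symm⟩
      ⟨c12, rfl, e12.symm⟩ ⟨c12, rfl, e12'.symm⟩ (by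
        rintro s (rfl | rfl | rfl) t rfl
        · exact ⟨fun e => k2 (e ▸ e12'), fun e => h.no_tri e e12 e13⟩
        · exact ⟨fun e => (hdis _ m12).2.2.2.2.2 e.symm, fun e => k1 e.symm⟩
        · exact ⟨fun e => k3 (e ▸ e12), fun e => h.no_tri e e12' e23⟩)
    rcases hz with rfl | rfl | rfl
    · exact k2 h2
    · exact h.no_tri y3 h1 y1
    · exact k3 h1
  obtain ⟨d1, d2, d3, d4, d5, d6⟩ := hdis p hp
  set Z : Set V := {z1, z2, z3} with hZd
  have hZ : ∀ z ∈ Z, G.Adj z y ∧ G.Adj z u ∧ G.Adj z p := by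
    rintro z (rfl | rfl | rfl)
    · exact ⟨y1.symm, u1.symm, p1.symm⟩
    · exact ⟨y2.symm, u2.symm, p2.symm⟩
    · exact ⟨y3.symm, u3.symm, p3.symm⟩
  have hZx : ∀ z ∈ Z, z ≠ x := by
    rintro z (rfl | rfl | rfl) <;> assumption
  have m1 : z1 ∈ Z := by simp [hZd]
  have m2 : z2 ∈ Z := by simp [hZd]
  have m3 : z3 ∈ Z := by simp [hZd]
  have hNx : ∀ r, G.Adj x r → r ∈ ({y, u, p} : Set V) := fun r hr => by
    rcases hx r hr with rfl | rfl <;> simp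
  have third : ∀ a ∈ Z, ∀ z' ∈ Z, z' ≠ a → ∃ t ∈ Z, t ≠ a ∧ t ≠ z' := by
    rintro a (rfl | rfl | rfl) z' (rfl | rfl | rfl) hne
    · exact absurd rfl hne
    · exact ⟨z3, m3, n13.symm, n23.symm⟩
    · exact ⟨z2, m2, n12.symm, n23⟩
    · exact ⟨z3, m3, n23.symm, n13.symm⟩
    · exact absurd rfl hne
    · exact ⟨z1, m1, n12, n13⟩
    · exact ⟨z2, m2, n23, n12.symm⟩
    · exact ⟨z1, m1, n13, n12⟩
    · exact absurd rfl hne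
  have key : ∀ v, ∀ a ∈ Z, ∀ b ∈ Z, a ≠ b → a ∈ comp G {y, u, p} v → b ∉ comp G {y, u, p} v := by
    intro v a ha b hb hab hav hbv
    rw [← comp_eq hav] at hbv
    refine k34_reach hK huy.symm d2.symm d3.symm hZ ha hb hab hbv fun z' hz' hne => ?_
    obtain ⟨t, ht, hta, htz⟩ := third a ha z' hz' hne
    obtain ⟨t1, t2, t3⟩ := hZ t ht
    exact ⟨t, x, hZx t ht, hta, (hZx a ha).symm, t1, t2, t3, hxy, hxu, d1.symm, Or.inl ⟨ht, htz⟩,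
      Or.inr fun e => hZx a ha (isolated_comp hNx e)⟩
  have hU : ∀ z ∈ Z, z ∉ ({y, u, p} : Set V) := by
    intro z hz
    obtain ⟨p1, p2, p3⟩ := hZ z hz
    simp [p1.ne, p2.ne, p3.ne]
  have hall : ∀ z ∈ Z, ∀ s ∈ ({y, u, p} : Set V), G.Adj z s := by
    rintro z hz s (rfl | rfl | rfl)
    exacts [(hZ z hz).1, (hZ z hz).2.1, (hZ z hz).2.2]
  refine hE (red_four hG (a := y) (b := u) (c := p) fun v hv => ?_)
  have fin : ∀ a ∈ Z, ∀ b ∈ Z, ∀ t, t ∉ ({y, u, p} : Set V) → a ≠ b → a ≠ t → b ≠ t →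
      a ∉ comp G {y, u, p} v → b ∉ comp G {y, u, p} v → t ∉ comp G {y, u, p} v →
      ∃ z z' t, z ∉ comp G {y, u, p} v ∧
      z' ∉ comp G {y, u, p} v ∧ t ∉ comp G {y, u, p} v ∧
      z ∉ ({y, u, p} : Set V) ∧ z' ∉ ({y, u, p} : Set V) ∧ t ∉ ({y, u, p} : Set V) ∧
      z ≠ z' ∧ z ≠ t ∧ z' ≠ t ∧ (∀ s ∈ ({y, u, p} : Set V), G.Adj z s ∧ G.Adj z' s) :=
    fun a ha b hb t ht h1 h2 h3 h4 h5 h6 => ⟨a, b, t, h4, h5, h6, hU a ha, hU b hb, ht, h1,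
      h2, h3, fun s hs => ⟨hall a ha s hs, hall b hb s hs⟩⟩
  have hxU : x ∉ ({y, u, p} : Set V) := by simp [hxy.ne, hxu.ne, d1.symm]
  have hxC : ∀ z ∈ Z, z ∈ comp G {y, u, p} v → x ∉ comp G {y, u, p} v := by
    intro z hz hzv hxv
    rw [← comp_eq hzv] at hxv
    exact hZx z hz (isolated_comp hNx hxv)
  by_cases c1 : z1 ∈ comp G {y, u, p} v
  · exact fin z2 m2 z3 m3 x hxU n23 n2 n3 (key v _ m1 _ m2 n12 c1) (key v _ m1 _ m3 n13 c1)
      (hxC _ m1 c1)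
  by_cases c2 : z2 ∈ comp G {y, u, p} v
  · exact fin z1 m1 z3 m3 x hxU n13 n1 n3 c1 (key v _ m2 _ m3 n23 c2) (hxC _ m2 c2)
  by_cases c3 : z3 ∈ comp G {y, u, p} v
  · exact fin z1 m1 z2 m2 x hxU n12 n1 n2 c1 c2 (hxC _ m3 c3)
  exact fin z1 m1 z2 m2 z3 (hU _ m3) n12 n13 n23 c1 c2 c3

/-- The case where `x` has one further neighbour `u` and `y` has at least three, all adjacent to `u`. -/
lemma core_1b {x y u : V} (hxy : G.Adj x y) (hxu : G.Adj x u) (hu : u ≠ y)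
    (hx : ∀ r, G.Adj x r → r = y ∨ r = u) (hq : ∀ q, G.Adj y q → q ≠ x → G.Adj u q)
    (h3 : ∀ a b, ∃ q, G.Adj y q ∧ q ≠ x ∧ q ≠ a ∧ q ≠ b) : Emb G.Adj := by
  by_contra hE
  by_cases hw : ∃ w, w ≠ x ∧ w ≠ y ∧ w ≠ u ∧ ¬ G.Adj y w
  swap
  · push Not at hw
    refine hE (emb_of_cover y u u fun s t hst => ?_)
    by_contra hcon
    simp only [Set.mem_insert_iff, Set.mem_singleton_iff, or_self] at hcon
    push Not at hcon
    obtain ⟨⟨s1, s2⟩, t1, t2⟩ := hcon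
    have hs : s ≠ x := by
      rintro rfl
      exact (hx t hst).elim t1 t2
    have ht : t ≠ x := by
      rintro rfl
      exact (hx s hst.symm).elim s1 s2
    exact h.no_tri (hw s hs s1 s2) hst (hw t ht t1 t2)
  obtain ⟨w, w1, w2, w3, w4⟩ := hw
  let S : Set V := insert u {q | G.Adj y q ∧ q ≠ x}
  have hwS : w ∉ S := by
    rintro (e | e)
    · exact w3 e
    · exact w4 e.1
  set D := comp G S w with hDd
  have hwD : w ∈ D := mem_comp_self G _ w
  have hD : Conn G D := Conn.comp _ w
  have hN : ∀ d ∈ D, ∀ r, G.Adj d r → r ∈ D ∨ r = u ∨ (G.Adj y r ∧ r ≠ x) :=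
    fun d hd r hr => comp_nb hwS hd hr
  have hxy' : D ⊆ {x, y}ᶜ := comp_sub (by simp [w1, w2]) (by
    intro s hs v hsv hsS _
    rw [Set.mem_compl_iff]
    intro hv
    simp only [Set.mem_insert_iff, Set.mem_singleton_iff, not_or, Set.mem_compl_iff] at hs hv
    rcases hv with rfl | rfl
    · rcases hx _ hsv.symm with e | e
      · exact hs.2 e
      · exact hsS (Or.inl e)
    · exact hsS (Or.inr ⟨hsv.symm, hs.1⟩))
  have xD : x ∉ D := fun e => hxy' e (by simp)
  have yD : y ∉ D := fun e => hxy' e (by simp)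
  have uD : u ∉ D := fun e => comp_not_mem hwS e (Or.inl rfl)
  have hqD : ∀ q, G.Adj y q → q ≠ x → q ∉ D := fun q h1 h2 e =>
    comp_not_mem hwS e (Or.inr ⟨h1, h2⟩)
  -- the vertices of `Q` with a neighbour in `D`
  let A : V → Prop := fun q => G.Adj y q ∧ q ≠ x ∧ ∃ d ∈ D, G.Adj q d
  have hNA : ∀ d ∈ D, ∀ r, G.Adj d r → r ∈ D ∨ r = u ∨ A r := by
    intro d hd r hr
    rcases hN d hd r hr with e | e | e
    · exact Or.inl e
    · exact Or.inr (Or.inl e)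
    · exact Or.inr (Or.inr ⟨e.1, e.2, d, hd, hr.symm⟩)
  have one : ∀ q, G.Adj y q → q ≠ x → ¬ ∀ r, A r → r = q := by
    intro q hyq hqx hA
    refine hE (red_clique' hG (D := D) (a := u) (b := q) (x := x) (w := w) (Or.inr (hq q hyq hqx))
      ⟨hxu.ne, hqx.symm⟩ xD hwD ⟨w3, fun e => w4 (e ▸ hyq)⟩ fun d hd r hr => ?_)
    rcases hNA d hd r hr with e | e | e
    · exact Or.inl e
    · exact Or.inr (Or.inl e)
    · exact Or.inr (Or.inr (hA r e))
  obtain ⟨q0, hq0, hq0x, -⟩ := h3 x x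
  obtain ⟨q, hqA, -⟩ : ∃ q, A q ∧ q ≠ q0 := by
    have := one q0 hq0 hq0x
    push Not at this
    exact this
  obtain ⟨q', hqA', hqq⟩ : ∃ q', A q' ∧ q' ≠ q := by
    have := one q hqA.1 hqA.2.1
    push Not at this
    exact this
  obtain ⟨b1, b2, b3⟩ := hqA
  obtain ⟨c1, c2, c3⟩ := hqA'
  have uq := hq q b1 b2
  have uq' := hq q' c1 c2
  by_cases hthree : ∃ r, A r ∧ r ≠ q ∧ r ≠ q'
  · obtain ⟨r, ⟨r1, r2, r3⟩, r4, r5⟩ := hthree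
    refine hE (core_1b_three hG h hK hD hxy hxu hu hx b1 c1 r1 uq uq' (hq r r1 r2) b2 c2 r2 hqq.symm
      r4.symm r5.symm (fun d hd => ⟨fun e => xD (e ▸ hd), fun e => yD (e ▸ hd),
      fun e => uD (e ▸ hd), fun e => hqD q b1 b2 (e ▸ hd), fun e => hqD q' c1 c2 (e ▸ hd),
      fun e => hqD r r1 r2 (e ▸ hd)⟩) (fun d hd e => ?_) b3 c3 r3)
    exact hqD d e.symm (fun e => xD (e ▸ hd)) hd
  push Not at hthree
  have hN2 : ∀ d ∈ D, ∀ r, G.Adj d r → r ∈ D ∨ r = u ∨ r = q ∨ r = q' := by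
    intro d hd r hr
    rcases hNA d hd r hr with e | e | e
    · exact Or.inl e
    · exact Or.inr (Or.inl e)
    · by_cases hrq : r = q
      · simp [hrq]
      · simp [hthree r e hrq]
  have hu' : ∀ d ∈ D, ¬ G.Adj u d := by
    by_contra hcon
    push Not at hcon
    refine hE (red_attach3 hG h hD (a := q) (b := q') (s := u) (z0 := y) (t0 := x) ?_ hqq.symm uq uq'
      ?_ b3 c3 hcon yD ?_ xD ?_ hxy.ne.symm b1 c1)
    · intro d hd r hr
      rcases hN2 d hd r hr with e | e | e | e <;> simp [e]
    · rintro d hd (rfl | rfl | rfl)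
      · exact hqD _ b1 b2 hd
      · exact hqD _ c1 c2 hd
      · exact uD hd
    · simp [b1.ne, c1.ne, hu.symm]
    · simp [b2.symm, c2.symm, hxu.ne]
  obtain ⟨q'', f1, f2, f3, f4⟩ := h3 q q'
  have uq'' := hq q'' f1 f2
  by_cases g1 : ∀ d ∈ comp G {y, u, q, q'} q'', ¬ G.Adj d q
  · exact hE (core_1b_pair hG hxy hxu hx c1 f1 uq' uq'' b2 c2 f2 hqq.symm f3.symm f4.symm b1.ne.symm
      uq.ne.symm g1)
  have hset : ({y, u, q', q} : Set V) = {y, u, q, q'} := by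
    ext r
    simp only [Set.mem_insert_iff, Set.mem_singleton_iff]
    tauto
  by_cases g2 : ∀ d ∈ comp G {y, u, q, q'} q'', ¬ G.Adj d q'
  · exact hE (core_1b_pair hG hxy hxu hx b1 f1 uq uq'' c2 b2 f2 hqq f4.symm f3.symm c1.ne.symm
      uq'.ne.symm (by rwa [hset]))
  push Not at g1 g2
  obtain ⟨s, hs, hsq⟩ := g1
  obtain ⟨s', hs', hsq'⟩ := g2
  set C := comp G {y, u, q, q'} q'' with hCd
  have hqS : q'' ∉ ({y, u, q, q'} : Set V) := by
    simp [f1.ne.symm, uq''.ne.symm, f3, f4]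
  have xC : x ∉ C := fun e => f2 (isolated_comp (fun r hr => by
    rcases hx r hr with rfl | rfl <;> simp) e)
  have yC : y ∉ C := fun e => comp_not_mem hqS e (by simp)
  have uC : u ∉ C := fun e => comp_not_mem hqS e (by simp)
  have qC : q ∉ C := fun e => comp_not_mem hqS e (by simp)
  have q'C : q' ∉ C := fun e => comp_not_mem hqS e (by simp)
  have hDC : ∀ d ∈ D, d ∉ C := by
    refine (comp_closed (S := {y, u, q, q'}) (D := D) fun d hd r hr => ?_).2 (hqD q'' f1 f2)
    rcases hN2 d hd r hr with e | e | e | e <;> simp [e]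
  obtain ⟨d, hd, b3⟩ := b3
  obtain ⟨d', hd', c3⟩ := c3
  have qD := hqD _ b1 b2
  have q'D := hqD _ c1 c2
  have i1 := b1.ne
  have i2 := c1.ne
  have i3 := uq.ne
  have i4 := uq'.ne
  have i5 := hxu.ne
  refine k5_of hK (A := {y, x}) (B := {u}) (C := insert q D) (D := {q'}) (E := C)
    (Conn.pair hxy.symm) (Conn.singleton G _) (hD.insert hd b3) (Conn.singleton G _) (Conn.comp _ _)
    ⟨?_, x, by simp, u, by simp, hxu⟩ ⟨?_, y, by simp, q, by simp, b1⟩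
    ⟨?_, y, by simp, q', by simp, c1⟩ ⟨?_, y, by simp, q'', mem_comp_self G _ _, f1⟩
    ⟨?_, u, by simp, q, by simp, uq⟩ ⟨?_, u, by simp, q', by simp, uq'⟩
    ⟨?_, u, by simp, q'', mem_comp_self G _ _, uq''⟩ ⟨?_, d', by simp [hd'], q', by simp, c3.symm⟩
    ⟨?_, q, by simp, s, hs, hsq.symm⟩ ⟨?_, q', by simp, s', hs', hsq'.symm⟩ <;>
  · simp only [Set.mem_insert_iff, Set.mem_singleton_iff]
    grind

end core

/-! ### Bipartite graphs: the induction -/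

/-- A predicate has no, exactly one, exactly two, or at least three solutions. -/
lemma classify (P : V → Prop) : (∀ p, ¬ P p) ∨ (∃ a, P a ∧ ∀ p, P p → p = a) ∨
    (∃ a b, a ≠ b ∧ P a ∧ P b ∧ ∀ p, P p → p = a ∨ p = b) ∨
    ∃ a b d, a ≠ b ∧ a ≠ d ∧ b ≠ d ∧ P a ∧ P b ∧ P d := by
  by_contra hcon
  push Not at hcon
  obtain ⟨⟨a, ha⟩, h1, h2, h3⟩ := hcon
  obtain ⟨b, hb, hba⟩ := h1 a ha
  obtain ⟨d, hd, hda, hdb⟩ := h2 a b hba.symm ha hb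
  exact h3 a b d hba.symm hda.symm hdb.symm ha hb hd

section core
variable {G : SimpleGraph V} {c : V → Bool} (hG : SubEmb G) (h : CB G c) (hK : K5Free G)
include hG h hK

/-- The case where one end of the bisimplicial edge has only one further neighbour. -/
lemma core_half {x y u : V} (hxy : G.Adj x y) (hb : ∀ p q, G.Adj x p → G.Adj y q → G.Adj p q)
    (hxu : G.Adj x u) (hu : u ≠ y) (hx : ∀ r, G.Adj x r → r = y ∨ r = u) : Emb G.Adj := by
  rcases classify (fun q => G.Adj y q ∧ q ≠ x) with h0 | ⟨q, ⟨q1, q2⟩, hq⟩ |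
    ⟨q, q', hqq, ⟨q1, q2⟩, ⟨q1', q2'⟩, hq⟩ | ⟨a, b, d, hab, had, hbd, ⟨a1, a2⟩, ⟨b1, b2⟩, ⟨d1, d2⟩⟩
  · refine core_empty hG hxy.symm fun p hp => ?_
    by_contra hpx
    exact h0 p ⟨hp, hpx⟩
  · refine core_11 hG hxu q1 hu q2 (hb _ _ hxu q1) hx fun r hr => ?_
    by_cases hrx : r = x
    · exact Or.inl hrx
    · exact Or.inr (hq r ⟨hr, hrx⟩)
  · refine core_12 hG h hxy hxu hu q1 q1' q2 q2' hqq (hb _ _ hxu q1) (hb _ _ hxu q1') hx fun r hr => ?_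
    by_cases hrx : r = x
    · exact Or.inl hrx
    · exact Or.inr (hq r ⟨hr, hrx⟩)
  · refine core_1b hG h hK hxy hxu hu hx (fun q hq _ => hb _ _ hxu hq) fun s t => ?_
    by_cases ha : a ≠ s ∧ a ≠ t
    · exact ⟨a, a1, a2, ha.1, ha.2⟩
    by_cases hb : b ≠ s ∧ b ≠ t
    · exact ⟨b, b1, b2, hb.1, hb.2⟩
    refine ⟨d, d1, d2, ?_, ?_⟩
    · rintro rfl
      grind
    · rintro rfl
      grind

/-- The induction step: in a `K₅`-minor-free bipartite graph without long induced cycles, if all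
vertex-deleted subgraphs embed, so does the graph.  The cases are sorted by the numbers of further
neighbours of the two ends of a bisimplicial edge. -/
lemma core [Finite V] : Emb G.Adj := by
  by_cases hedge : ∃ x y, G.Adj x y
  swap
  · push Not at hedge
    exact fun k d _ => ⟨fun _ _ => false, fun u w huw => absurd huw (hedge u w)⟩
  obtain ⟨x0, y0, h0⟩ := hedge
  obtain ⟨x, -, y, -, hxy, hb'⟩ := h.bisimplicial _ Set.univ le_rfl
    ⟨x0, Set.mem_univ _, y0, Set.mem_univ _, h0⟩
  have hb : ∀ p q, G.Adj x p → G.Adj y q → G.Adj p q := fun p q hp hq =>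
    (hb' q (Set.mem_univ _) p (Set.mem_univ _) hq hp).symm
  have hbs : ∀ q p, G.Adj y q → G.Adj x p → G.Adj q p := fun q p hq hp => (hb p q hp hq).symm
  rcases classify (fun q => G.Adj x q ∧ q ≠ y) with p0 | ⟨p, ⟨p1, p2⟩, hp⟩ |
    ⟨p, p', hpp, ⟨p1, p2⟩, ⟨p1', p2'⟩, hp⟩ |
    ⟨a, b, d, hab, had, hbd, ⟨a1, a2⟩, ⟨b1, b2⟩, ⟨d1, d2⟩⟩
  · refine core_empty hG hxy fun p hp => ?_
    by_contra hpx
    exact p0 p ⟨hp, hpx⟩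
  · exact core_half hG h hK hxy hb p1 p2 fun r hr => by
      by_cases hry : r = y
      · exact Or.inl hry
      · exact Or.inr (hp r ⟨hr, hry⟩)
  all_goals
    rcases classify (fun q => G.Adj y q ∧ q ≠ x) with q0 | ⟨q, ⟨q1, q2⟩, hq⟩ |
      ⟨q, q', hqq, ⟨q1, q2⟩, ⟨q1', q2'⟩, hq⟩ |
      ⟨a', b', d', hab', had', hbd', ⟨a1', a2'⟩, ⟨b1', b2'⟩, ⟨d1', d2'⟩⟩
  · refine core_empty hG hxy.symm fun p hp => ?_
    by_contra hpx
    exact q0 p ⟨hp, hpx⟩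
  · exact core_half hG h hK hxy.symm hbs q1 q2 fun r hr => by
      by_cases hry : r = x
      · exact Or.inl hry
      · exact Or.inr (hq r ⟨hr, hry⟩)
  · refine core_22 hG hK h hxy hb p1 p1' q1 q1' p2 p2' hpp q2 q2' hqq (fun r hr => ?_) fun r hr => ?_
    · by_cases hry : r = y
      · exact Or.inl hry
      · exact Or.inr (hp r ⟨hr, hry⟩)
    · by_cases hrx : r = x
      · exact Or.inl hrx
      · exact Or.inr (hq r ⟨hr, hrx⟩)
  · exact core_34 hG hK hxy.symm hbs a1' b1' d1' p1 p1' a2' b2' d2' hab' had' hbd' p2 p2' hpp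
  · refine core_empty hG hxy.symm fun p hp => ?_
    by_contra hpx
    exact q0 p ⟨hp, hpx⟩
  · exact core_half hG h hK hxy.symm hbs q1 q2 fun r hr => by
      by_cases hry : r = x
      · exact Or.inl hry
      · exact Or.inr (hq r ⟨hr, hry⟩)
  · exact core_34 hG hK hxy hb a1 b1 d1 q1 q1' a2 b2 d2 hab had hbd q2 q2' hqq
  · exact core_34 hG hK hxy hb a1 b1 d1 a1' b1' a2 b2 d2 hab had hbd a2' b2' hab'

end core

lemma HasInducedCycleLen.of_induce {G : SimpleGraph V} {X : Set V} {n : ℕ}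
    (h : HasInducedCycleLen (G.induce X) n) : HasInducedCycleLen G n :=
  ⟨h.1, h.2.map fun e => e.trans (SimpleGraph.Embedding.induce X)⟩

lemma K5Free.induce {G : SimpleGraph V} (h : K5Free G) (X : Set V) : K5Free (G.induce X) := by
  rintro ⟨B, h1, h2, h3, h4⟩
  refine h ⟨fun u => Subtype.val '' B u, fun u => (h1 u).image _, fun u v huv => ?_, fun u => ?_,
    fun u v huv => ?_⟩
  · exact (Set.disjoint_image_iff Subtype.val_injective).2 (h2 u v huv)
  · let f : (G.induce X).induce (B u) →g G.induce (Subtype.val '' B u) :=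
      { toFun := fun a => ⟨a.1.1, a.1, a.2, rfl⟩
        map_rel' := fun {a b} hab => hab }
    refine (h3 u).map f ?_
    rintro ⟨_, a, ha, rfl⟩
    exact ⟨⟨a, ha⟩, rfl⟩
  · obtain ⟨a, ha, b, hb, hab⟩ := h4 u v huv
    exact ⟨a, ⟨a, ha, rfl⟩, b, ⟨b, hb, rfl⟩, hab⟩

/-- Every even metric on the vertices of a bipartite, `K₅`-minor-free graph without long induced
cycles that satisfies the perimeter inequalities agrees along the edges with a cube metric. -/
theorem emb_bipartite : ∀ (n : ℕ) (V : Type) [Fintype V] (G : SimpleGraph V) (c : V → Bool),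
    Fintype.card V = n → CB G c → K5Free G → Emb G.Adj := by
  classical
  intro n
  induction n using Nat.strong_induction_on with
  | _ n ih =>
    intro V _ G c hn h hK
    refine core (fun t => ?_) h hK
    let X : Set V := {t}ᶜ
    have hX := ih (Fintype.card X) (by
      rw [← hn]
      exact Fintype.card_subtype_lt (x := t) (by simp [X])) X (G.induce X) (fun a => c a) rfl
      ⟨fun u v huv => h.col u v huv, fun n hn hc => h.no6 n hn hc.of_induce⟩ (hK.induce X)
    intro k d hd
    obtain ⟨f, hf⟩ := hX k (fun a b => d a b) (hd.comp _)
    refine ⟨fun u => if hu : u ∈ X then f ⟨u, hu⟩ else fun _ => false, fun u w huw => ?_⟩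
    have hu : u ∈ X := huw.2.1
    have hw : w ∈ X := huw.2.2
    beta_reduce
    rw [dif_pos hu, dif_pos hw]
    exact hf ⟨u, hu⟩ ⟨w, hw⟩ huw.1

/-! ### Chordal graphs -/

/-- The inequalities and parity conditions that Hamming distances in a `k`-dimensional cube satisfy
along the edges and triangles of a graph. -/
structure TriFeasible (G : SimpleGraph V) (k : ℕ) (x : V → V → ℤ) : Prop where
  symm : ∀ u w, x u w = x w u
  bd : ∀ u w, G.Adj u w → 0 ≤ x u w ∧ x u w ≤ k
  tri : ∀ a b d, G.Adj a b → G.Adj b d → G.Adj a d → x a d ≤ x a b + x b d ∧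
    x a b + x b d + x a d ≤ 2 * k ∧ Even (x a b + x b d + x a d)

/-- Feasible distances to a clique with at most three vertices that is already placed are attained by some
point of the cube. -/
lemma TriFeasible.extend {G : SimpleGraph V} {k : ℕ} {x : V → V → ℤ} (h : TriFeasible G k x)
    (f : V → Fin k → Bool) {t s1 s2 s3 : V} (h1 : G.Adj t s1) (h2 : G.Adj t s2) (h3 : G.Adj t s3)
    (h12 : s1 = s2 ∨ G.Adj s1 s2) (h13 : s1 = s3 ∨ G.Adj s1 s3) (h23 : s2 = s3 ∨ G.Adj s2 s3)
    (f12 : G.Adj s1 s2 → (hammingDist (f s1) (f s2) : ℤ) = x s1 s2)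
    (f13 : G.Adj s1 s3 → (hammingDist (f s1) (f s3) : ℤ) = x s1 s3)
    (f23 : G.Adj s2 s3 → (hammingDist (f s2) (f s3) : ℤ) = x s2 s3) :
    ∃ v : Fin k → Bool, (hammingDist v (f s1) : ℤ) = x t s1 ∧ (hammingDist v (f s2) : ℤ) = x t s2 ∧
      (hammingDist v (f s3) : ℤ) = x t s3 := by
  have key : ∀ p q, G.Adj t p → G.Adj t q → (p = q ∨ G.Adj p q) →
      (G.Adj p q → (hammingDist (f p) (f q) : ℤ) = x p q) →
      (hammingDist (f p) (f q) : ℤ) ≤ x t p + x t q ∧ x t p ≤ x t q + hammingDist (f p) (f q) ∧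
      x t q ≤ x t p + hammingDist (f p) (f q) ∧
      x t p + x t q + hammingDist (f p) (f q) ≤ 2 * k ∧
      Even (x t p + x t q + hammingDist (f p) (f q)) := by
    intro p q hp hq hpq hf
    rcases hpq with rfl | hpq
    · have := h.bd t p hp
      rw [hammingDist_self]
      refine ⟨by simp; omega, by simp, by simp, by simp; omega, by simp⟩
    · rw [hf hpq]
      have e1 := h.symm t p
      have e2 := h.symm p q
      have t1 := h.tri p t q hp.symm hq hpq
      have t2 := h.tri t q p hq hpq.symm hp
      have t3 := h.tri t p q hp hpq hq
      refine ⟨by omega, by omega, by omega, by omega, ?_⟩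
      have := t3.2.2
      rwa [show x t p + x t q + x p q = x t p + x p q + x t q by ring]
  obtain ⟨a1, a2, a3, a4, a5⟩ := key s1 s2 h1 h2 h12 f12
  obtain ⟨b1, b2, b3, b4, b5⟩ := key s1 s3 h1 h3 h13 f13
  obtain ⟨c1, c2, c3, c4, c5⟩ := key s2 s3 h2 h3 h23 f23
  exact cube_four_point (f s1) (f s2) (f s3) _ _ _ a1 a2 a3 (by simpa using a4) a5
    b1 b2 b3 (by simpa using b4) b5 c1 c2 c3 (by simpa using c4) c5

/-- A simplicial vertex of the subgraph on `R` has at most three neighbours there, as four of them would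
give a `K₅`; it is placed last. -/
lemma emb_chordal_aux [Finite V] {G : SimpleGraph V} (hch : ChordalG G) (hK : K5Free G) {k : ℕ}
    {x : V → V → ℤ} (h : TriFeasible G k x) : ∀ (n : ℕ) (R : Set V), R.ncard ≤ n →
      ∃ f : V → Fin k → Bool, ∀ u ∈ R, ∀ w ∈ R, G.Adj u w →
        (hammingDist (f u) (f w) : ℤ) = x u w := by
  classical
  intro n
  induction n with
  | zero =>
    intro R hR
    have : R = ∅ := by
      rw [← Set.ncard_eq_zero (Set.toFinite R)]
      omega
    exact ⟨fun _ _ => false, by simp [this]⟩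
  | succ n ih =>
    intro R hR
    by_cases hne : R.Nonempty
    swap
    · rw [Set.not_nonempty_iff_eq_empty] at hne
      exact ⟨fun _ _ => false, by simp [hne]⟩
    obtain ⟨t, ht, hs⟩ := chordal_simplicial hch _ R le_rfl hne
    obtain ⟨f, hf⟩ := ih (R \ {t}) (by
      have := Set.ncard_sdiff_singleton_lt_of_mem ht (Set.toFinite R)
      omega)
    have hs' : ∀ p q, (p ∈ R ∧ G.Adj t p) → (q ∈ R ∧ G.Adj t q) → p = q ∨ G.Adj p q := by
      intro p q hp hq
      by_cases hpq : p = q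
      · exact Or.inl hpq
      · exact Or.inr (hs p hp.1 q hq.1 hp.2 hq.2 hpq)
    have hf' : ∀ p q, (p ∈ R ∧ G.Adj t p) → (q ∈ R ∧ G.Adj t q) → G.Adj p q →
        (hammingDist (f p) (f q) : ℤ) = x p q := fun p q hp hq =>
      hf p ⟨hp.1, hp.2.ne.symm⟩ q ⟨hq.1, hq.2.ne.symm⟩
    have ext : ∀ s1 s2 s3, (s1 ∈ R ∧ G.Adj t s1) → (s2 ∈ R ∧ G.Adj t s2) → (s3 ∈ R ∧ G.Adj t s3) →
        (∀ p, p ∈ R ∧ G.Adj t p → p = s1 ∨ p = s2 ∨ p = s3) →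
        ∃ v : Fin k → Bool, ∀ p, p ∈ R ∧ G.Adj t p → (hammingDist v (f p) : ℤ) = x t p := by
      intro s1 s2 s3 h1 h2 h3 hall
      obtain ⟨v, v1, v2, v3⟩ := h.extend f h1.2 h2.2 h3.2 (hs' _ _ h1 h2) (hs' _ _ h1 h3)
        (hs' _ _ h2 h3) (hf' _ _ h1 h2) (hf' _ _ h1 h3) (hf' _ _ h2 h3)
      refine ⟨v, fun p hp => ?_⟩
      rcases hall p hp with rfl | rfl | rfl <;> assumption
    obtain ⟨v, hv⟩ : ∃ v : Fin k → Bool, ∀ p, p ∈ R ∧ G.Adj t p →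
        (hammingDist v (f p) : ℤ) = x t p := by
      rcases classify (fun p => p ∈ R ∧ G.Adj t p) with h0 | ⟨a, ha, h1⟩ | ⟨a, b, -, ha, hb, h2⟩ |
        ⟨a, b, d, hab, had, hbd, ha, hb, hd⟩
      · exact ⟨fun _ => false, fun p hp => absurd hp (h0 p)⟩
      · exact ext a a a ha ha ha fun p hp => Or.inl (h1 p hp)
      · exact ext a b b ha hb hb fun p hp => (h2 p hp).imp_right Or.inl
      · refine ext a b d ha hb hd fun p hp => ?_
        by_contra hcon
        push Not at hcon
        obtain ⟨n1, n2, n3⟩ := hcon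
        have ad : ∀ p q, (p ∈ R ∧ G.Adj t p) → (q ∈ R ∧ G.Adj t q) → p ≠ q → Touch G {p} {q} :=
          fun p q hp hq hpq => ⟨by simpa using hpq, p, rfl, q, rfl, (hs' p q hp hq).resolve_left hpq⟩
        have tt : ∀ q, (q ∈ R ∧ G.Adj t q) → Touch G {t} {q} := fun q hq =>
          ⟨by simpa using hq.2.ne, t, rfl, q, rfl, hq.2⟩
        exact k5_of hK (Conn.singleton G t) (Conn.singleton G a) (Conn.singleton G b)
          (Conn.singleton G d) (Conn.singleton G p) (tt a ha) (tt b hb) (tt d hd) (tt p hp)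
          (ad a b ha hb hab) (ad a d ha hd had) (ad a p ha hp n1.symm) (ad b d hb hd hbd)
          (ad b p hb hp n2.symm) (ad d p hd hp n3.symm)
    refine ⟨Function.update f t v, fun u hu w hw huw => ?_⟩
    by_cases hut : u = t
    · subst hut
      rw [Function.update_self, Function.update_of_ne huw.ne.symm]
      exact hv w ⟨hw, huw⟩
    · by_cases hwt : w = t
      · subst hwt
        rw [Function.update_self, Function.update_of_ne hut, hammingDist_comm, h.symm]
        exact hv u ⟨hu, huw.symm⟩
      · rw [Function.update_of_ne hut, Function.update_of_ne hwt]
        exact hf u ⟨hu, hut⟩ w ⟨hw, hwt⟩ huw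

/-- On a chordal `K₅`-minor-free graph the triangle conditions suffice for a realisation in the cube. -/
lemma emb_chordal [Finite V] {G : SimpleGraph V} (hch : ChordalG G) (hK : K5Free G) {k : ℕ}
    {x : V → V → ℤ} (h : TriFeasible G k x) : ∃ f : V → Fin k → Bool, ∀ u w, G.Adj u w →
        (hammingDist (f u) (f w) : ℤ) = x u w := by
  obtain ⟨f, hf⟩ := emb_chordal_aux hch hK h _ Set.univ le_rfl
  exact ⟨f, fun u w huw => hf u trivial w trivial huw⟩

/-- Every edge of a bridgeless chordal graph lies in a triangle. -/
lemma edge_in_triangle {G : SimpleGraph V} (hch : ChordalG G) (hbl : BridgelessG G) {a b : V}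
    (hab : G.Adj a b) : ∃ z, G.Adj a z ∧ G.Adj z b := by
  classical
  obtain ⟨v, p, hp, he⟩ := hbl s(a, b) hab
  let H := G \ SimpleGraph.fromEdgeSet {s(a, b)}
  have hr : H.Reachable a b := by
    have := (SimpleGraph.adj_and_reachable_delete_edges_iff_exists_cycle (G := G) (v := a) (w := b)).2 ⟨v, p, hp, he⟩
    exact this.2
  obtain ⟨q, q0, q1, hq⟩ := exists_IP (H.dist a b) a hr rfl
  set m := H.dist a b
  have hG : ∀ u w, H.Adj u w ↔ G.Adj u w ∧ s(u, w) ≠ s(a, b) := by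
    intro u w
    simp only [H, SimpleGraph.sdiff_adj, SimpleGraph.fromEdgeSet_adj, Set.mem_singleton_iff]
    constructor
    · rintro ⟨h1, h2⟩
      exact ⟨h1, fun e => h2 ⟨e, h1.ne⟩⟩
    · rintro ⟨h1, h2⟩
      exact ⟨h1, fun e => h2 e.1⟩
  have hm : 2 ≤ m := by
    by_contra hm
    have : m = 0 ∨ m = 1 := by omega
    rcases this with h0 | h0
    · rw [h0] at q1
      exact hab.ne (q0.symm.trans q1)
    · have := (hq 0 1 (by omega) (by omega)).2.2 rfl
      rw [← h0, q0, q1, hG] at this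
      exact this.2 rfl
  have hinj : ∀ i j, i ≤ m → j ≤ m → q i = q j → i = j := by
    intro i j hi hj e
    rcases lt_trichotomy i j with h | h | h
    · exact absurd e (hq i j h hj).1
    · exact h
    · exact absurd e.symm (hq j i h hi).1
  have hcyc : HasInducedCycleLen G (m + 1) := by
    refine induced_of_fun (by omega) q fun i j hij hj => ⟨(hq i j hij (by omega)).1, ?_⟩
    constructor
    · intro hadj
      by_cases hs : s(q i, q j) = s(a, b)
      · right
        rw [Sym2.eq_iff] at hs
        rcases hs with ⟨h1, h2⟩ | ⟨h1, h2⟩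
        · exact ⟨hinj i 0 (by omega) (by omega) (h1.trans q0.symm),
            hinj j _ (by omega) (by omega) (h2.trans q1.symm)⟩
        · have := hinj i m (by omega) (by omega) (h1.trans q1.symm)
          omega
      · exact Or.inl ((hq i j hij (by omega)).2.1 ((hG _ _).2 ⟨hadj, hs⟩))
    · rintro (e | ⟨rfl, e⟩)
      · exact ((hG _ _).1 ((hq i j hij (by omega)).2.2 e)).1
      · rw [e, Nat.add_sub_cancel, q0, q1]
        exact hab
  have h3 := hch _ hcyc
  have hm2 : m = 2 := by omega
  have s1 := ((hG _ _).1 ((hq 0 1 (by omega) (by omega)).2.2 rfl)).1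
  have s2 := ((hG _ _).1 ((hq 1 2 (by omega) (by omega)).2.2 rfl)).1
  rw [hm2] at q1
  exact ⟨q 1, q0 ▸ s1, q1 ▸ s2⟩

/-! ### Extending edge lengths to a metric -/

/-- A metric bounded by `K` and invariant under `bar`, for which each point `a` is at distance `K` from
its antipode `bar a`; `ψ` prescribes the parities of the distances. -/
structure DM {W : Type} (bar : W → W) (K : ℤ) (ψ : W → ℤ) (m : W → W → ℤ) : Prop where
  zero : ∀ a, m a a = 0
  symm : ∀ a b, m a b = m b a
  inv : ∀ a b, m (bar a) (bar b) = m a b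
  tri : ∀ a b c, m a c ≤ m a b + m b c
  le : ∀ a b, m a b ≤ K
  anti : ∀ a, m a (bar a) = K
  par : ∀ a b, Even (m a b + ψ a + ψ b)

lemma DM.nonneg {W : Type} {bar : W → W} {K : ℤ} {ψ : W → ℤ} {m : W → W → ℤ}
    (h : DM bar K ψ m) (a b : W) : 0 ≤ m a b := by
  have h1 := h.tri a b a
  have h2 := h.symm a b
  have h3 := h.zero a
  omega

set_option maxHeartbeats 2000000 in
/-- If some `b` does not lie on a geodesic from `a` to its antipode, then a shortcut between `a`
and `b` (and its mirror image) shortens the metric while keeping all antipodal distances. -/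
lemma DM.step {W : Type} {bar : W → W} (hb : ∀ a, bar (bar a) = a) {K : ℤ} {ψ : W → ℤ}
    (hψ : ∀ a, Even (ψ (bar a) + ψ a + K)) {m : W → W → ℤ} (h : DM bar K ψ m) {a b : W}
    (hab : K < m a b + m b (bar a)) :
    ∃ m', DM bar K ψ m' ∧ (∀ p q, m' p q ≤ m p q) ∧ m' a b < m a b := by
  have hinv : ∀ p q, m p (bar q) = m (bar p) q := by
    intro p q
    rw [← h.inv p, hb]
  obtain ⟨t, ht⟩ : ∃ t, t = K - m b (bar a) := ⟨_, rfl⟩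
  have ht0 : 0 ≤ t := by have := h.le b (bar a); omega
  have hm : ∀ p q, ∃ s, (s ≤ m p q ∧ s ≤ m p a + t + m b q ∧ s ≤ m p b + t + m a q ∧
      s ≤ m p (bar a) + t + m (bar b) q ∧ s ≤ m p (bar b) + t + m (bar a) q) ∧
      (s = m p q ∨ s = m p a + t + m b q ∨ s = m p b + t + m a q ∨
      s = m p (bar a) + t + m (bar b) q ∨ s = m p (bar b) + t + m (bar a) q) := by
    intro p q
    refine ⟨min (m p q) (min (m p a + t + m b q) (min (m p b + t + m a q)
      (min (m p (bar a) + t + m (bar b) q) (m p (bar b) + t + m (bar a) q)))), ?_, ?_⟩ <;> omega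
  choose m' hle heq using hm
  have e1 : m b (bar a) = m (bar a) b := h.symm _ _
  have e2 : m a (bar b) = m (bar a) b := hinv _ _
  have e3 : m (bar b) a = m (bar a) b := by rw [h.symm, e2]
  have e4 := h.anti a
  have e5 := h.anti b
  have e6 : m (bar a) a = K := by rw [h.symm, e4]
  have e7 : m (bar b) b = K := by rw [h.symm, e5]
  refine ⟨m', ⟨?_, ?_, ?_, ?_, ?_, ?_, ?_⟩, fun p q => (hle p q).1, ?_⟩
  · intro p
    have := hle p p
    have h0 := h.zero p
    have := h.nonneg p a
    have := h.nonneg p b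
    have := h.nonneg p (bar a)
    have := h.nonneg p (bar b)
    have := h.nonneg a p
    have := h.nonneg b p
    have := h.nonneg (bar a) p
    have := h.nonneg (bar b) p
    rcases heq p p with e | e | e | e | e <;> omega
  · intro p q
    have h1 := hle p q
    have h2 := hle q p
    rw [h.symm q p, h.symm q a, h.symm q b, h.symm q (bar a), h.symm q (bar b), h.symm b p,
      h.symm a p, h.symm (bar b) p, h.symm (bar a) p] at h2
    have h3 := heq p q
    have h4 := heq q p
    rw [h.symm q p, h.symm q a, h.symm q b, h.symm q (bar a), h.symm q (bar b), h.symm b p,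
      h.symm a p, h.symm (bar b) p, h.symm (bar a) p] at h4
    omega
  · intro p q
    have h1 := hle p q
    have h2 := hle (bar p) (bar q)
    have h3 := heq p q
    have h4 := heq (bar p) (bar q)
    simp only [h.inv, hinv] at h1 h2 h3 h4
    omega
  · intro p r q
    have h1 := hle p q
    have h0 := h.tri p r q
    have a1 := h.tri p r a
    have a2 := h.tri p r b
    have a3 := h.tri p r (bar a)
    have a4 := h.tri p r (bar b)
    have b1 := h.tri a r q
    have b2 := h.tri b r q
    have b3 := h.tri (bar a) r q
    have b4 := h.tri (bar b) r q
    have n1 := h.nonneg b r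
    have n2 := h.nonneg a r
    have n3 := h.nonneg (bar b) r
    have n4 := h.nonneg (bar a) r
    have n5 := h.nonneg r a
    have n6 := h.nonneg r b
    have n7 := h.nonneg r (bar a)
    have n8 := h.nonneg r (bar b)
    have c1 := h.tri p a q
    have c2 := h.tri p b q
    have c3 := h.tri p (bar a) q
    have c4 := h.tri p (bar b) q
    have d1 := h.tri p a (bar b)
    have d2 := h.tri p b (bar a)
    have d3 := h.tri p (bar a) b
    have d4 := h.tri p (bar b) a
    have d5 := h.tri p a (bar a)
    have d6 := h.tri p b (bar b)
    have d7 := h.tri p (bar a) a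
    have d8 := h.tri p (bar b) b
    have f1 := h.tri a r (bar a)
    have f2 := h.tri a r (bar b)
    have f3 := h.tri b r (bar a)
    have f4 := h.tri b r (bar b)
    have f5 := h.tri (bar a) r a
    have f6 := h.tri (bar a) r b
    have f7 := h.tri (bar b) r a
    have f8 := h.tri (bar b) r b
    rcases heq p r with e | e | e | e | e <;> rcases heq r q with e' | e' | e' | e' | e' <;>
      omega
  · intro p q
    exact (hle p q).1.trans (h.le p q)
  · intro p
    have h0 := h.anti p
    have h1 := hle p (bar p)
    have h3 := heq p (bar p)
    have g1 := h.tri b (bar p) (bar a)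
    have g2 := h.tri a (bar p) (bar b)
    have g3 := h.tri (bar b) (bar p) a
    have g4 := h.tri (bar a) (bar p) b
    have k1 := h.inv p a
    have k2 := h.inv p b
    have k3 := h.inv p (bar a)
    have k4 := h.inv p (bar b)
    rw [hb] at k3 k4
    omega
  · intro p q
    have p0 := h.par p q
    have p1 := h.par p a
    have p2 := h.par p b
    have p3 := h.par p (bar a)
    have p4 := h.par p (bar b)
    have q1 := h.par a q
    have q2 := h.par b q
    have q3 := h.par (bar a) q
    have q4 := h.par (bar b) q
    have r1 := h.par b (bar a)
    have r2 := hψ a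
    have r3 := hψ b
    rw [Int.even_iff] at *
    rcases heq p q with e | e | e | e | e <;> omega
  · have := (hle a b).2.1
    have h1 := h.zero a
    have h2 := h.zero b
    omega

/-- A minimal metric is tight: every point lies on a geodesic between any two antipodes. -/
lemma DM.exists_tight {W : Type} [Fintype W] {bar : W → W} (hb : ∀ a, bar (bar a) = a) {K : ℤ}
    {ψ : W → ℤ} (hψ : ∀ a, Even (ψ (bar a) + ψ a + K)) : ∀ (n : ℕ) (m : W → W → ℤ),
      DM bar K ψ m → (∑ p : W × W, m p.1 p.2) ≤ n →
      ∃ m', DM bar K ψ m' ∧ (∀ p q, m' p q ≤ m p q) ∧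
        ∀ a b, m' a b + m' b (bar a) = K := by
  intro n
  induction n with
  | zero =>
    intro m h hn
    refine ⟨m, h, fun _ _ => le_rfl, fun a b => ?_⟩
    by_contra hne
    have h1 := h.tri a b (bar a)
    rw [h.anti] at h1
    obtain ⟨m', h', hle, hlt⟩ := h.step hb hψ (a := a) (b := b) (by omega)
    have h2 : ∑ p : W × W, m' p.1 p.2 < ∑ p : W × W, m p.1 p.2 :=
      Finset.sum_lt_sum (fun p _ => hle _ _) ⟨(a, b), Finset.mem_univ _, hlt⟩
    have h3 : 0 ≤ ∑ p : W × W, m' p.1 p.2 := Finset.sum_nonneg fun p _ => h'.nonneg _ _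
    simp at hn
    omega
  | succ n ih =>
    intro m h hn
    by_cases hall : ∀ a b, m a b + m b (bar a) = K
    · exact ⟨m, h, fun _ _ => le_rfl, hall⟩
    push Not at hall
    obtain ⟨a, b, hne⟩ := hall
    have h1 := h.tri a b (bar a)
    rw [h.anti] at h1
    obtain ⟨m', h', hle, hlt⟩ := h.step hb hψ (a := a) (b := b) (by omega)
    have h2 : ∑ p : W × W, m' p.1 p.2 < ∑ p : W × W, m p.1 p.2 :=
      Finset.sum_lt_sum (fun p _ => hle _ _) ⟨(a, b), Finset.mem_univ _, hlt⟩
    obtain ⟨m'', h'', hle', ht⟩ := ih m' h' (by push_cast at hn; omega)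
    exact ⟨m'', h'', fun p q => (hle' p q).trans (hle p q), ht⟩

/-- Walks with `n` steps and total length `t` with respect to the step lengths `ω`. -/
inductive WR {W : Type} (ω : W → W → ℤ) : ℕ → W → W → ℤ → Prop
  | nil (a : W) : WR ω 0 a a 0
  | cons {n : ℕ} {b c : W} {t : ℤ} (a : W) (h : WR ω n b c t) : WR ω (n + 1) a c (ω a b + t)

lemma WR.append {W : Type} {ω : W → W → ℤ} {n n' : ℕ} {a b c : W} {t t' : ℤ}
    (h : WR ω n a b t) (h' : WR ω n' b c t') : WR ω (n + n') a c (t + t') := by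
  induction h with
  | nil a => simpa using h'
  | cons a h ih =>
    have := (ih h').cons a
    rw [← add_assoc] at this
    rwa [show ∀ k : ℕ, k + 1 + n' = k + n' + 1 from fun k => by omega]

lemma WR.single {W : Type} (ω : W → W → ℤ) (a b : W) : WR ω 1 a b (ω a b) := by
  simpa using (WR.nil b).cons (ω := ω) a

lemma WR.reverse {W : Type} {ω : W → W → ℤ} (hs : ∀ a b, ω a b = ω b a) {n : ℕ} {a b : W} {t : ℤ}
    (h : WR ω n a b t) : WR ω n b a t := by
  induction h with
  | nil a => exact WR.nil a
  | @cons n b c t a h ih =>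
    have := ih.append (WR.single ω b a)
    rwa [hs b a, add_comm t] at this

lemma WR.map {W : Type} {ω : W → W → ℤ} {g : W → W} (hg : ∀ a b, ω (g a) (g b) = ω a b) {n : ℕ}
    {a b : W} {t : ℤ} (h : WR ω n a b t) : WR ω n (g a) (g b) t := by
  induction h with
  | nil a => exact WR.nil _
  | @cons n b c t a h ih =>
    have := ih.cons (g a)
    rwa [hg] at this

lemma WR.nonneg {W : Type} {ω : W → W → ℤ} (h0 : ∀ a b, 0 ≤ ω a b) {n : ℕ} {a b : W} {t : ℤ}
    (h : WR ω n a b t) : 0 ≤ t := by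
  induction h with
  | nil a => exact le_rfl
  | @cons n b c t a h ih => have := h0 a b; omega

lemma WR.par {W : Type} {ω : W → W → ℤ} {ψ : W → ℤ} (hp : ∀ a b, Even (ω a b + ψ a + ψ b)) {n : ℕ}
    {a b : W} {t : ℤ} (h : WR ω n a b t) : Even (t + ψ a + ψ b) := by
  induction h with
  | nil a => simp
  | @cons n b c t a h ih =>
    have := hp a b
    rw [Int.even_iff] at *
    omega

lemma WR.seq {W : Type} {ω : W → W → ℤ} {n : ℕ} {a b : W} {t : ℤ} (h : WR ω n a b t) :
    ∃ p : ℕ → W, p 0 = a ∧ p n = b ∧ t = ∑ i ∈ Finset.Ico 0 n, ω (p i) (p (i + 1)) := by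
  induction h with
  | nil a => exact ⟨fun _ => a, rfl, rfl, by simp⟩
  | @cons n b c t a h ih =>
    obtain ⟨p, h0, hn, ht⟩ := ih
    refine ⟨fun i => Nat.casesOn i a p, rfl, hn, ?_⟩
    simp only [Nat.Ico_zero_eq_range] at ht ⊢
    rw [Finset.sum_range_succ', ht, add_comm, ← h0]
    rfl

lemma WR.of_seq {W : Type} (ω : W → W → ℤ) (p : ℕ → W) (i k : ℕ) :
    WR ω k (p i) (p (i + k)) (∑ l ∈ Finset.Ico i (i + k), ω (p l) (p (l + 1))) := by
  induction k with
  | zero => simpa using WR.nil _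
  | succ k ih =>
    have := ih.append (WR.single ω (p (i + k)) (p (i + k + 1)))
    rwa [← Finset.sum_Ico_succ_top (by omega)] at this

/-- The shortest-walk metric of `ω` has the required form as soon as antipodes are far apart. -/
lemma DM.of_walks {W : Type} {bar : W → W} {K : ℤ} {ψ : W → ℤ} {ω : W → W → ℤ}
    (h0 : ∀ a b, 0 ≤ ω a b) (hs : ∀ a b, ω a b = ω b a)
    (hinv : ∀ a b, ω (bar a) (bar b) = ω a b) (hb : ∀ a, bar (bar a) = a) (hK : ∀ a b, ω a b ≤ K)
    (ha : ∀ a, ω a (bar a) = K) (hp : ∀ a b, Even (ω a b + ψ a + ψ b))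
    (hfar : ∀ n a t, WR ω n a (bar a) t → K ≤ t) :
    ∃ m, DM bar K ψ m ∧ ∀ a b, m a b ≤ ω a b := by
  have hex : ∀ a b, ∃ t : ℤ, (∃ n, WR ω n a b t) ∧ ∀ t', (∃ n, WR ω n a b t') → t ≤ t' := by
    intro a b
    apply Int.exists_least_of_bdd
    · exact ⟨0, fun t ⟨n, hn⟩ => hn.nonneg h0⟩
    · exact ⟨_, 1, WR.single ω a b⟩
  choose m hm hmin using hex
  have hle : ∀ a b, m a b ≤ ω a b := fun a b => hmin a b _ ⟨1, WR.single ω a b⟩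
  refine ⟨m, ⟨?_, ?_, ?_, ?_, ?_, ?_, ?_⟩, hle⟩
  · intro a
    obtain ⟨n, hn⟩ := hm a a
    exact le_antisymm (hmin a a _ ⟨0, WR.nil a⟩) (hn.nonneg h0)
  · intro a b
    obtain ⟨n, hn⟩ := hm a b
    obtain ⟨n', hn'⟩ := hm b a
    exact le_antisymm (hmin a b _ ⟨n', hn'.reverse hs⟩) (hmin b a _ ⟨n, hn.reverse hs⟩)
  · intro a b
    obtain ⟨n, hn⟩ := hm a b
    obtain ⟨n', hn'⟩ := hm (bar a) (bar b)
    have := hn'.map hinv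
    rw [hb, hb] at this
    exact le_antisymm (hmin _ _ _ ⟨n, hn.map hinv⟩) (hmin a b _ ⟨n', this⟩)
  · intro a b c
    obtain ⟨n, hn⟩ := hm a b
    obtain ⟨n', hn'⟩ := hm b c
    exact hmin _ _ _ ⟨_, hn.append hn'⟩
  · exact fun a b => (hle a b).trans (hK a b)
  · intro a
    obtain ⟨n, hn⟩ := hm a (bar a)
    exact le_antisymm ((hle _ _).trans (ha a).le) (hfar n a _ hn)
  · intro a b
    obtain ⟨n, hn⟩ := hm a b
    exact hn.par hp

/-! ### The double cover of a bipartite graph -/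

/-- Edge lengths on a bipartite graph satisfying the range, parity and four-cycle conditions of a
`K`-dimensional cube; the parities are those of a potential `φ`. -/
structure QuadFeasible (G : SimpleGraph V) (K : ℤ) (φ : V → ℤ) (x : V → V → ℤ) : Prop where
  symm : ∀ u w, x u w = x w u
  bd : ∀ u w, G.Adj u w → 0 ≤ x u w ∧ x u w ≤ K
  par : ∀ u w, G.Adj u w → Even (x u w + φ u + φ w)
  quad : ∀ a b d e, G.Adj a b → G.Adj b d → G.Adj d e → G.Adj e a → a ≠ d → b ≠ e →
    x a b ≤ x b d + x d e + x e a ∧ x a b + x b d + x d e - x e a ≤ 2 * K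

/-- The antipodal involution of the double cover `V × Bool`. -/
def dbar (a : V × Bool) : V × Bool := (a.1, !a.2)

/-- The parity potential on the double cover. -/
def dpsi (K : ℤ) (φ : V → ℤ) (a : V × Bool) : ℤ := φ a.1 + if a.2 then K else 0

open Classical in
/-- Step lengths on the double cover: an edge of `G` has length `x` inside a sheet and `K - x`
between the sheets, and steps not coming from `G` have length `K` or `K - 1`, by parity. -/
noncomputable def dom (G : SimpleGraph V) (K : ℤ) (φ : V → ℤ) (x : V → V → ℤ)
    (a b : V × Bool) : ℤ :=
  if a.1 = b.1 then (if a.2 = b.2 then 0 else K)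
  else if G.Adj a.1 b.1 then (if a.2 = b.2 then x a.1 b.1 else K - x a.1 b.1)
  else if Even (K + dpsi K φ a + dpsi K φ b) then K else K - 1

lemma dbar_dbar (a : V × Bool) : dbar (dbar a) = a := by simp [dbar]

lemma dpsi_dbar (K : ℤ) (φ : V → ℤ) (a : V × Bool) :
    Even (dpsi K φ (dbar a) + dpsi K φ a + K) := by
  obtain ⟨u, s⟩ := a
  rw [Int.even_iff]
  cases s <;> simp [dpsi, dbar] <;> omega

section
variable {G : SimpleGraph V} {K : ℤ} {φ : V → ℤ} {x : V → V → ℤ}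

lemma dom_virt {a b : V × Bool} (h : ¬ (a.1 = b.1 ∨ G.Adj a.1 b.1)) :
    K - 1 ≤ dom G K φ x a b := by
  push Not at h
  unfold dom
  rw [if_neg h.1, if_neg h.2]
  split_ifs <;> omega

lemma dom_fit (hx : QuadFeasible G K φ x) {a b : V × Bool} (h : a.1 = b.1 ∨ G.Adj a.1 b.1) :
    dom G K φ x a b + dom G K φ x b (dbar a) = K := by
  obtain ⟨u, s⟩ := a
  obtain ⟨w, s'⟩ := b
  unfold dom dbar
  simp only at h ⊢
  by_cases huw : u = w
  · subst huw
    cases s <;> cases s' <;> simp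
  · have h' : G.Adj u w := h.resolve_left huw
    have := hx.symm u w
    simp only [huw, h', h'.symm, Ne.symm huw, if_true, if_false]
    cases s <;> cases s' <;> simp <;> omega

lemma dom_anti (a : V × Bool) : dom G K φ x a (dbar a) = K := by
  simp [dom, dbar]

lemma dom_nonneg (hx : QuadFeasible G K φ x) (hK : 1 ≤ K) (a b : V × Bool) :
    0 ≤ dom G K φ x a b := by
  unfold dom
  by_cases h : G.Adj a.1 b.1
  · have := hx.bd _ _ h
    split_ifs <;> omega
  · split_ifs <;> omega

lemma dom_le (hx : QuadFeasible G K φ x) (hK : 1 ≤ K) (a b : V × Bool) :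
    dom G K φ x a b ≤ K := by
  unfold dom
  by_cases h : G.Adj a.1 b.1
  · have := hx.bd _ _ h
    split_ifs <;> omega
  · split_ifs <;> omega

lemma dom_par (hx : QuadFeasible G K φ x) (a b : V × Bool) :
    Even (dom G K φ x a b + dpsi K φ a + dpsi K φ b) := by
  obtain ⟨u, s⟩ := a
  obtain ⟨w, s'⟩ := b
  unfold dom
  by_cases huw : u = w
  · subst huw
    rw [if_pos rfl, Int.even_iff]
    cases s <;> cases s' <;> simp [dpsi] <;> omega
  rw [if_neg huw]
  by_cases h : G.Adj u w
  · have := hx.par _ _ h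
    rw [if_pos h]
    rw [Int.even_iff] at *
    cases s <;> cases s' <;> simp [dpsi] <;> omega
  · rw [if_neg h]
    split_ifs with hE
    · exact hE
    · rw [Int.even_iff] at *
      omega

lemma dom_symm (hx : QuadFeasible G K φ x) (a b : V × Bool) :
    dom G K φ x a b = dom G K φ x b a := by
  unfold dom
  simp only [eq_comm (a := b.1), eq_comm (a := b.2), G.adj_comm b.1, hx.symm b.1,
    add_right_comm K (dpsi K φ b)]
  have h1 := G.adj_comm a.1 b.1
  have h2 := eq_comm (a := a.1) (b := b.1)
  split_ifs <;> first | rfl | (exfalso; tauto)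

lemma dom_inv (a b : V × Bool) :
    dom G K φ x (dbar a) (dbar b) = dom G K φ x a b := by
  have h1 := dpsi_dbar K φ a
  have h2 := dpsi_dbar K φ b
  have h3 : Even (K + dpsi K φ (dbar a) + dpsi K φ (dbar b)) ↔
      Even (K + dpsi K φ a + dpsi K φ b) := by
    rw [Int.even_iff] at *
    rw [Int.even_iff]
    omega
  unfold dom
  simp only [h3]
  simp only [dbar, Bool.not_inj_iff]
  by_cases e1 : a.1 = b.1
  · simp [e1]
  · by_cases e2 : G.Adj a.1 b.1 <;> simp [e1, e2]

/-- Antipodal points of the double cover are far apart: a shortest counterexample projects to an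
induced cycle of `G`, which has length four. -/
lemma dom_far {c : V → Bool} (hc : CB G c) (hx : QuadFeasible G K φ x) (hK : 1 ≤ K) :
    ∀ n a t, WR (dom G K φ x) n a (dbar a) t → K ≤ t := by
  intro n
  induction n using Nat.strong_induction_on with
  | _ n ih =>
  intro a t hw
  by_contra hlt
  have hpar : Even (t + K) := by
    have h1 := hw.par (dom_par hx)
    have h2 := dpsi_dbar K φ a
    rw [Int.even_iff] at *
    omega
  obtain ⟨p, hp0, hpn, ht⟩ := hw.seq
  set ω := dom G K φ x with hω
  obtain ⟨S, hS⟩ : ∃ S : ℕ → ℕ → ℤ, S = fun i j => ∑ l ∈ Finset.Ico i j, ω (p l) (p (l + 1)) :=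
    ⟨_, rfl⟩
  have hw' : ∀ i j, i ≤ j → WR ω (j - i) (p i) (p j) (S i j) := by
    intro i j hij
    obtain ⟨k, rfl⟩ := Nat.exists_eq_add_of_le hij
    rw [hS, Nat.add_sub_cancel_left]
    exact WR.of_seq ω p i k
  have hS0 : t = S 0 n := by rw [ht, hS]
  have hadd : ∀ i j, i ≤ j → j ≤ n → S 0 n = S 0 i + S i j + S j n := by
    intro i j h1 h2
    rw [hS]
    beta_reduce
    rw [Finset.sum_Ico_consecutive _ (Nat.zero_le _) h1,
      Finset.sum_Ico_consecutive _ (Nat.zero_le _) h2]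
  have hSn : ∀ i j, 0 ≤ S i j := by
    intro i j
    rw [hS]
    exact Finset.sum_nonneg fun l _ => dom_nonneg hx hK _ _
  have hS1 : ∀ i, S i (i + 1) = ω (p i) (p (i + 1)) := by
    intro i
    rw [hS]
    simp
  have hstep : ∀ i, i < n → ω (p i) (p (i + 1)) ≤ t := by
    intro i hi
    have h1 := hadd i (i + 1) (by omega) (by omega)
    have h2 := hSn 0 i
    have h3 := hSn (i + 1) n
    have h4 := hS1 i
    omega
  rw [Int.even_iff] at hpar
  have hreal : ∀ i, i < n → (p i).1 = (p (i + 1)).1 ∨ G.Adj (p i).1 (p (i + 1)).1 := by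
    intro i hi
    by_contra h
    have h1 : K - 1 ≤ ω _ _ := dom_virt (K := K) (φ := φ) (x := x) h
    have h2 := hstep i hi
    omega
  -- a chord splits the walk into two shorter ones, joining antipodes each
  have hchord : ∀ i j, i < j → j ≤ n → 2 ≤ j - i → j - i ≤ n - 2 →
      ¬ ((p i).1 = (p j).1 ∨ G.Adj (p i).1 (p j).1) := by
    intro i j h1 h2 h3 h4 h
    have t1 := ((hw' 0 i (by omega)).append (WR.single ω (p i) (p j))).append (hw' j n h2)
    rw [hp0, hpn] at t1
    have t2 := (hw' i j h1.le).append (WR.single ω (p j) (dbar (p i)))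
    have k1 := ih _ (by omega) _ _ t1
    have k2 := ih _ (by omega) _ _ t2
    have k3 := hadd i j h1.le h2
    have k4 : ω _ _ + ω _ _ = K := dom_fit hx h
    omega
  have hadj : ∀ i, i < n → G.Adj (p i).1 (p (i + 1)).1 := by
    intro i hi
    refine (hreal i hi).resolve_left fun h => ?_
    by_cases h' : (p i).2 = (p (i + 1)).2
    · have e : p i = p (i + 1) := Prod.ext h h'
      have t1 := hw' 0 i (by omega)
      rw [e] at t1
      have t2 := t1.append (hw' (i + 1) n (by omega))
      rw [hp0, hpn] at t2
      have k1 := ih _ (by omega) _ _ t2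
      have k3 := hadd i (i + 1) (by omega) (by omega)
      have := hSn i (i + 1)
      omega
    · have e : p (i + 1) = dbar (p i) := by
        refine Prod.ext h.symm ?_
        simp only [dbar]
        exact Bool.eq_not.mpr (Ne.symm h')
      have h1 := hstep i hi
      have h2 : ω (p i) (dbar (p i)) = K := dom_anti _
      rw [e] at h1
      omega
  have hcol : ∀ i, i ≤ n → (c (p i).1 = c (p 0).1 ↔ Even i) := by
    intro i
    induction i with
    | zero => simp
    | succ i ih =>
      intro hi
      have h1 := ih (by omega)
      have h2 := hc.col _ _ (hadj i (by omega))
      rw [Nat.even_add_one, ← h1]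
      revert h2
      cases c (p i).1 <;> cases c (p (i + 1)).1 <;> cases c (p 0).1 <;> simp
  have hn0 : (p n).1 = (p 0).1 := by rw [hpn, hp0]; rfl
  have hev : Even n := (hcol n le_rfl).1 (congrArg c hn0)
  rcases Nat.lt_or_ge n 6 with hn6 | hn6
  · obtain rfl | rfl | rfl : n = 0 ∨ n = 2 ∨ n = 4 := by
      rw [Nat.even_iff] at hev
      omega
    · have e : a = dbar a := hp0.symm.trans hpn
      have := congrArg Prod.snd e
      simp [dbar] at this
    · have h1 : ω _ _ + ω _ _ = K := dom_fit hx (hreal 0 (by omega))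
      have h2 : S 0 1 = ω (p 0) (p 1) := hS1 0
      have h3 : S 1 2 = ω (p 1) (p 2) := hS1 1
      have h4 : S 0 2 = S 0 0 + S 0 1 + S 1 2 := hadd 0 1 (by omega) (by omega)
      have h5 := hSn 0 0
      rw [hpn, ← hp0] at h3
      simp only [Nat.zero_add] at h1
      omega
    · have a0 := hadj 0 (by omega)
      have a1 := hadj 1 (by omega)
      have a2 := hadj 2 (by omega)
      have a3 := hadj 3 (by omega)
      have n1 := hchord 0 2 (by omega) (by omega) (by omega) (by omega)
      have n2 := hchord 1 3 (by omega) (by omega) (by omega) (by omega)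
      push Not at n1 n2
      simp only [Nat.zero_add, Nat.reduceAdd] at a0 a1 a2 a3 n1 n2
      rw [hn0] at a3
      have q1 := hx.quad _ _ _ _ a0 a1 a2 a3 n1.1 n2.1
      have q2 := hx.quad _ _ _ _ a1 a2 a3 a0 n2.1 n1.1.symm
      have q3 := hx.quad _ _ _ _ a2 a3 a0 a1 n1.1.symm n2.1.symm
      have q4 := hx.quad _ _ _ _ a3 a0 a1 a2 n2.1.symm n1.1
      have hdom : ∀ a b : V × Bool, G.Adj a.1 b.1 →
          ω a b = if a.2 = b.2 then x a.1 b.1 else K - x a.1 b.1 := by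
        intro a b h
        rw [hω, dom, if_neg h.ne, if_pos h]
      have hsum : t = ω (p 0) (p 1) + ω (p 1) (p 2) + ω (p 2) (p 3) + ω (p 3) (p 4) := by
        rw [ht]
        simp [Finset.sum_range_succ]
      have e4 : (p 4).2 = !(p 0).2 := by rw [hpn, hp0]; rfl
      rw [hdom _ _ a0, hdom _ _ a1, hdom _ _ a2, hdom (p 3) (p 4) (by rw [hn0]; exact a3), hn0,
        e4] at hsum
      generalize (p 0).2 = s0 at hsum
      generalize (p 1).2 = s1 at hsum
      generalize (p 2).2 = s2 at hsum
      generalize (p 3).2 = s3 at hsum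
      cases s0 <;> cases s1 <;> cases s2 <;> cases s3 <;> simp at hsum <;> omega
  · refine hc.no6 n hn6 (induced_of_fun (by omega) (fun i => (p i).1) fun i j hij hj => ?_)
    by_cases h1 : j = i + 1
    · subst h1
      have := hadj i (by omega)
      exact ⟨this.ne, by simp [this]⟩
    by_cases h2 : i = 0 ∧ j = n - 1
    · have := hadj j hj
      rw [h2.2, Nat.sub_add_cancel (by omega), hn0, ← h2.2, ← h2.1] at this
      exact ⟨this.ne.symm, by simp only [h2, and_self, or_true, iff_true]; rw [← h2.1, ← h2.2]; exact this.symm⟩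
    · have := hchord i j hij hj.le (by omega) (by omega)
      push Not at this
      exact ⟨this.1, by simp [this.2, h1, h2]⟩

end

/-- Feasible edge lengths on a bipartite graph without long induced cycles extend to a metric. -/
theorem quad_extend [Fintype V] {G : SimpleGraph V} {c : V → Bool} (hc : CB G c) {K : ℕ}
    {φ : V → ℤ} {x : V → V → ℤ} (hx : QuadFeasible G K φ x) :
    ∃ d, AM K d ∧ ∀ u w, G.Adj u w → d u w = x u w := by
  rcases Nat.eq_zero_or_pos K with rfl | hK
  · refine ⟨fun _ _ => 0, ⟨by simp, by simp, by simp, by simp, by simp⟩, fun u w h => ?_⟩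
    have := hx.bd u w h
    push_cast at this
    show (0 : ℤ) = x u w
    omega
  have hK' : (1 : ℤ) ≤ K := by exact_mod_cast hK
  obtain ⟨m, hm, hmle⟩ := DM.of_walks (dom_nonneg hx hK') (dom_symm hx) dom_inv dbar_dbar
    (dom_le hx hK') dom_anti (dom_par hx) (dom_far hc hx hK')
  obtain ⟨m', hm', hle, ht⟩ := DM.exists_tight dbar_dbar (dpsi_dbar (K : ℤ) φ) (∑ p : (V × Bool) × (V × Bool), m p.1 p.2).toNat m
    hm (Int.self_le_toNat _)
  refine ⟨fun u w => m' (u, false) (w, false), ⟨fun u => hm'.zero _, fun u w => hm'.symm _ _,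
    fun u w t => hm'.tri _ _ _, fun u w t => ?_, fun u w t => ?_⟩, fun u w h => ?_⟩
  · have h1 := ht (u, false) (w, false)
    have h2 := ht (u, false) (t, false)
    have h3 := hm'.tri (w, false) (dbar (u, false)) (t, false)
    have h4 := hm'.symm (dbar (u, false)) (t, false)
    omega
  · have h1 := hm'.par (u, false) (w, false)
    have h2 := hm'.par (w, false) (t, false)
    have h3 := hm'.par (u, false) (t, false)
    rw [Int.even_iff] at *
    omega
  · have h1 := (hle (u, false) (w, false)).trans (hmle _ _)
    have h2 := (hle (w, false) (dbar (u, false))).trans (hmle _ _)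
    have h3 := ht (u, false) (w, false)
    have e1 : dom G K φ x (u, false) (w, false) = x u w := by
      rw [dom, if_neg h.ne, if_pos h, if_pos rfl]
    have e2 := dom_fit hx (a := (u, false)) (b := (w, false)) (Or.inr h)
    simp only
    omega

/-! ### Cut monoids and cube maps -/

lemma ham_eq_sum {ι : Type} [Fintype ι] (f g : ι → Bool) :
    (hammingDist f g : ℤ) = ∑ i, if f i = g i then 0 else 1 := by
  rw [hammingDist, Finset.card_filter]
  push_cast
  refine Finset.sum_congr rfl fun i _ => ?_
  by_cases h : f i = g i <;> simp [h]

lemma ham_par {ι : Type} [Fintype ι] (f g : ι → Bool) :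
    Even ((hammingDist f g : ℤ) + (∑ i, if f i then 1 else 0) + ∑ i, if g i then 1 else 0) := by
  rw [ham_eq_sum, ← Finset.sum_add_distrib, ← Finset.sum_add_distrib]
  refine Finset.even_sum _ fun i _ => ?_
  cases f i <;> cases g i <;> decide

lemma ham_comp_equiv {ι κ : Type} [Fintype ι] [Fintype κ] (e : κ ≃ ι) (f g : ι → Bool) :
    hammingDist (f ∘ e) (g ∘ e) = hammingDist f g := by
  have : (hammingDist (f ∘ e) (g ∘ e) : ℤ) = hammingDist f g := by
    rw [ham_eq_sum, ham_eq_sum]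
    exact e.sum_comp fun i => if f i = g i then (0 : ℤ) else 1
  exact_mod_cast this

lemma cutVec_mk (A : Set V) (u w : V) [Decidable (u ∈ A ↔ w ∈ A)] :
    cutVec A s(u, w) = if (u ∈ A ↔ w ∈ A) then 0 else 1 := by
  simp only [cutVec, Sym2.lift_mk]
  split_ifs <;> rfl

lemma cut_mem (G : SimpleGraph V) (A : Set V) :
    ((fun e => cutVec A e.1, 1) : (G.edgeSet → ℤ) × ℤ) ∈ cutMonoid G :=
  AddSubmonoid.subset_closure ⟨A, rfl⟩

/-- A map to the `ι`-cube is a family of cuts indexed by `ι`, whose sum lies in the cut monoid. -/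
lemma mem_of_repr {G : SimpleGraph V} {ι : Type} [Fintype ι] (f : V → ι → Bool)
    (p : (G.edgeSet → ℤ) × ℤ) (h2 : p.2 = Fintype.card ι)
    (h1 : ∀ u w (h : G.Adj u w), p.1 ⟨s(u, w), h⟩ = hammingDist (f u) (f w)) :
    p ∈ cutMonoid G := by
  classical
  have : p = ∑ i, ((fun e => cutVec {u | f u i = true} e.1, 1) : (G.edgeSet → ℤ) × ℤ) := by
    refine Prod.ext (funext ?_) ?_
    · rintro ⟨e, he⟩
      induction e using Sym2.ind with
      | _ u w =>
        rw [h1 u w he, ham_eq_sum, Prod.fst_sum, Finset.sum_apply]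
        refine Finset.sum_congr rfl fun i _ => ?_
        change _ = cutVec {u | f u i = true} s(u, w)
        rw [cutVec_mk]
        simp only [Set.mem_ofPred_eq, Bool.coe_iff_coe]
    · rw [h2, Prod.snd_sum]
      simp
  rw [this]
  exact sum_mem fun i _ => cut_mem G _

/-- An element of the cut monoid of degree `k` lists the edge lengths of a map to the `k`-cube. -/
lemma repr_of_mem {G : SimpleGraph V} {p : (G.edgeSet → ℤ) × ℤ} (hp : p ∈ cutMonoid G) :
    ∃ (k : ℕ) (f : V → Fin k → Bool), p.2 = k ∧
      ∀ u w (h : G.Adj u w), p.1 ⟨s(u, w), h⟩ = hammingDist (f u) (f w) := by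
  classical
  have key : ∃ (ι : Type) (_ : Fintype ι) (f : V → ι → Bool), p.2 = Fintype.card ι ∧
      ∀ u w (h : G.Adj u w), p.1 ⟨s(u, w), h⟩ = hammingDist (f u) (f w) := by
    induction hp using AddSubmonoid.closure_induction with
    | mem x hx =>
      obtain ⟨A, rfl⟩ := hx
      refine ⟨Unit, inferInstance, fun u _ => decide (u ∈ A), by simp, fun u w h => ?_⟩
      rw [ham_eq_sum]
      change cutVec A s(u, w) = _
      rw [cutVec_mk]
      simp
    | zero => exact ⟨Empty, inferInstance, fun _ i => i.elim, by simp, fun u w h => by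
        rw [ham_eq_sum]; simp⟩
    | add x y _ _ ihx ihy =>
      obtain ⟨ι, _, f, hf, hf'⟩ := ihx
      obtain ⟨κ, _, g, hg, hg'⟩ := ihy
      refine ⟨ι ⊕ κ, inferInstance, fun u => Sum.elim (f u) (g u), ?_, fun u w h => ?_⟩
      · rw [Prod.snd_add, hf, hg, Fintype.card_sum]
        push_cast
        rfl
      · rw [Prod.fst_add, Pi.add_apply, hf', hg', ham_eq_sum, ham_eq_sum, ham_eq_sum,
          Fintype.sum_sum_type]
        rfl
  obtain ⟨ι, _, f, hf, hf'⟩ := key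
  refine ⟨Fintype.card ι, fun u => f u ∘ (Fintype.equivFin ι).symm, hf, fun u w h => ?_⟩
  rw [hf', ham_comp_equiv]

/-! ### The interior of the cut cone -/

/-- The generator `(δ_A, 1)` in the real space. -/
noncomputable def rcut (G : SimpleGraph V) (A : Set V) : (G.edgeSet → ℝ) × ℝ :=
  (fun e => ((cutVec A e.1 : ℤ) : ℝ), (1 : ℝ))

lemma rcut_mem (G : SimpleGraph V) (A : Set V) {c : ℝ} (hc : 0 ≤ c) : c • rcut G A ∈ cutCone G :=
  AddSubmonoid.subset_closure ⟨c, A, hc, rfl⟩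

lemma cutCone_add {G : SimpleGraph V} {y z : (G.edgeSet → ℝ) × ℝ} (hy : y ∈ cutCone G)
    (hz : z ∈ cutCone G) : y + z ∈ cutCone G :=
  (AddSubmonoid.closure (cutConeGens G)).add_mem hy hz

lemma interior_add {G : SimpleGraph V} {y z : (G.edgeSet → ℝ) × ℝ}
    (hy : y ∈ interior (cutCone G)) (hz : z ∈ cutCone G) : y + z ∈ interior (cutCone G) := by
  have ho : IsOpen ((Homeomorph.addRight z) '' interior (cutCone G)) :=
    (Homeomorph.addRight z).isOpenMap _ isOpen_interior
  refine interior_maximal ?_ ho ⟨y, hy, rfl⟩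
  rintro _ ⟨y', hy', rfl⟩
  exact cutCone_add (interior_subset hy') hz

/-- A linear functional that is nonnegative on all cuts and positive on some cut is positive on the
interior of the cone. -/
lemma pos_of_interior {G : SimpleGraph V} {y : (G.edgeSet → ℝ) × ℝ}
    (hy : y ∈ interior (cutCone G)) (L : ((G.edgeSet → ℝ) × ℝ) →ₗ[ℝ] ℝ)
    (hL : ∀ A, 0 ≤ L (rcut G A)) (hA : ∃ A, 0 < L (rcut G A)) : 0 < L y := by
  have hnn : ∀ z ∈ cutCone G, 0 ≤ L z := by
    intro z hz
    induction hz using AddSubmonoid.closure_induction with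
    | mem z hz =>
      obtain ⟨c, A, hc, rfl⟩ := hz
      rw [map_smul, smul_eq_mul]
      exact mul_nonneg hc (hL A)
    | zero => simp
    | add a b _ _ ha hb =>
      rw [map_add]
      exact add_nonneg ha hb
  obtain ⟨A, hA⟩ := hA
  have hcont : ContinuousAt (fun ε : ℝ => y - ε • rcut G A) 0 := by fun_prop
  have hnhds : cutCone G ∈ nhds (y - (0 : ℝ) • rcut G A) := by
    rw [zero_smul, sub_zero]
    exact mem_interior_iff_mem_nhds.mp hy
  have hev := hcont.eventually hnhds
  obtain ⟨δ, hδ, hball⟩ := Metric.eventually_nhds_iff.mp hev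
  have h1 := hball (y := δ / 2) (by
    rw [Real.dist_eq, sub_zero, abs_of_pos (by linarith)]
    linarith)
  have h2 := hnn _ h1
  rw [map_sub, map_smul, smul_eq_mul] at h2
  have : 0 < δ / 2 * L (rcut G A) := by positivity
  linarith

/-- The cut vectors span the whole space, so positive combinations of all of them form an open
set. -/
lemma sum_mem_interior [Finite V] [Fintype (Set V)] (G : SimpleGraph V) (t : Set V → ℝ)
    (ht : ∀ A, 0 < t A) : ∑ A, t A • rcut G A ∈ interior (cutCone G) := by
  classical
  have := Fintype.ofFinite V
  let Φ : (Set V → ℝ) →ₗ[ℝ] ((G.edgeSet → ℝ) × ℝ) :=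
    { toFun := fun t => ∑ A, t A • rcut G A
      map_add' := fun s t => by
        simp only [Pi.add_apply, add_smul, Finset.sum_add_distrib]
      map_smul' := fun c t => by
        simp only [Pi.smul_apply, smul_eq_mul, mul_smul, Finset.smul_sum, RingHom.id_apply] }
  have hΦ : ∀ t, Φ t = ∑ A, t A • rcut G A := fun _ => rfl
  have hcut : ∀ A, rcut G A ∈ LinearMap.range Φ := by
    intro A
    refine ⟨Pi.single A 1, ?_⟩
    rw [hΦ, Finset.sum_eq_single A]
    · simp
    · intro B _ hB
      simp [hB]
    · simp
  have hedge : ∀ e : G.edgeSet, ((Pi.single e 1, 0) : (G.edgeSet → ℝ) × ℝ) ∈ LinearMap.range Φ := by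
    rintro ⟨e, he⟩
    induction e using Sym2.ind with
    | _ u w =>
    have huw : u ≠ w := (show G.Adj u w from he).ne
    have h := (LinearMap.range Φ).smul_mem (1 / 2 : ℝ) ((LinearMap.range Φ).sub_mem
      ((LinearMap.range Φ).sub_mem ((LinearMap.range Φ).add_mem (hcut {u}) (hcut {w}))
        (hcut {u, w})) (hcut ∅))
    convert h using 1
    refine Prod.ext (funext ?_) ?_
    · rintro ⟨e', he'⟩
      induction e' using Sym2.ind with
      | _ a b =>
      have hab : a ≠ b := (show G.Adj a b from he').ne
      simp only [rcut, Prod.smul_fst, Prod.fst_sub, Prod.fst_add, Pi.smul_apply, Pi.sub_apply,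
        Pi.add_apply, cutVec_mk, Pi.single_apply, Subtype.mk.injEq, Sym2.eq_iff,
        Set.mem_singleton_iff, Set.mem_insert_iff, Set.mem_empty_iff_false]
      by_cases h1 : a = u <;> by_cases h2 : a = w <;> by_cases h3 : b = u <;>
        by_cases h4 : b = w <;> simp [h1, h2, h3, h4] <;> first | done | grind
    · simp [rcut]
  have h01 : ((0, 1) : (G.edgeSet → ℝ) × ℝ) ∈ LinearMap.range Φ := by
    convert hcut ∅ using 1
    refine Prod.ext (funext ?_) rfl
    rintro ⟨e', he'⟩
    induction e' using Sym2.ind with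
    | _ a b => simp [rcut, cutVec_mk]
  have hsurj : Function.Surjective Φ := by
    intro q
    have : q = (∑ e, q.1 e • ((Pi.single e 1, 0) : (G.edgeSet → ℝ) × ℝ)) + q.2 • (0, 1) := by
      refine Prod.ext (funext fun e => ?_) ?_
      · simp [Prod.fst_sum, Finset.sum_apply, Pi.single_apply]
      · simp [Prod.snd_sum]
    rw [this]
    exact (LinearMap.range Φ).add_mem ((LinearMap.range Φ).sum_mem fun e _ =>
      (LinearMap.range Φ).smul_mem _ (hedge e)) ((LinearMap.range Φ).smul_mem _ h01)
  have ho : IsOpen (Φ '' Set.univ.pi fun _ => Set.Ioi 0) :=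
    Φ.isOpenMap_of_finiteDimensional hsurj _ (isOpen_set_pi Set.finite_univ fun _ _ => isOpen_Ioi)
  refine interior_maximal ?_ ho ⟨t, fun A _ => ht A, hΦ t⟩
  rintro _ ⟨s, hs, rfl⟩
  rw [hΦ]
  exact (AddSubmonoid.closure (cutConeGens G)).sum_mem fun A _ =>
    rcut_mem G A (le_of_lt (hs A trivial))

/-- The average of all cuts takes the value `1/2` on every edge. -/
lemma const_mem_interior [Finite V] (G : SimpleGraph V) {a : ℝ} (ha : 0 < a) :
    ((fun _ => a, 2 * a) : (G.edgeSet → ℝ) × ℝ) ∈ interior (cutCone G) := by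
  classical
  have := Fintype.ofFinite (Set V)
  have hN : (0 : ℝ) < Fintype.card (Set V) := by exact_mod_cast Fintype.card_pos
  convert sum_mem_interior G (fun _ => 2 * a / Fintype.card (Set V)) (fun _ => by positivity) using 1
  rw [← Finset.smul_sum]
  refine Prod.ext (funext ?_) ?_
  · rintro ⟨e, he⟩
    induction e using Sym2.ind with
    | _ u w =>
    have huw : u ≠ w := (show G.Adj u w from he).ne
    have hinv : Function.Involutive fun A : Set V => {z | ¬ (z ∈ A ↔ z = u)} := by
      intro A
      ext z
      simp only [Set.mem_ofPred_eq]
      tauto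
    obtain ⟨τ, hτ⟩ : ∃ τ : Equiv.Perm (Set V), ∀ A, τ A = {z | ¬ (z ∈ A ↔ z = u)} :=
      ⟨Function.Involutive.toPerm _ hinv, fun _ => rfl⟩
    have h1 := Equiv.sum_comp τ fun A => ((cutVec A s(u, w) : ℤ) : ℝ)
    have h2 : ∀ A : Set V, ((cutVec (τ A) s(u, w) : ℤ) : ℝ) = 1 - cutVec A s(u, w) := by
      intro A
      rw [hτ, cutVec_mk, cutVec_mk]
      by_cases h3 : u ∈ A <;> by_cases h4 : w ∈ A <;> simp [h3, h4, huw.symm]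
    simp only [h2, Finset.sum_sub_distrib, Finset.sum_const, Finset.card_univ, nsmul_eq_mul,
      mul_one] at h1
    have h3 : ∑ A : Set V, ((cutVec A s(u, w) : ℤ) : ℝ) = Fintype.card (Set V) / 2 := by linarith
    simp only [Prod.smul_fst, Pi.smul_apply, Prod.fst_sum, Finset.sum_apply, rcut, smul_eq_mul, h3]
    field_simp
  · simp only [Prod.smul_snd, Prod.snd_sum, rcut, smul_eq_mul, Finset.sum_const, Finset.card_univ,
      nsmul_eq_mul, mul_one]
    field_simp

/-! ### Strict inequalities at interior points -/

/-- The coordinate of an edge, as a linear functional. -/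
noncomputable def evE (G : SimpleGraph V) {u w : V} (h : G.Adj u w) :
    ((G.edgeSet → ℝ) × ℝ) →ₗ[ℝ] ℝ :=
  (LinearMap.proj (⟨s(u, w), h⟩ : G.edgeSet)).comp (LinearMap.fst ℝ (G.edgeSet → ℝ) ℝ)

/-- The degree, as a linear functional. -/
noncomputable def dgE (G : SimpleGraph V) : ((G.edgeSet → ℝ) × ℝ) →ₗ[ℝ] ℝ :=
  LinearMap.snd ℝ (G.edgeSet → ℝ) ℝ

lemma evE_rcut (G : SimpleGraph V) {u w : V} (h : G.Adj u w) (A : Set V) :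
    evE G h (rcut G A) = ((cutVec A s(u, w) : ℤ) : ℝ) := rfl

lemma dgE_rcut (G : SimpleGraph V) (A : Set V) : dgE G (rcut G A) = 1 := rfl

section
variable {G : SimpleGraph V} {p : (G.edgeSet → ℤ) × ℤ} {k : ℕ} {f : V → Fin k → Bool}

lemma evE_val (hf : ∀ u w (h : G.Adj u w), p.1 ⟨s(u, w), h⟩ = hammingDist (f u) (f w)) {u w : V}
    (h : G.Adj u w) : evE G h (toRealCut G p) = (hammingDist (f u) (f w) : ℝ) := by
  change ((p.1 ⟨s(u, w), h⟩ : ℤ) : ℝ) = _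
  rw [hf]
  simp

lemma dgE_val (hk : p.2 = k) : dgE G (toRealCut G p) = k := by
  change ((p.2 : ℤ) : ℝ) = _
  rw [hk]
  simp

/-- At interior points the inequalities `0 ≤ x ≤ k` on an edge are strict. -/
lemma edge_strict (hp : p ∈ cutInterior G) (hk : p.2 = k)
    (hf : ∀ u w (h : G.Adj u w), p.1 ⟨s(u, w), h⟩ = hammingDist (f u) (f w)) {u w : V}
    (h : G.Adj u w) : 1 ≤ (hammingDist (f u) (f w) : ℤ) ∧ (hammingDist (f u) (f w) : ℤ) + 1 ≤ k := by
  classical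
  constructor
  · have := pos_of_interior hp.2 (evE G h) (fun A => by
      rw [evE_rcut, cutVec_mk]; split_ifs <;> simp) ⟨{u}, by
      rw [evE_rcut, cutVec_mk]; simp [h.ne.symm]⟩
    rw [evE_val hf] at this
    exact_mod_cast this
  · have := pos_of_interior hp.2 (dgE G - evE G h) (fun A => by
      rw [LinearMap.sub_apply, evE_rcut, dgE_rcut, cutVec_mk]; split_ifs <;> simp) ⟨∅, by
      rw [LinearMap.sub_apply, evE_rcut, dgE_rcut, cutVec_mk]; simp⟩
    rw [LinearMap.sub_apply, evE_val hf, dgE_val hk] at this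
    have h2 : (hammingDist (f u) (f w) : ℝ) < k := by linarith
    have h3 : hammingDist (f u) (f w) < k := by exact_mod_cast h2
    omega

/-- At interior points the triangle inequalities are strict, hence by parity hold with slack two. -/
lemma tri_strict (hp : p ∈ cutInterior G) (hk : p.2 = k)
    (hf : ∀ u w (h : G.Adj u w), p.1 ⟨s(u, w), h⟩ = hammingDist (f u) (f w)) {a b d : V}
    (hab : G.Adj a b) (hbd : G.Adj b d) (had : G.Adj a d) :
    (hammingDist (f a) (f d) : ℤ) + 2 ≤ hammingDist (f a) (f b) + hammingDist (f b) (f d) ∧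
    (hammingDist (f a) (f b) : ℤ) + hammingDist (f b) (f d) + hammingDist (f a) (f d) + 2 ≤
      2 * k ∧
    Even ((hammingDist (f a) (f b) : ℤ) + hammingDist (f b) (f d) + hammingDist (f a) (f d)) := by
  classical
  have e1 := ham_par (f a) (f b)
  have e2 := ham_par (f b) (f d)
  have e3 := ham_par (f a) (f d)
  have h1 := pos_of_interior hp.2 (evE G hab + evE G hbd - evE G had) (fun A => by
      rw [LinearMap.sub_apply, LinearMap.add_apply, evE_rcut, evE_rcut, evE_rcut, cutVec_mk,
        cutVec_mk, cutVec_mk]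
      by_cases ha : a ∈ A <;> by_cases hb : b ∈ A <;> by_cases hd : d ∈ A <;>
        simp [ha, hb, hd]) ⟨{b}, by
      rw [LinearMap.sub_apply, LinearMap.add_apply, evE_rcut, evE_rcut, evE_rcut, cutVec_mk,
        cutVec_mk, cutVec_mk]
      simp [hab.ne, hbd.ne.symm]⟩
  have h2 := pos_of_interior hp.2 ((2 : ℝ) • dgE G - evE G hab - evE G hbd - evE G had) (fun A => by
      rw [LinearMap.sub_apply, LinearMap.sub_apply, LinearMap.sub_apply, LinearMap.smul_apply,
        evE_rcut, evE_rcut, evE_rcut, dgE_rcut, cutVec_mk, cutVec_mk, cutVec_mk]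
      by_cases ha : a ∈ A <;> by_cases hb : b ∈ A <;> by_cases hd : d ∈ A <;>
        simp [ha, hb, hd] <;> norm_num) ⟨∅, by
      rw [LinearMap.sub_apply, LinearMap.sub_apply, LinearMap.sub_apply, LinearMap.smul_apply,
        evE_rcut, evE_rcut, evE_rcut, dgE_rcut, cutVec_mk, cutVec_mk, cutVec_mk]
      simp⟩
  rw [LinearMap.sub_apply, LinearMap.add_apply, evE_val hf, evE_val hf, evE_val hf] at h1
  rw [LinearMap.sub_apply, LinearMap.sub_apply, LinearMap.sub_apply, LinearMap.smul_apply,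
    smul_eq_mul, dgE_val hk, evE_val hf, evE_val hf, evE_val hf] at h2
  have h1' : (hammingDist (f a) (f d) : ℝ) <
    (hammingDist (f a) (f b) + hammingDist (f b) (f d) : ℕ) := by push_cast; linarith
  have h2' : ((hammingDist (f a) (f b) + hammingDist (f b) (f d) + hammingDist (f a) (f d) : ℕ) : ℝ) <
    (2 * k : ℕ) := by push_cast; linarith
  rw [Nat.cast_lt] at h1' h2'
  rw [Int.even_iff] at *
  omega

/-- At interior points the four-cycle inequalities are strict, hence by parity hold with slack two. -/
lemma quad_strict (hp : p ∈ cutInterior G) (hk : p.2 = k)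
    (hf : ∀ u w (h : G.Adj u w), p.1 ⟨s(u, w), h⟩ = hammingDist (f u) (f w)) {a b d e : V}
    (hab : G.Adj a b) (hbd : G.Adj b d) (hde : G.Adj d e) (hea : G.Adj e a) (had : a ≠ d) :
    (hammingDist (f a) (f b) : ℤ) + 2 ≤
      hammingDist (f b) (f d) + hammingDist (f d) (f e) + hammingDist (f e) (f a) ∧
    (hammingDist (f a) (f b) : ℤ) + hammingDist (f b) (f d) + hammingDist (f d) (f e) + 2 ≤
      2 * k + hammingDist (f e) (f a) := by
  classical
  have e1 := ham_par (f a) (f b)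
  have e2 := ham_par (f b) (f d)
  have e3 := ham_par (f d) (f e)
  have e4 := ham_par (f e) (f a)
  have h1 := pos_of_interior hp.2 (evE G hbd + evE G hde + evE G hea - evE G hab) (fun A => by
      rw [LinearMap.sub_apply, LinearMap.add_apply, LinearMap.add_apply, evE_rcut, evE_rcut,
        evE_rcut, evE_rcut, cutVec_mk, cutVec_mk, cutVec_mk, cutVec_mk]
      by_cases ha : a ∈ A <;> by_cases hb : b ∈ A <;> by_cases hd : d ∈ A <;>
        by_cases he : e ∈ A <;> simp [ha, hb, hd, he]) ⟨{d}, by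
      rw [LinearMap.sub_apply, LinearMap.add_apply, LinearMap.add_apply, evE_rcut, evE_rcut,
        evE_rcut, evE_rcut, cutVec_mk, cutVec_mk, cutVec_mk, cutVec_mk]
      simp [had, hbd.ne, hde.ne.symm]⟩
  have h2 := pos_of_interior hp.2 ((2 : ℝ) • dgE G - evE G hab - evE G hbd - evE G hde + evE G hea)
    (fun A => by
      rw [LinearMap.add_apply, LinearMap.sub_apply, LinearMap.sub_apply, LinearMap.sub_apply,
        LinearMap.smul_apply, evE_rcut, evE_rcut, evE_rcut, evE_rcut, dgE_rcut, cutVec_mk,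
        cutVec_mk, cutVec_mk, cutVec_mk]
      by_cases ha : a ∈ A <;> by_cases hb : b ∈ A <;> by_cases hd : d ∈ A <;>
        by_cases he : e ∈ A <;> simp [ha, hb, hd, he] <;> norm_num) ⟨∅, by
      rw [LinearMap.add_apply, LinearMap.sub_apply, LinearMap.sub_apply, LinearMap.sub_apply,
        LinearMap.smul_apply, evE_rcut, evE_rcut, evE_rcut, evE_rcut, dgE_rcut, cutVec_mk,
        cutVec_mk, cutVec_mk, cutVec_mk]
      simp⟩
  rw [LinearMap.sub_apply, LinearMap.add_apply, LinearMap.add_apply, evE_val hf, evE_val hf,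
    evE_val hf, evE_val hf] at h1
  rw [LinearMap.add_apply, LinearMap.sub_apply, LinearMap.sub_apply, LinearMap.sub_apply,
    LinearMap.smul_apply, smul_eq_mul, dgE_val hk, evE_val hf, evE_val hf, evE_val hf,
    evE_val hf] at h2
  have h1' : (hammingDist (f a) (f b) : ℝ) <
    (hammingDist (f b) (f d) + hammingDist (f d) (f e) + hammingDist (f e) (f a) : ℕ) := by
    push_cast; linarith
  have h2' : ((hammingDist (f a) (f b) + hammingDist (f b) (f d) + hammingDist (f d) (f e) : ℕ) : ℝ) <
    (2 * k + hammingDist (f e) (f a) : ℕ) := by push_cast; linarith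
  rw [Nat.cast_lt] at h1' h2'
  rw [Int.even_iff] at *
  omega

end

/-! ### Splitting off an element of degree four -/

lemma drop_coord {n : ℕ} (f : V → Fin (n + 1) → Bool) (i : Fin (n + 1)) (a b : V) :
    (hammingDist (f a) (f b) : ℤ) = (if f a i = f b i then 0 else 1) +
      hammingDist (fun l => f a (i.succAbove l)) (fun l => f b (i.succAbove l)) := by
  rw [ham_eq_sum, ham_eq_sum, Fin.sum_univ_succAbove _ i]

/-- The value `2` on all edges in degree four is an interior element for a chordal `K₅`-minor-free
graph: it is four times the average of all cuts, and it is feasible. -/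
lemma two_four_mem [Finite V] {G : SimpleGraph V} (hch : ChordalG G) (hK : K5Free G) :
    ((fun _ => 2, 4) : (G.edgeSet → ℤ) × ℤ) ∈ cutInterior G := by
  obtain ⟨f, hf⟩ := emb_chordal hch hK (k := 4) (x := fun _ _ => 2)
    ⟨by simp, by simp, by intros; refine ⟨by norm_num, by norm_num, by decide⟩⟩
  refine ⟨mem_of_repr f _ (by simp) fun u w h => (hf u w h).symm, ?_⟩
  have := const_mem_interior G (a := 2) (by norm_num)
  convert this using 1
  refine Prod.ext (funext fun e => ?_) ?_ <;> simp [toRealCut]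
  norm_num

/-- The `1`-vector in degree two plus any two cuts is interior for a bipartite graph: it is the sum of the
bipartition cut and the empty cut, and also twice the average of all cuts. -/
lemma one_add_cuts_mem [Finite V] {G : SimpleGraph V} (hb : BipartiteG G) (A B : Set V)
    (y : G.edgeSet → ℤ) (hy : ∀ e, y e = 1 + cutVec A e.1 + cutVec B e.1) :
    (y, (4 : ℤ)) ∈ cutInterior G := by
  classical
  obtain ⟨S, hS⟩ := hb
  constructor
  · have := (cutMonoid G).add_mem ((cutMonoid G).add_mem ((cutMonoid G).add_mem (cut_mem G S)
      (cut_mem G ∅)) (cut_mem G A)) (cut_mem G B)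
    convert this using 1
    refine Prod.ext (funext ?_) rfl
    rintro ⟨e, he⟩
    change y _ = _
    rw [hy]
    induction e using Sym2.ind with
    | _ u w =>
    simp only [Prod.fst_add, Pi.add_apply]
    have h1 : cutVec S s(u, w) = 1 := by
      rw [cutVec_mk]
      rcases hS he with h | h <;> simp [h.1, h.2]
    have h2 : cutVec (∅ : Set V) s(u, w) = 0 := by
      rw [cutVec_mk]
      simp
    omega
  · have := interior_add (interior_add (const_mem_interior G (a := 1) one_pos)
      (rcut_mem G A zero_le_one)) (rcut_mem G B zero_le_one)
    convert this using 1
    refine Prod.ext (funext fun e => ?_) ?_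
    · simp [toRealCut, rcut, hy]
    · simp [toRealCut, rcut]
      norm_num

/-! ### The decomposition -/

/-- For a `1`-sum (along a common edge `vw`) of a `K₅`-minor-free
bridgeless chordal graph `G₁` and a `K₅`-minor-free bipartite graph `G₂` with no
induced cycle of length `≥ 6`, every element of `int(M_G)` lies in
`(2, (2,…,2), y, 4) + M_G` with `(2, y, 4) ∈ int(M_{G₂})`, and
`(2, (2,…,2), 4) ∈ int(M_{G₁})`. -/
theorem oneSum_interior {V : Type} [Fintype V] (G : SimpleGraph V)
    (V1 V2 : Set V) (v w : V) (hvw : v ≠ w)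
    (hv1 : v ∈ V1) (hv2 : v ∈ V2) (hw1 : w ∈ V1) (hw2 : w ∈ V2)
    (hcover : V1 ∪ V2 = Set.univ) (hinter : V1 ∩ V2 = {v, w})
    (hGvw : G.Adj v w)
    (hedges : ∀ a b, G.Adj a b → ((a ∈ V1 ∧ b ∈ V1) ∨ (a ∈ V2 ∧ b ∈ V2)))
    (hK51 : K5Free (G.induce V1)) (hbl1 : BridgelessG (G.induce V1))
    (hch1 : ChordalG (G.induce V1))
    (hK52 : K5Free (G.induce V2)) (hbip2 : BipartiteG (G.induce V2))
    (hcyc2 : ∀ n, 6 ≤ n → ¬ HasInducedCycleLen (G.induce V2) n) :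
    (((fun _ => 2, 4) : ((G.induce V1).edgeSet → ℤ) × ℤ) ∈ cutInterior (G.induce V1)) ∧
    ∀ p ∈ cutInterior G, ∃ q : (G.edgeSet → ℤ) × ℤ,
      q.2 = 4 ∧
      restrictCut G V1 q.1 = (fun _ => 2) ∧
      (restrictCut G V2 q.1)
        ⟨s((⟨v, hv2⟩ : V2), (⟨w, hw2⟩ : V2)),
          ((G.induce V2).mem_edgeSet).mpr (by exact hGvw)⟩ = 2 ∧
      ((restrictCut G V2 q.1, (4 : ℤ)) ∈ cutInterior (G.induce V2)) ∧
      ∃ m ∈ cutMonoid G, p = q + m := by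
  classical
  refine ⟨two_four_mem hch1 hK51, fun p hp => ?_⟩
  obtain ⟨k, f, hk, hf⟩ := repr_of_mem hp.1
  -- in a triangle through an edge, strictness leaves room for subtracting `2`
  have htri : ∀ a b, (G.induce V1).Adj a b → 2 ≤ (hammingDist (f a) (f b) : ℤ) ∧
      (hammingDist (f a) (f b) : ℤ) + 2 ≤ k := by
    intro a b hab
    obtain ⟨z, haz, hzb⟩ := edge_in_triangle hch1 hbl1 hab
    have h1 := tri_strict hp hk hf (a := a) (b := z) (d := b) haz hzb hab
    have h2 := tri_strict hp hk hf (a := a) (b := b) (d := z) hab hzb.symm haz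
    have h3 := tri_strict hp hk hf (a := z) (b := a) (d := b) haz.symm hab hzb
    rw [hammingDist_comm (f b) (f z)] at h2
    rw [hammingDist_comm (f z) (f a)] at h3
    omega
  have hvw1 : (G.induce V1).Adj ⟨v, hv1⟩ ⟨w, hw1⟩ := hGvw
  have hvwk := htri _ _ hvw1
  obtain ⟨n, rfl⟩ : ∃ n, k = n + 4 := ⟨k - 4, by simp only at hvwk; omega⟩
  obtain ⟨f1, hf1⟩ := emb_chordal hch1 hK51 (k := n)
    (x := fun a b => (hammingDist (f a) (f b) : ℤ) - 2) (by
      refine ⟨fun a b => ?_, fun a b hab => ?_, fun a b d hab hbd had => ?_⟩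
      · rw [hammingDist_comm]
      · have := htri a b hab
        push_cast at this
        omega
      · have := tri_strict hp hk hf (a := a) (b := b) (d := d) hab hbd had
        rw [Int.even_iff] at *
        push_cast at this
        omega)
  obtain ⟨S, hS⟩ := id hbip2
  let c : V2 → Bool := fun a => decide (a ∈ S)
  have hc : CB (G.induce V2) c := by
    refine ⟨fun a b hab => ?_, hcyc2⟩
    rcases hS hab with h | h <;> simp [c, h.1, h.2]
  obtain ⟨d, hd, hdx⟩ := quad_extend hc (K := n + 2)
    (φ := fun a => (∑ i, if f a i then 1 else 0) + if c a then 1 else 0)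
    (x := fun a b => (hammingDist (f a) (f b) : ℤ) - 1) (by
      refine ⟨fun a b => ?_, fun a b hab => ?_, fun a b hab => ?_, fun a b d e hab hbd hde hea had _ => ?_⟩
      · rw [hammingDist_comm]
      · have := edge_strict hp hk hf (u := a) (w := b) hab
        push_cast at this ⊢
        omega
      · have h1 := ham_par (f a) (f b)
        have h2 : (if c a then (1 : ℤ) else 0) + (if c b then 1 else 0) = 1 := by
          have := hc.col a b hab
          revert this
          cases c a <;> cases c b <;> simp
        rw [Int.even_iff] at *
        omega
      · have := quad_strict hp hk hf (a := a) (b := b) (d := d) (e := e) hab hbd hde hea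
          (fun h => had (Subtype.ext h))
        push_cast at this ⊢
        omega)
  obtain ⟨f2, hf2⟩ := emb_bipartite _ V2 (G.induce V2) c rfl hc hK52 (n + 2) d hd
  have hf2' : ∀ a b, (G.induce V2).Adj a b →
      (hammingDist (f2 a) (f2 b) : ℤ) = hammingDist (f a) (f b) - 1 :=
    fun a b hab => (hf2 a b hab).trans (hdx a b hab)
  have hvw2 : (G.induce V2).Adj ⟨v, hv2⟩ ⟨w, hw2⟩ := hGvw
  have hvw2' := hf2' _ _ hvw2
  simp only at hvw2' hvwk
  push_cast at hvwk
  -- removing a coordinate where `v` and `w` differ and one where they agree leaves `x - 2` on `vw`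
  obtain ⟨i, hi⟩ : ∃ i, f2 ⟨v, hv2⟩ i ≠ f2 ⟨w, hw2⟩ i := by
    by_contra h
    push Not at h
    rw [funext h, hammingDist_self] at hvw2'
    push_cast at hvw2'
    omega
  have hdrop := drop_coord f2 i
  obtain ⟨j, hj⟩ : ∃ j, f2 ⟨v, hv2⟩ (i.succAbove j) = f2 ⟨w, hw2⟩ (i.succAbove j) := by
    by_contra h
    push Not at h
    have h1 := hdrop ⟨v, hv2⟩ ⟨w, hw2⟩
    have h2 : hammingDist (fun l => f2 ⟨v, hv2⟩ (i.succAbove l))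
        (fun l => f2 ⟨w, hw2⟩ (i.succAbove l)) = n + 1 := by
      rw [hammingDist, Finset.filter_true_of_mem (fun l _ => h l)]
      simp
    rw [if_neg hi, h2] at h1
    push_cast at h1
    omega
  have hdrop2 := drop_coord (fun a l => f2 a (i.succAbove l)) j
  obtain ⟨g, hg⟩ : ∃ g : V2 → Fin n → Bool,
      g = fun a l => f2 a (i.succAbove (j.succAbove l)) := ⟨_, rfl⟩
  have hgd : ∀ a b, (hammingDist (f2 a) (f2 b) : ℤ) = (if f2 a i = f2 b i then 0 else 1) +
      (if f2 a (i.succAbove j) = f2 b (i.succAbove j) then 0 else 1) +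
      hammingDist (g a) (g b) := by
    intro a b
    rw [hdrop, hdrop2, hg, add_assoc]
  have hgvw := hgd ⟨v, hv2⟩ ⟨w, hw2⟩
  rw [if_neg hi, if_pos hj] at hgvw
  have hf1vw := hf1 _ _ hvw1
  simp only at hf1vw
  have heq : hammingDist (f1 ⟨v, hv1⟩) (f1 ⟨w, hw1⟩) =
      hammingDist (g ⟨v, hv2⟩) (g ⟨w, hw2⟩) := by
    omega
  obtain ⟨σ, hσ, hσv, hσw, -⟩ := cube_isometry (f1 ⟨v, hv1⟩) (f1 ⟨w, hw1⟩) (f1 ⟨w, hw1⟩)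
    (g ⟨v, hv2⟩) (g ⟨w, hw2⟩) (g ⟨w, hw2⟩) heq heq (by simp)
  let h : V → Fin n → Bool := fun u => if h1 : u ∈ V1 then f1 ⟨u, h1⟩ else
    if h2 : u ∈ V2 then σ (g ⟨u, h2⟩) else fun _ => false
  have hh1 : ∀ a : V1, h a = f1 a := fun a => dif_pos a.2
  have hh2 : ∀ a : V2, h a = σ (g a) := by
    intro a
    by_cases h1 : (a : V) ∈ V1
    · have h3 : (a : V) ∈ ({v, w} : Set V) := hinter ▸ ⟨h1, a.2⟩
      rcases h3 with h3 | h3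
      · obtain rfl : a = ⟨v, hv2⟩ := Subtype.ext h3
        rw [hσv]
        exact hh1 ⟨v, hv1⟩
      · obtain rfl : a = ⟨w, hw2⟩ := Subtype.ext h3
        rw [hσw]
        exact hh1 ⟨w, hw1⟩
    · change (if h1 : (a : V) ∈ V1 then f1 ⟨a, h1⟩ else
        if h2 : (a : V) ∈ V2 then σ (g ⟨a, h2⟩) else fun _ => false) = _
      rw [dif_neg h1, dif_pos a.2]
  let hd2 : Sym2 V → ℤ := Sym2.lift ⟨fun a b => (hammingDist (h a) (h b) : ℤ),
    fun a b => by beta_reduce; rw [hammingDist_comm]⟩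
  let m : (G.edgeSet → ℤ) × ℤ := (fun e => hd2 e.1, n)
  have hm : m ∈ cutMonoid G := mem_of_repr h m (by simp [m]) fun _ _ _ => rfl
  have hq2 : ∀ a b : V2, ∀ hab : (G.induce V2).Adj a b,
      restrictCut G V2 (p - m).1 ⟨s(a, b), hab⟩ = 1 + (if f2 a i = f2 b i then 0 else 1) +
      (if f2 a (i.succAbove j) = f2 b (i.succAbove j) then 0 else 1) := by
    intro a b hab
    have e1 : restrictCut G V2 (p - m).1 ⟨s(a, b), hab⟩ =
      p.1 ⟨s((a : V), (b : V)), hab⟩ - hammingDist (h a) (h b) := rfl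
    rw [e1, hf a b hab, hh2, hh2, hσ]
    have e2 := hgd a b
    have e3 := hf2' a b hab
    omega
  refine ⟨p - m, ?_, ?_, ?_, ?_, m, hm, by abel⟩
  · rw [Prod.snd_sub, hk]
    simp [m]
  · funext ⟨e, he⟩
    induction e using Sym2.ind with
    | _ a b =>
    have hab : (G.induce V1).Adj a b := he
    have e1 : restrictCut G V1 (p - m).1 ⟨s(a, b), he⟩ =
      p.1 ⟨s((a : V), (b : V)), hab⟩ - hammingDist (h a) (h b) := rfl
    rw [e1, hf a b hab, hh1, hh1, hf1 a b hab]
    ring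
  · rw [hq2 _ _ hvw2, if_neg hi, if_pos hj]
    norm_num
  · refine one_add_cuts_mem hbip2 {a | f2 a i = true} {a | f2 a (i.succAbove j) = true} _ ?_
    rintro ⟨e, he⟩
    induction e using Sym2.ind with
    | _ a b =>
    rw [hq2 a b he]
    simp only [cutVec_mk, Set.mem_ofPred_eq, Bool.coe_iff_coe]
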